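/- arXiv:2601.16295 — 7 statements merged into one kernel-verified Lean document; each statement's English description precedes it below -/
import Mathlib

section
/- Suppose θ ∈ ℝ satisfies the Diophantine condition DC-m for some m ≥ 1, and set z = e^{iθ}. Then there exists C>0 such that for every n ∈ ℕ with n ≥ 1 there exists q ∈ ℕ with 1 ≤ q ≤ C·n^m and 1/(2n) < |z^q − 1| < 1/n. -/
noncomputable section

/-- The Diophantine condition DC-m: for all integers `p` and all sufficiently large `q`,
`|θ - 2πp/q| ≥ q^{-m}`. -/
def DCond (m θ : ℝ) : Prop :=
  ∃ Q : ℕ, ∀ p : ℤ, ∀ q : ℕ, Q ≤ q → |θ - 2 * Real.pi * p / q| ≥ (q : ℝ) ^ (-m)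

/-!
Write `z = e^{iθ}`. By Dirichlet's theorem some `r ≲ 1/δ` brings the angle `y` of `z^r` below a
small fraction of `δ`, so the multiples of `y` step into a narrow window just below `δ`, and there
chords are comparable to arcs. The Diophantine condition gives `|y| ≳ r^{1-m}`, so at most
`δ r^{m-1}` multiples are needed and the total exponent is at most of order
`δ r^m ≲ δ^{1-m}`. For `δ = 1/n` this is `n^{m-1}`.
-/

open Real Set

theorem two_div_pi_mul_abs_le_norm_exp_I_mul_ofReal_sub_one {x : ℝ} (hx : |x| ≤ π) :
    2 / π * |x| ≤ ‖Complex.exp (Complex.I * x) - 1‖ := by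
  have hhalf : |x / 2| = |x| / 2 := by rw [abs_div, abs_two]
  have hsin : 2 / π * |x / 2| ≤ |sin (x / 2)| := mul_abs_le_abs_sin (by linarith)
  rw [Complex.norm_exp_I_mul_ofReal_sub_one, norm_mul, norm_two, norm_eq_abs]
  rw [hhalf] at hsin
  linarith

theorem exp_ofReal_mul_I_pow_eq_exp_I_mul (θ : ℝ) (q : ℕ) (p : ℤ) :
    Complex.exp (θ * Complex.I) ^ q =
      Complex.exp (Complex.I * ((q * θ - 2 * π * p : ℝ) : ℂ)) := by
  rw [← Complex.exp_nat_mul, Complex.exp_eq_exp_iff_exists_int]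
  refine ⟨p, ?_⟩
  push_cast
  ring

theorem exists_nat_mul_mem_Ico {K : Type*} [Field K] [LinearOrder K] [IsStrictOrderedRing K]
    [FloorSemiring K] {x δ : K} (hx : 0 < x) (hδ : 0 < δ) :
    ∃ k : ℕ, k * x ∈ Ico (δ - x) δ := by
  obtain ⟨k, hk⟩ := Nat.exists_eq_add_one.2 (Nat.ceil_pos.2 (div_pos hδ hx))
  have hlt : (k : K) < δ / x := Nat.lt_ceil.1 (by lia)
  have hle : δ / x ≤ k + 1 := mod_cast Nat.ceil_le.1 hk.le
  rw [lt_div_iff₀ hx] at hlt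
  rw [div_le_iff₀ hx, add_one_mul] at hle
  exact ⟨k, sub_le_iff_le_add.2 hle, hlt⟩

theorem mul_le_div_of_mul_rpow_le {c r k y δ m : ℝ} (hc : 0 < c) (hr : 0 < r) (hk : 0 ≤ k)
    (hy : c * r ^ (1 - m) ≤ y) (hδ : k * y ≤ δ) : k * r ≤ δ * r ^ m / c := by
  have hpow : r = r ^ (1 - m) * r ^ m := by rw [← rpow_add hr, sub_add_cancel, rpow_one]
  rw [le_div_iff₀' hc]
  calc c * (k * r) = k * (c * r ^ (1 - m)) * r ^ m := by
        nth_rw 1 [hpow]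
        ring
    _ ≤ k * y * r ^ m := by gcongr
    _ ≤ δ * r ^ m := by gcongr

theorem abs_mul_sub_two_pi_mul (θ : ℝ) (q : ℕ) (p : ℤ) :
    |q * θ - 2 * π * p| = 2 * π * |q * (θ / (2 * π)) - p| := by
  have hfactor : q * θ - 2 * π * p = 2 * π * (q * (θ / (2 * π)) - p) := by field_simp
  rw [hfactor, abs_mul, abs_of_pos two_pi_pos]

theorem exists_nat_abs_mul_sub_two_pi_mul_lt (θ : ℝ) {ε : ℝ} (hε : 0 < ε)
    (hε' : ε ≤ 2 * π) :
    ∃ r : ℕ, 0 < r ∧ r * ε ≤ 2 * π ∧ ∃ p : ℤ, |r * θ - 2 * π * p| < ε := by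
  have hfloor : 0 < ⌊2 * π / ε⌋₊ := Nat.floor_pos.2 ((one_le_div hε).2 hε')
  obtain ⟨r, hr, hrN, hround⟩ := exists_nat_abs_mul_sub_round_le (θ / (2 * π)) hfloor
  refine ⟨r, hr, ?_, round (r * (θ / (2 * π))), ?_⟩
  · rw [← le_div_iff₀ hε]
    exact (Nat.cast_le.2 hrN).trans (Nat.floor_le (by positivity))
  · calc |r * θ - 2 * π * round (r * (θ / (2 * π)))|
        = 2 * π * |r * (θ / (2 * π)) - round (r * (θ / (2 * π)))| :=
          abs_mul_sub_two_pi_mul ..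
      _ ≤ 2 * π * (1 / (⌊2 * π / ε⌋₊ + 1)) := by gcongr
      _ < ε := by
          rw [mul_one_div, div_lt_comm₀ (by positivity) hε]
          exact Nat.lt_floor_add_one _

namespace DCond

variable {m θ : ℝ}

theorem exists_pos_mul_rpow_le_abs_mul_sub (hθ : DCond m θ) :
    ∃ c : ℝ, 0 < c ∧ ∀ q : ℕ, 0 < q → ∀ p : ℤ, c * (q : ℝ) ^ (1 - m) ≤ |q * θ - 2 * π * p| := by
  obtain ⟨Q, hQ⟩ := hθ
  refine ⟨((Q + 1 : ℕ) : ℝ) ^ (-m), by positivity, fun q hq p => ?_⟩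
  have hq' : (0 : ℝ) < q := mod_cast hq
  -- Scaling `p / q` by `Q + 1` makes the denominator large enough for the condition to apply.
  have hscaled := hQ (p * (Q + 1 : ℕ)) ((Q + 1) * q) (by nlinarith)
  have hfrac : θ - 2 * π * ((p * (Q + 1 : ℕ) : ℤ) : ℝ) / (((Q + 1) * q : ℕ) : ℝ)
      = (q * θ - 2 * π * p) / q := by
    push_cast
    field_simp
  rw [hfrac, abs_div, abs_of_pos hq', ge_iff_le, le_div_iff₀ hq', Nat.cast_mul,
    mul_rpow (by positivity) hq'.le] at hscaled
  rwa [sub_eq_neg_add, rpow_add_one hq'.ne', ← mul_assoc]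

theorem one_le (hθ : DCond m θ) : 1 ≤ m := by
  by_contra! hm
  obtain ⟨c, hc, hlower⟩ := hθ.exists_pos_mul_rpow_le_abs_mul_sub
  have htop : Filter.Tendsto (fun q : ℕ => (q : ℝ) ^ (1 - m)) .atTop .atTop :=
    (tendsto_rpow_atTop (sub_pos.2 hm)).comp tendsto_natCast_atTop_atTop
  obtain ⟨q, hlarge, hq⟩ :=
    ((htop.eventually_gt_atTop (π / c)).and (Filter.eventually_gt_atTop 0)).exists
  have hle : c * (q : ℝ) ^ (1 - m) ≤ π :=
    calc c * (q : ℝ) ^ (1 - m)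
        ≤ |q * θ - 2 * π * round (q * (θ / (2 * π)))| := hlower q hq _
      _ = 2 * π * |q * (θ / (2 * π)) - round (q * (θ / (2 * π)))| := abs_mul_sub_two_pi_mul ..
      _ ≤ 2 * π * (1 / 2) := by gcongr; exact abs_sub_round _
      _ = π := by ring
  exact hle.not_gt ((div_lt_iff₀' hc).1 hlarge)

theorem exists_le_rpow_abs_mul_sub_mem_Ico (hθ : DCond m θ) {η : ℝ} (hη : 0 < η) (hη' : η < 1) :
    ∃ C > 0, ∀ δ, 0 < δ → δ ≤ 2 * π → ∃ q : ℕ, 0 < q ∧ (q : ℝ) ≤ C * δ ^ (1 - m) ∧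
      ∃ p : ℤ, |q * θ - 2 * π * p| ∈ Ico ((1 - η) * δ) δ := by
  obtain ⟨c, hc, hlower⟩ := hθ.exists_pos_mul_rpow_le_abs_mul_sub
  refine ⟨(2 * π / η) ^ m / c, by positivity, fun δ hδ hδ' => ?_⟩
  obtain ⟨r, hr, hrle, p, hsmall⟩ :=
    exists_nat_abs_mul_sub_two_pi_mul_lt θ (mul_pos hη hδ) (by nlinarith)
  have hr' : (0 : ℝ) < r := mod_cast hr
  set y := r * θ - 2 * π * p with hy
  have hylower : c * (r : ℝ) ^ (1 - m) ≤ |y| := hlower r hr p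
  have hypos : 0 < |y| := lt_of_lt_of_le (by positivity) hylower
  obtain ⟨k, hkge, hklt⟩ := exists_nat_mul_mem_Ico hypos hδ
  have hk : 0 < k := by
    have : 0 < k * |y| := by nlinarith
    exact_mod_cast pos_of_mul_pos_left this hypos.le
  refine ⟨k * r, Nat.mul_pos hk hr, ?_, k * p, ?_⟩
  · calc ((k * r : ℕ) : ℝ) = k * r := Nat.cast_mul ..
      _ ≤ δ * (r : ℝ) ^ m / c :=
          mul_le_div_of_mul_rpow_le hc hr' k.cast_nonneg hylower hklt.le
      _ ≤ δ * (2 * π / η / δ) ^ m / c := by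
          have hm : 0 ≤ m := zero_le_one.trans hθ.one_le
          gcongr
          rwa [div_div, le_div_iff₀ (by positivity)]
      _ = (2 * π / η) ^ m / c * δ ^ (1 - m) := by
          rw [div_rpow (by positivity) hδ.le, rpow_sub hδ, rpow_one]
          ring
  · have hmul : ((k * r : ℕ) : ℝ) * θ - 2 * π * ((k * p : ℤ) : ℝ) = k * y := by
      rw [hy]
      push_cast
      ring
    rw [hmul, abs_mul, Nat.abs_cast]
    exact ⟨by linarith, hklt⟩

end DCond

theorem statement11_general {θ m : ℝ} (hθ : DCond m θ) :
    ∃ C > 0, ∀ δ : ℝ, 0 < δ → δ ≤ π → ∃ q : ℕ, 1 ≤ q ∧ (q : ℝ) ≤ C * δ ^ (1 - m) ∧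
      δ / 2 < ‖Complex.exp ((θ : ℂ) * Complex.I) ^ q - 1‖ ∧
      ‖Complex.exp ((θ : ℂ) * Complex.I) ^ q - 1‖ < δ := by
  -- The window `[4δ/5, δ)` works because `2 / π * (4 / 5) > 1 / 2`.
  obtain ⟨C, hC, hwindow⟩ := hθ.exists_le_rpow_abs_mul_sub_mem_Ico
    (η := 1 / 5) (by norm_num) (by norm_num)
  refine ⟨C, hC, fun δ hδ hδ' => ?_⟩
  obtain ⟨q, hq, hqle, p, hge, hlt⟩ := hwindow δ hδ (by linarith [pi_pos])
  refine ⟨q, hq, hqle, ?_⟩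
  rw [exp_ofReal_mul_I_pow_eq_exp_I_mul θ q p]
  constructor
  · calc δ / 2 < 2 / π * ((1 - 1 / 5) * δ) := by
          rw [div_mul_eq_mul_div, lt_div_iff₀ pi_pos]
          nlinarith [pi_lt_d2]
      _ ≤ 2 / π * |q * θ - 2 * π * p| := by gcongr
      _ ≤ _ := two_div_pi_mul_abs_le_norm_exp_I_mul_ofReal_sub_one (hlt.le.trans hδ')
  · exact norm_exp_I_mul_ofReal_sub_one_le.trans_lt hlt

/-- For `θ` satisfying DC-m with `m ≥ 1` and `z = e^{iθ}`, for every
`n ≥ 1` there is `q ≤ C n^m` with `1/(2n) < |z^q - 1| < 1/n`. -/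
theorem statement11 (θ m : ℝ) (hm : 1 ≤ m) (hθ : DCond m θ) :
    ∃ C > 0, ∀ n : ℕ, 1 ≤ n → ∃ q : ℕ, 1 ≤ q ∧ (q : ℝ) ≤ C * (n : ℝ) ^ m ∧
      1 / (2 * (n : ℝ)) < ‖Complex.exp ((θ : ℂ) * Complex.I) ^ q - 1‖ ∧
      ‖Complex.exp ((θ : ℂ) * Complex.I) ^ q - 1‖ < 1 / (n : ℝ) := by
  obtain ⟨C, hC, h⟩ := statement11_general hθ
  refine ⟨C, hC, fun n hn => ?_⟩
  have hn' : (1 : ℝ) ≤ n := mod_cast hn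
  have hpow : (1 / n : ℝ) ^ (1 - m) ≤ (n : ℝ) ^ m := by
    rw [one_div, inv_rpow n.cast_nonneg, ← rpow_neg n.cast_nonneg]
    exact rpow_le_rpow_of_exponent_le hn' (by linarith)
  obtain ⟨q, hq, hqle, hbounds⟩ := h (1 / n) (by positivity)
    (((div_le_one (by positivity)).2 hn').trans (by linarith [pi_gt_three]))
  rw [div_div, mul_comm (n : ℝ) 2] at hbounds
  exact ⟨q, hq, hqle.trans (mul_le_mul_of_nonneg_left hpow hC.le), hbounds⟩
end
end

section
/- Let θ ∈ [0,2π) with cos θ ∈ ℚ∖(1/2)ℤ and set z = e^{iθ}. Then there exist c>0 and m ∈ ℕ such that: (i) for every integer p and every integer q ≥ 1, |θ − 2πp/q| > c·q^{−m}; and (ii) for every integer k ≥ 1, |Re(z^k)| = |cos(kθ)| > c·k^{−m}. -/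
/-!
Write `α = e ^ {iθ}`, a quadratic number of absolute value one, and suppose that
`|θ - 2πp/q| ≤ e ^ {-WS}` although `q ≤ e ^ S`, with a large constant `W`. Baker's method refutes
this. The exponential polynomial `∑ c k l m * P k ζ * e ^ {(2πi/q) (p l + q m) ζ}`, with Feldman
polynomials `P k`, has algebraic derivatives at the integers `x`, but its values involve powers of
`e ^ {2πip/q}` rather than of `α`. The factors `e ^ {i (θ - 2πp/q) l φ(ζ)}` correct this when
`φ x = x`. They do not disturb the derivatives if those of the entire function `φ` vanish to high
order at the integers, and they are harmless because `θ - 2πp/q` is tiny. Siegel's lemma gives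
integers `c`, not all zero, for which the function vanishes to high order at many integers. By the
Schwarz lemma it is small at many more integers, where its values are, up to a denominator, integers
of an imaginary quadratic field, which vanish as soon as they are smaller than one. After several
such steps there are more zeros than the zero estimate for exponential polynomials allows.

Taking `S ≈ log q` gives the polynomial lower bound for `|θ - 2πp/q|`. As `|cos x|` is at least
`2/π` times the distance from `x` to the nearest odd multiple of `π/2`, the bound for `cos (kθ)` is
that for the denominator `4k`.
-/

noncomputable section

namespace AngleApprox

section Polynomials

open Polynomial Finset

/-- The real polynomials with nonnegative coefficients. Their values at a complex point are
controlled by their values at real points. -/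
def nonnegCoeffs : Subsemiring ℝ[X] where
  carrier := {P | ∀ i, 0 ≤ P.coeff i}
  one_mem' i := by rw [coeff_one]; split_ifs <;> norm_num
  zero_mem' _ := by simp
  add_mem' hP hQ i := by rw [coeff_add]; exact add_nonneg (hP i) (hQ i)
  mul_mem' hP hQ i := by rw [coeff_mul]; exact sum_nonneg fun x _ => mul_nonneg (hP _) (hQ _)

lemma C_mem_nonnegCoeffs {a : ℝ} (ha : 0 ≤ a) : C a ∈ nonnegCoeffs := fun i => by
  rw [coeff_C]; split_ifs <;> simp [ha]

lemma X_mem_nonnegCoeffs : X ∈ nonnegCoeffs := fun i => by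
  rw [coeff_X]; split_ifs <;> norm_num

lemma eval_nonneg_of_mem_nonnegCoeffs {P : ℝ[X]} (hP : P ∈ nonnegCoeffs) {x : ℝ} (hx : 0 ≤ x) :
    0 ≤ P.eval x := by
  rw [eval_eq_sum_range]
  exact sum_nonneg fun i _ => mul_nonneg (hP i) (by positivity)

lemma eval_le_eval_of_mem_nonnegCoeffs {P : ℝ[X]} (hP : P ∈ nonnegCoeffs) {x y : ℝ}
    (hx : 0 ≤ x) (hxy : x ≤ y) : P.eval x ≤ P.eval y := by
  rw [eval_eq_sum_range, eval_eq_sum_range]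
  gcongr with i
  exact hP i

lemma norm_aeval_le_eval_norm {P : ℝ[X]} (hP : P ∈ nonnegCoeffs) (ζ : ℂ) :
    ‖aeval ζ P‖ ≤ P.eval ‖ζ‖ := by
  rw [aeval_eq_sum_range, eval_eq_sum_range]
  refine (norm_sum_le _ _).trans_eq (sum_congr rfl fun i _ => ?_)
  rw [norm_smul, norm_pow, Real.norm_of_nonneg (hP i)]

lemma iterate_derivative_mem_nonnegCoeffs {P : ℝ[X]} (hP : P ∈ nonnegCoeffs) (n : ℕ) :
    derivative^[n] P ∈ nonnegCoeffs := fun i => by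
  rw [coeff_iterate_derivative]
  exact nsmul_nonneg (hP _) _

lemma coeff_taylor_nonneg {P : ℝ[X]} (hP : P ∈ nonnegCoeffs) {x : ℝ} (hx : 0 ≤ x) (n : ℕ) :
    0 ≤ (taylor x P).coeff n := by
  have hderiv := eval_nonneg_of_mem_nonnegCoeffs (iterate_derivative_mem_nonnegCoeffs hP n) hx
  rw [← factorial_smul_hasseDeriv, LinearMap.smul_apply, eval_smul, ← taylor_coeff,
    nsmul_eq_mul] at hderiv
  exact nonneg_of_mul_nonneg_right hderiv (by positivity)

/-- `P (x + n)` is the sum of the nonnegative Taylor terms `P⁽ᵏ⁾ x * n ^ k / k!`, and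
`n! ≤ n ^ n`. -/
lemma eval_iterate_derivative_le {P : ℝ[X]} (hP : P ∈ nonnegCoeffs) (n : ℕ) {x : ℝ}
    (hx : 0 ≤ x) : (derivative^[n] P).eval x ≤ P.eval (x + n) := by
  have hcoeff := coeff_taylor_nonneg hP hx
  have hfact : (n.factorial : ℝ) ≤ (n : ℝ) ^ n := by exact_mod_cast n.factorial_le_pow
  calc (derivative^[n] P).eval x = n.factorial * (taylor x P).coeff n := by
        rw [← factorial_smul_hasseDeriv, LinearMap.smul_apply, eval_smul, ← taylor_coeff,
          nsmul_eq_mul]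
    _ ≤ (taylor x P).coeff n * (n : ℝ) ^ n := by
        rw [mul_comm]; exact mul_le_mul_of_nonneg_left hfact (hcoeff n)
    _ ≤ (taylor x P).eval (n : ℝ) := by
        by_cases hn : n ≤ (taylor x P).natDegree
        · rw [eval_eq_sum_range]
          exact single_le_sum (f := fun k => (taylor x P).coeff k * (n : ℝ) ^ k)
            (fun k _ => mul_nonneg (hcoeff k) (by positivity))
            (mem_range.mpr (Nat.lt_succ_of_le hn))
        · rw [coeff_eq_zero_of_natDegree_lt (not_le.mp hn), zero_mul, taylor_eval]
          exact eval_nonneg_of_mem_nonnegCoeffs hP (by positivity)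
    _ = P.eval (x + n) := by rw [taylor_eval, add_comm]

/-- The real polynomials `P` for which `d ^ τ * P⁽τ⁾ x` is an integer for all natural numbers
`τ` and `x`. -/
def integralDerivs (d : ℕ) : Subring ℝ[X] where
  carrier := {P | ∀ τ x : ℕ,
    (d : ℝ) ^ τ * (derivative^[τ] P).eval (x : ℝ) ∈ (Int.castRingHom ℝ).range}
  one_mem' τ x := by
    rcases τ.eq_zero_or_pos with rfl | hτ
    · simp
    · simp [iterate_derivative_one hτ]
  zero_mem' τ x := by simp
  add_mem' hP hQ τ x := by
    rw [iterate_map_add, eval_add, mul_add]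
    exact add_mem (hP τ x) (hQ τ x)
  neg_mem' hP τ x := by
    rw [iterate_map_neg, eval_neg, mul_neg]
    exact neg_mem (hP τ x)
  mul_mem' {P Q} hP hQ τ x := by
    have hterm : ∀ k ∈ range τ.succ, (d : ℝ) ^ τ *
        (τ.choose k • (derivative^[τ - k] P * derivative^[k] Q)).eval (x : ℝ) =
        τ.choose k • ((d ^ (τ - k) * (derivative^[τ - k] P).eval (x : ℝ)) *
          (d ^ k * (derivative^[k] Q).eval (x : ℝ))) := fun k hk => by
      rw [eval_smul, eval_mul, ← Nat.sub_add_cancel (mem_range_succ_iff.mp hk), pow_add,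
        Nat.add_sub_cancel, nsmul_eq_mul, nsmul_eq_mul]
      ring
    rw [iterate_derivative_mul, eval_finsetSum, mul_sum, sum_congr rfl hterm]
    exact sum_mem fun k _ => nsmul_mem (mul_mem (hP _ _) (hQ _ _)) _

/-- The polynomial `binom (X + a, a)`. -/
def binomialPoly (a : ℕ) : ℝ[X] := preHilbertPoly ℝ a 0

lemma binomialPoly_zero : binomialPoly 0 = 1 := by simp [binomialPoly, preHilbertPoly]

lemma C_mul_binomialPoly_succ (a : ℕ) :
    C ((a : ℝ) + 1) * binomialPoly (a + 1) = (X + C ((a : ℝ) + 1)) * binomialPoly a := by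
  have hfact : ((a : ℝ) + 1) * ((a + 1).factorial : ℝ)⁻¹ = (a.factorial : ℝ)⁻¹ := by
    rw [Nat.factorial_succ]; push_cast; field_simp
  simp only [binomialPoly, preHilbertPoly, ascPochhammer_succ_right, mul_comp, add_comp, X_comp,
    natCast_comp, smul_eq_C_mul, Nat.cast_zero, ← mul_assoc, ← C_mul, hfact]
  simp only [C_0, C_add, C_1, map_natCast]
  ring

lemma binomialPoly_succ (a : ℕ) :
    binomialPoly (a + 1) = C (1 / ((a : ℝ) + 1)) * ((X + C ((a : ℝ) + 1)) * binomialPoly a) := by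
  rw [← C_mul_binomialPoly_succ, ← mul_assoc, ← C_mul, one_div_mul_cancel (by positivity), C_1,
    one_mul]

lemma degree_binomialPoly (a : ℕ) : (binomialPoly a).degree = a := by
  induction a with
  | zero => rw [binomialPoly_zero, degree_one]; rfl
  | succ a ih =>
    rw [binomialPoly_succ, degree_C_mul (by positivity), degree_mul, degree_X_add_C, ih]
    push_cast; ring

lemma eval_binomialPoly_natCast (a x : ℕ) :
    (binomialPoly a).eval (x : ℝ) = ((x + a).choose a : ℕ) := by
  simpa [binomialPoly] using preHilbertPoly_eq_choose_sub_add ℝ a (Nat.zero_le x)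

lemma binomialPoly_mem_nonnegCoeffs (a : ℕ) : binomialPoly a ∈ nonnegCoeffs := by
  induction a with
  | zero => rw [binomialPoly_zero]; exact one_mem _
  | succ a ih =>
    rw [binomialPoly_succ]
    exact mul_mem (C_mem_nonnegCoeffs (by positivity))
      (mul_mem (add_mem X_mem_nonnegCoeffs (C_mem_nonnegCoeffs (by positivity))) ih)

/-- The step `i ↦ i + 1` of the recursion, seen from `a ≠ i`. -/
lemma X_add_C_mul_binomialPoly {a : ℝ} {i : ℕ} (hai : a - i ≠ 0) :
    (X + C (a + 1)) * (C (1 / (a - i)) * binomialPoly i) =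
      C (((i : ℝ) + 1) / (a - i)) * binomialPoly (i + 1) + binomialPoly i := by
  have hcancel : C (a - i) * C (1 / (a - i)) = 1 := by
    rw [← C_mul, mul_one_div_cancel hai, C_1]
  have hrec := C_mul_binomialPoly_succ i
  rw [div_eq_mul_one_div ((i : ℝ) + 1), C_mul]
  simp only [C_add, C_sub] at hcancel hrec ⊢
  linear_combination binomialPoly i * hcancel - C (1 / (a - i)) * hrec

lemma derivative_binomialPoly (a : ℕ) :
    derivative (binomialPoly a) = ∑ i ∈ range a, C (1 / ((a : ℝ) - i)) * binomialPoly i := by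
  induction a with
  | zero => simp [binomialPoly_zero]
  | succ a ih =>
    have hne : C ((a : ℝ) + 1) ≠ 0 := by rw [Ne, C_eq_zero]; positivity
    have hshift : ∀ i ∈ range a, (X + C ((a : ℝ) + 1)) * (C (1 / ((a : ℝ) - i)) * binomialPoly i) =
        C (((i : ℝ) + 1) / (a - i)) * binomialPoly (i + 1) + binomialPoly i := fun i hi =>
      X_add_C_mul_binomialPoly (sub_ne_zero.mpr (by exact_mod_cast (mem_range.mp hi).ne'))
    have hsplit : ∀ i ∈ range (a + 1),
        C ((a : ℝ) + 1) * (C (1 / (((a + 1 : ℕ) : ℝ) - i)) * binomialPoly i) =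
          binomialPoly i + C ((i : ℝ) / (a + 1 - i)) * binomialPoly i := fun i hi => by
      have hi' : (a : ℝ) + 1 - i ≠ 0 :=
        sub_ne_zero.mpr (by exact_mod_cast (mem_range.mp hi).ne')
      rw [← mul_assoc, ← C_mul, ← one_add_mul, ← C_1, ← C_add, Nat.cast_succ]
      congr 2
      field_simp
      ring
    apply mul_left_cancel₀ hne
    rw [← derivative_C_mul, C_mul_binomialPoly_succ, derivative_mul, ih, mul_sum,
      sum_congr rfl hshift, mul_sum, sum_congr rfl hsplit, sum_add_distrib, sum_add_distrib,
      sum_range_succ' (fun i : ℕ => C ((i : ℝ) / (a + 1 - i)) * binomialPoly i),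
      sum_range_succ (fun i => binomialPoly i)]
    simp only [derivative_add, derivative_X, derivative_C, Nat.cast_succ, Nat.cast_zero, zero_div,
      C_0, add_sub_add_right_eq_sub]
    ring

lemma binomialPoly_mem_integralDerivs {d h : ℕ} (hd : ∀ m, 1 ≤ m → m ≤ h → m ∣ d) {a : ℕ}
    (ha : a ≤ h) : binomialPoly a ∈ integralDerivs d := fun τ => by
  induction τ generalizing a with
  | zero => exact fun x => ⟨((x + a).choose a : ℕ), by simp [eval_binomialPoly_natCast]⟩
  | succ τ ih =>
    intro x
    rw [Function.iterate_succ_apply, derivative_binomialPoly, iterate_derivative_sum,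
      eval_finsetSum, mul_sum]
    refine sum_mem fun i hi => ?_
    have hia : i < a := mem_range.mp hi
    obtain ⟨e, he⟩ := hd (a - i) (by omega) (by omega)
    have hcast : (d : ℝ) = ((a : ℝ) - i) * e := by rw [he]; push_cast [Nat.cast_sub hia.le]; ring
    have hne : (a : ℝ) - i ≠ 0 := sub_ne_zero.mpr (by exact_mod_cast hia.ne')
    have hterm : (d : ℝ) ^ (τ + 1) *
        (derivative^[τ] (C (1 / ((a : ℝ) - i)) * binomialPoly i)).eval (x : ℝ) =
        e • ((d : ℝ) ^ τ * (derivative^[τ] (binomialPoly i)).eval (x : ℝ)) := by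
      rw [iterate_derivative_C_mul, eval_mul, eval_C, pow_succ, nsmul_eq_mul]
      nth_rewrite 2 [hcast]
      field_simp
    rw [hterm]
    exact nsmul_mem (ih (by omega) x) e

/-- Feldman's polynomials: a basis of `ℝ[X]` adapted to `deg feldmanPoly h k = k`, whose
derivatives at integers have denominators controlled by `h` alone. -/
def feldmanPoly (h k : ℕ) : ℝ[X] := binomialPoly (k % h) * binomialPoly h ^ (k / h)

lemma degree_feldmanPoly (h k : ℕ) : (feldmanPoly h k).degree = k := by
  rw [feldmanPoly, degree_mul, degree_pow, degree_binomialPoly, degree_binomialPoly, nsmul_eq_mul]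
  exact_mod_cast Nat.mod_add_div' k h

lemma feldmanPoly_mem_nonnegCoeffs (h k : ℕ) : feldmanPoly h k ∈ nonnegCoeffs :=
  mul_mem (binomialPoly_mem_nonnegCoeffs _) (pow_mem (binomialPoly_mem_nonnegCoeffs _) _)

lemma feldmanPoly_mem_integralDerivs {d h : ℕ} (hh : 0 < h) (hd : ∀ m, 1 ≤ m → m ≤ h → m ∣ d)
    (k : ℕ) : feldmanPoly h k ∈ integralDerivs d :=
  mul_mem (binomialPoly_mem_integralDerivs hd (Nat.mod_lt _ hh).le)
    (pow_mem (binomialPoly_mem_integralDerivs hd le_rfl) _)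

lemma eval_feldmanPoly_natCast_le {h M k : ℕ} (hk : k < h * M) (Y : ℕ) :
    (feldmanPoly h k).eval (Y : ℝ) ≤ (((Y + h).choose h : ℕ) : ℝ) ^ M := by
  have hh : 0 < h := Nat.pos_of_mul_pos_right (Nat.zero_lt_of_lt hk)
  have hchoose : (Y + k % h).choose (k % h) ≤ (Y + h).choose h := by
    rw [← Nat.choose_symm_add, ← Nat.choose_symm_add]
    exact Nat.choose_le_choose _ (by have := Nat.mod_lt k hh; omega)
  have hpow : (Y + k % h).choose (k % h) * (Y + h).choose h ^ (k / h) ≤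
      (Y + h).choose h ^ M := by
    calc (Y + k % h).choose (k % h) * (Y + h).choose h ^ (k / h)
        ≤ (Y + h).choose h * (Y + h).choose h ^ (k / h) := Nat.mul_le_mul_right _ hchoose
      _ = (Y + h).choose h ^ (k / h + 1) := by ring
      _ ≤ (Y + h).choose h ^ M :=
        Nat.pow_le_pow_right (Nat.choose_pos (by omega)) (Nat.div_lt_of_lt_mul hk)
  rw [feldmanPoly, eval_mul, eval_pow, eval_binomialPoly_natCast, eval_binomialPoly_natCast]
  exact_mod_cast hpow

lemma choose_mul_add_le (A h : ℕ) :
    (((A * h + h).choose h : ℕ) : ℝ) ≤ (Real.exp 1 * (A + 1)) ^ h := by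
  calc (((A * h + h).choose h : ℕ) : ℝ) ≤ ((A * h + h : ℕ) : ℝ) ^ h / h.factorial :=
        Nat.choose_le_pow_div h (A * h + h)
    _ = (A + 1) ^ h * ((h : ℝ) ^ h / h.factorial) := by
        rw [show ((A * h + h : ℕ) : ℝ) = (A + 1) * h by push_cast; ring, mul_pow, mul_div_assoc]
    _ ≤ (A + 1) ^ h * Real.exp h := by
        gcongr; exact Real.pow_div_factorial_le_exp _ (by positivity) h
    _ = (Real.exp 1 * (A + 1)) ^ h := by rw [mul_pow, ← Real.exp_nat_mul, mul_one, mul_comm]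

lemma eval_feldmanPoly_le_exp {h M k A g : ℕ} (hk : k < h * M)
    (hg : Real.exp 1 * (A + 1) ≤ Real.exp g) {x : ℝ} (hx : 0 ≤ x) (hxA : x ≤ A * h) :
    (feldmanPoly h k).eval x ≤ Real.exp (g * h * M) := by
  calc (feldmanPoly h k).eval x ≤ (feldmanPoly h k).eval ((A * h : ℕ) : ℝ) :=
        eval_le_eval_of_mem_nonnegCoeffs (feldmanPoly_mem_nonnegCoeffs h k) hx
          (by exact_mod_cast hxA)
    _ ≤ (((A * h + h).choose h : ℕ) : ℝ) ^ M := eval_feldmanPoly_natCast_le hk _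
    _ ≤ ((Real.exp 1 * (A + 1)) ^ h) ^ M := by gcongr; exact choose_mul_add_le A h
    _ ≤ (Real.exp g ^ h) ^ M := by gcongr
    _ = Real.exp (g * h * M) := by
        rw [← pow_mul, ← Real.exp_nat_mul]; congr 1; push_cast; ring

lemma linearIndependent_map_feldmanPoly (K : Type*) [Field K] [Algebra ℝ K] (h : ℕ) :
    LinearIndependent K fun k => (feldmanPoly h k).map (algebraMap ℝ K) :=
  Polynomial.Sequence.linearIndependent
    ⟨_, fun k => (degree_map _ (algebraMap ℝ K)).trans (degree_feldmanPoly h k)⟩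

lemma lcmUpto_le_exp (n : ℕ) : ((Nat.lcmUpto n : ℕ) : ℝ) ≤ Real.exp (6 * n) := by
  have hlog : Real.log 4 + 4 ≤ 6 := by
    rw [show (4 : ℝ) = 2 ^ 2 by norm_num, Real.log_pow]
    have := Real.log_two_lt_d9
    push_cast; linarith
  rw [← Real.log_le_iff_le_exp (by exact_mod_cast Nat.lcmUpto_pos n),
    ← Chebyshev.psi_eq_log_lcmUpto n]
  exact (Chebyshev.psi_le_const_mul_self n.cast_nonneg).trans (by gcongr)

lemma dvd_lcmUpto {m n : ℕ} (hm : 1 ≤ m) (hmn : m ≤ n) : m ∣ Nat.lcmUpto n :=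
  Finset.dvd_lcm (f := id) (mem_Icc.mpr ⟨hm, hmn⟩)

section ZeroEstimate

variable {R : Type*} [CommRing R]

/-- The operator `Q ↦ α Q(X + 1) - β Q`: it acts on the coefficient of `αˣ` when the exponential
polynomial `∑ αˣ Q_α(x)` is replaced by its `β`-twisted difference `f (x + 1) - β f x`. -/
def twistedDiff (α β : R) (Q : R[X]) : R[X] := α • taylor 1 Q - β • Q

lemma eval_twistedDiff (α β : R) (Q : R[X]) (x : R) :
    (twistedDiff α β Q).eval x = α * Q.eval (x + 1) - β * Q.eval x := by
  simp [twistedDiff, taylor_eval]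

lemma sum_pow_mul_eval_twistedDiff {ι : Type*} (s : Finset ι) (α : ι → R) (β : R) (Q : ι → R[X])
    (x : ℕ) : ∑ i ∈ s, α i ^ x * (twistedDiff (α i) β (Q i)).eval (x : R) =
      ∑ i ∈ s, α i ^ (x + 1) * (Q i).eval ((x + 1 : ℕ) : R) -
        β * ∑ i ∈ s, α i ^ x * (Q i).eval (x : R) := by
  rw [mul_sum, ← sum_sub_distrib]
  refine sum_congr rfl fun i _ => ?_
  rw [eval_twistedDiff]
  push_cast
  ring

lemma degree_twistedDiff_lt (α β : R) {Q : R[X]} {K : ℕ} (hQ : Q.degree < K) :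
    (twistedDiff α β Q).degree < K := by
  rw [← mem_degreeLT] at hQ ⊢
  refine sub_mem (Submodule.smul_mem _ α ?_) (Submodule.smul_mem _ β hQ)
  rwa [mem_degreeLT, degree_taylor, ← mem_degreeLT]

lemma degree_twistedDiff_self_lt (α : R) {Q : R[X]} {K : ℕ} (hQ : Q.degree < (K + 1 : ℕ)) :
    (twistedDiff α α Q).degree < K := by
  rw [twistedDiff, ← smul_sub, ← mem_degreeLT]
  refine Submodule.smul_mem _ α (mem_degreeLT.mpr ?_)
  rcases eq_or_ne Q 0 with rfl | hne
  · simp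
  · calc (taylor 1 Q - Q).degree < (taylor 1 Q).degree :=
          degree_sub_lt_left (degree_taylor _ _) (mt (taylor_eq_zero _ _).mp hne)
            (leadingCoeff_taylor _ _)
      _ ≤ K := by rw [degree_taylor]; exact Order.le_of_lt_succ hQ

variable [IsDomain R]

lemma eq_zero_of_twistedDiff_eq_zero {α β : R} (hαβ : α ≠ β) {Q : R[X]}
    (hQ : twistedDiff α β Q = 0) : Q = 0 := by
  have hlead := congrArg leadingCoeff (sub_eq_zero.mp hQ)
  simp only [smul_eq_C_mul, leadingCoeff_mul, leadingCoeff_C, leadingCoeff_taylor] at hlead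
  by_contra hne
  exact hαβ (mul_right_cancel₀ (leadingCoeff_ne_zero.mpr hne) hlead)

variable [CharZero R]

lemma eq_zero_of_forall_eval_natCast_eq_zero {Q : R[X]} {N : ℕ} (hdeg : Q.degree < N)
    (heval : ∀ x : ℕ, x < N → Q.eval (x : R) = 0) : Q = 0 :=
  eq_zero_of_degree_lt_of_eval_index_eq_zero (v := Nat.cast) (range N)
    Nat.cast_injective.injOn (by rwa [card_range]) fun x hx => heval x (mem_range.mp hx)

/-- An exponential polynomial `∑ αᵢˣ Qᵢ(x)` with `∑ (deg Qᵢ + 1)` consecutive zeros vanishes: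
each twisted difference lowers the degree of one `Qᵢ` and costs one zero. -/
theorem eq_zero_of_forall_sum_pow_mul_eval_eq_zero {ι : Type*} {s : Finset ι} {α : ι → R}
    (hα : ∀ i ∈ s, α i ≠ 0) (hinj : Set.InjOn α s) (K : ι → ℕ) (Q : ι → R[X])
    (hdeg : ∀ i ∈ s, (Q i).degree < K i)
    (hsum : ∀ x < ∑ i ∈ s, K i, ∑ i ∈ s, α i ^ x * (Q i).eval (x : R) = 0) :
    ∀ i ∈ s, Q i = 0 := by
  classical
  induction hN : ∑ i ∈ s, K i generalizing K Q with
  | zero =>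
    intro i hi
    simpa [sum_eq_zero_iff.mp hN i hi] using hdeg i hi
  | succ N ih =>
    rw [hN] at hsum
    obtain ⟨j, hj, hKj⟩ : ∃ j ∈ s, K j ≠ 0 := by
      by_contra! hK
      simp [sum_eq_zero hK] at hN
    obtain ⟨k, hk⟩ := Nat.exists_eq_succ_of_ne_zero hKj
    have hNk : ∑ i ∈ s, Function.update K j k i = N := by
      have hrest := sum_erase_add s K hj
      rw [sum_update_of_mem hj, sdiff_singleton_eq_erase]
      omega
    have hdiff : ∀ i ∈ s, twistedDiff (α i) (α j) (Q i) = 0 := by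
      refine ih (Function.update K j k) _ (fun i hi => ?_) (fun x hx => ?_) hNk
      · rcases eq_or_ne i j with rfl | hij
        · rw [Function.update_self]
          exact degree_twistedDiff_self_lt _ ((hdeg i hi).trans_eq (by rw [hk]))
        · rw [Function.update_of_ne hij]
          exact degree_twistedDiff_lt _ _ (hdeg i hi)
      · rw [sum_pow_mul_eval_twistedDiff, hsum x (by omega), hsum (x + 1) (by omega), mul_zero,
          sub_zero]
    have hother : ∀ i ∈ s, i ≠ j → Q i = 0 := fun i hi hij =>
      eq_zero_of_twistedDiff_eq_zero (fun h => hij (hinj hi hj h)) (hdiff i hi)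
    have hQj : Q j = 0 := by
      have hKN : K j ≤ N + 1 := hN ▸ single_le_sum (fun _ _ => Nat.zero_le _) hj
      refine eq_zero_of_forall_eval_natCast_eq_zero
        ((hdeg j hj).trans_le (by exact_mod_cast hKN)) fun x hx => ?_
      have hx₀ := hsum x hx
      rw [sum_eq_single_of_mem j hj fun i hi hij => by rw [hother i hi hij, eval_zero, mul_zero]]
        at hx₀
      exact (mul_eq_zero.mp hx₀).resolve_left (pow_ne_zero _ (hα j hj))
    intro i hi
    rcases eq_or_ne i j with rfl | hij
    exacts [hQj, hother i hi hij]

end ZeroEstimate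

end Polynomials

section BakerMethod

open Polynomial Finset Complex
open scoped ComplexConjugate

section EntireFunctions

variable {F : ℂ → ℂ}

lemma le_analyticOrderAt_of_le_deriv (hF : Differentiable ℂ F) {j : ℂ} (hj : F j = 0) {r : ℕ}
    (hr : (r : ℕ∞) ≤ analyticOrderAt (deriv F) j) : ((r + 1 : ℕ) : ℕ∞) ≤ analyticOrderAt F j := by
  have hderiv := (hF.analyticAt j).analyticOrderAt_deriv_add_one
  simp only [hj, sub_zero] at hderiv
  rw [← hderiv]
  push_cast
  gcongr

lemma exists_eq_sub_pow_mul (hF : Differentiable ℂ F) {r : ℕ} {j : ℂ}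
    (hr : (r : ℕ∞) ≤ analyticOrderAt F j) :
    ∃ G : ℂ → ℂ, Differentiable ℂ G ∧ ∀ ζ, F ζ = (ζ - j) ^ r * G ζ := by
  obtain ⟨g, hg, hFg⟩ := (natCast_le_analyticOrderAt (hF.analyticAt j)).mp hr
  set G : ℂ → ℂ := Function.update (fun ζ => F ζ / (ζ - j) ^ r) j (g j) with hG
  have hmul : ∀ ζ, ζ ≠ j → F ζ = (ζ - j) ^ r * G ζ := fun ζ hζ => by
    rw [hG, Function.update_of_ne hζ, mul_div_cancel₀ _ (pow_ne_zero r (sub_ne_zero.mpr hζ))]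
  have hGg : G =ᶠ[nhds j] g := by
    filter_upwards [hFg] with ζ hζ
    rcases eq_or_ne ζ j with rfl | hne
    · exact Function.update_self ..
    · exact mul_left_cancel₀ (pow_ne_zero r (sub_ne_zero.mpr hne))
        ((hmul ζ hne).symm.trans hζ)
  refine ⟨G, fun ζ => ?_, fun ζ => ?_⟩
  · rcases eq_or_ne ζ j with rfl | hne
    · exact hg.differentiableAt.congr_of_eventuallyEq hGg
    · refine ((hF ζ).div (by fun_prop) (pow_ne_zero r (sub_ne_zero.mpr hne))
        : DifferentiableAt ℂ (fun ζ => F ζ / (ζ - j) ^ r) ζ).congr_of_eventuallyEq ?_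
      filter_upwards [eventually_ne_nhds hne] with w hw using Function.update_of_ne hw ..
  · rcases eq_or_ne ζ j with rfl | hne
    · rw [hGg.eq_of_nhds]
      exact hFg.self_of_nhds
    · exact hmul ζ hne

lemma exists_eq_prod_sub_pow_mul (hF : Differentiable ℂ F) {r : ℕ} {s : Finset ℂ}
    (hr : ∀ j ∈ s, (r : ℕ∞) ≤ analyticOrderAt F j) :
    ∃ G : ℂ → ℂ, Differentiable ℂ G ∧ ∀ ζ, F ζ = (∏ j ∈ s, (ζ - j) ^ r) * G ζ := by
  induction s using Finset.induction_on with
  | empty => exact ⟨F, hF, by simp⟩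
  | insert a s ha ih =>
    obtain ⟨G, hG, hFG⟩ := ih fun j hj => hr j (mem_insert_of_mem hj)
    have hprod : AnalyticAt ℂ (fun ζ : ℂ => ∏ j ∈ s, (ζ - j) ^ r) a :=
      Differentiable.analyticAt (by fun_prop) a
    have hprod_order : analyticOrderAt (fun ζ : ℂ => ∏ j ∈ s, (ζ - j) ^ r) a = 0 :=
      hprod.analyticOrderAt_eq_zero.mpr <| prod_ne_zero_iff.mpr fun j hj =>
        pow_ne_zero r (sub_ne_zero.mpr (ne_of_mem_of_not_mem hj ha).symm)
    have horder : analyticOrderAt F a = analyticOrderAt G a := by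
      rw [show F = (fun ζ : ℂ => ∏ j ∈ s, (ζ - j) ^ r) * G from funext hFG,
        analyticOrderAt_mul hprod (hG.analyticAt a), hprod_order, zero_add]
    obtain ⟨H, hH, hGH⟩ := exists_eq_sub_pow_mul hG (horder ▸ hr a (mem_insert_self a s))
    refine ⟨H, hH, fun ζ => ?_⟩
    rw [hFG, hGH, prod_insert ha]
    ring

/-- The maximum principle for `F` divided by its zeros in `s`. -/
theorem norm_le_mul_div_pow_of_le_analyticOrderAt (hF : Differentiable ℂ F) {r : ℕ} {s : Finset ℂ}
    (hr : ∀ j ∈ s, (r : ℕ∞) ≤ analyticOrderAt F j) {R d D V : ℝ} {w : ℂ} (hw : ‖w‖ < R)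
    (hD : 0 < D) (hd : ∀ j ∈ s, ‖w - j‖ ≤ d) (hsphere : ∀ ζ, ‖ζ‖ = R → ∀ j ∈ s, D ≤ ‖ζ - j‖)
    (hV : ∀ ζ, ‖ζ‖ = R → ‖F ζ‖ ≤ V) : ‖F w‖ ≤ V * (d / D) ^ (r * #s) := by
  obtain ⟨G, hG, hFG⟩ := exists_eq_prod_sub_pow_mul hF hr
  have hR : 0 < R := (norm_nonneg w).trans_lt hw
  have hGw : ‖G w‖ ≤ V / D ^ (r * #s) := by
    refine Complex.norm_le_of_forall_mem_frontier_norm_le (U := Metric.ball (0 : ℂ) R)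
      Metric.isBounded_ball hG.diffContOnCl (fun ζ hζ => ?_)
      (subset_closure (mem_ball_zero_iff.mpr hw))
    rw [frontier_ball (0 : ℂ) hR.ne', mem_sphere_zero_iff_norm] at hζ
    rw [le_div_iff₀' (by positivity)]
    refine le_trans ?_ (hV ζ hζ)
    rw [hFG, norm_mul, norm_prod, pow_mul, ← prod_const]
    gcongr with j hj
    rw [norm_pow]
    gcongr
    exact hsphere ζ hζ j hj
  have hprod : ‖∏ j ∈ s, (w - j) ^ r‖ ≤ d ^ (r * #s) := by
    rw [norm_prod, pow_mul, ← prod_const]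
    gcongr with j hj
    rw [norm_pow]
    gcongr
    exact hd j hj
  calc ‖F w‖ ≤ d ^ (r * #s) * (V / D ^ (r * #s)) := by
        rw [hFG, norm_mul]
        exact mul_le_mul hprod hGw (norm_nonneg _) ((norm_nonneg _).trans hprod)
    _ = V * (d / D) ^ (r * #s) := by rw [div_pow]; ring

lemma norm_natCast_le_of_le_analyticOrderAt (hF : Differentiable ℂ F) {r X Y x : ℕ} {ρ V : ℝ}
    (hr : ∀ j < X, (r : ℕ∞) ≤ analyticOrderAt F j) (hXY : X ≤ Y) (hx : x < Y) (hρ : 0 < ρ)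
    (hV : ∀ ζ, ‖ζ‖ = (ρ + 1) * Y → ‖F ζ‖ ≤ V) : ‖F x‖ ≤ V * ρ⁻¹ ^ (r * X) := by
  have hxY : (x : ℝ) < Y := by exact_mod_cast hx
  have hY : (0 : ℝ) < Y := x.cast_nonneg.trans_lt hxY
  have hjY : ∀ j < X, (j : ℝ) ≤ Y := fun j hj => by exact_mod_cast (hj.trans_le hXY).le
  have hschwarz := norm_le_mul_div_pow_of_le_analyticOrderAt (s := (range X).map Nat.castEmbedding)
    (w := (x : ℂ)) (r := r) (d := Y) (D := ρ * Y) (R := (ρ + 1) * Y) hF ?_ ?_ (by positivity)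
    ?_ ?_ hV
  · rwa [card_map, card_range, div_mul_cancel_right₀ hY.ne'] at hschwarz
  · simpa only [forall_mem_map, mem_range, Nat.castEmbedding_apply] using hr
  · rw [Complex.norm_natCast]
    nlinarith
  · simp only [forall_mem_map, mem_range, Nat.castEmbedding_apply]
    intro j hj
    rw [← ofReal_natCast, ← ofReal_natCast, ← ofReal_sub, norm_real]
    exact abs_sub_le_of_nonneg_of_le x.cast_nonneg hxY.le j.cast_nonneg (hjY j hj)
  · simp only [forall_mem_map, mem_range, Nat.castEmbedding_apply]
    intro ζ hζ j hj
    have htri := norm_sub_norm_le ζ (j : ℂ)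
    rw [hζ, Complex.norm_natCast] at htri
    linarith [hjY j hj]

end EntireFunctions

/-- The entire function obtained from `ζ - log (e ^ (2πiζ)) / (2πi)` by truncating the power
series of `log (1 + y)`, `y = e ^ (2πiζ) - 1`, after `n` terms. It fixes the integers, where its
derivative has zeros of order `n`. -/
def flatId (n : ℕ) (ζ : ℂ) : ℂ :=
  ζ - (2 * Real.pi * I)⁻¹ *
    ∑ m ∈ range n, (-1) ^ m * (exp (2 * Real.pi * I * ζ) - 1) ^ (m + 1) / (m + 1)

lemma exp_two_pi_mul_I_mul_natCast (x : ℕ) : exp (2 * Real.pi * I * x) = 1 :=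
  exp_eq_one_iff.mpr ⟨x, by push_cast; ring⟩

lemma flatId_natCast (n x : ℕ) : flatId n x = x := by
  simp [flatId, exp_two_pi_mul_I_mul_natCast]

lemma hasDerivAt_flatId (n : ℕ) (ζ : ℂ) :
    HasDerivAt (flatId n) ((1 - exp (2 * Real.pi * I * ζ)) ^ n) ζ := by
  set e := exp (2 * Real.pi * I * ζ) with he
  have hy : HasDerivAt (fun ζ : ℂ => exp (2 * Real.pi * I * ζ) - 1) (e * (2 * Real.pi * I)) ζ := by
    simpa using (((hasDerivAt_id ζ).const_mul (2 * Real.pi * I)).cexp).sub_const 1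
  have hterm : ∀ m ∈ range n, HasDerivAt
      (fun ζ : ℂ => (-1) ^ m * (exp (2 * Real.pi * I * ζ) - 1) ^ (m + 1) / ((m : ℂ) + 1))
      ((1 - e) ^ m * (e * (2 * Real.pi * I))) ζ := fun m _ => by
    refine (((hy.pow (m + 1)).const_mul ((-1 : ℂ) ^ m)).div_const _).congr_deriv ?_
    have hm : (m : ℂ) + 1 ≠ 0 := Nat.cast_add_one_ne_zero m
    rw [show 1 - e = -1 * (e - 1) by ring, mul_pow, Nat.add_sub_cancel, ← he]
    push_cast
    field_simp
  refine ((hasDerivAt_id ζ).sub ((HasDerivAt.fun_sum hterm).const_mul _)).congr_deriv ?_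
  have hgeom := mul_neg_geom_sum (1 - e) n
  rw [← sum_mul]
  field_simp [two_pi_I_ne_zero]
  linear_combination (-1 : ℂ) * hgeom

lemma norm_exp_two_pi_I_mul_sub_one_le {ζ : ℂ} {R : ℝ} (hζ : ‖ζ‖ ≤ R) :
    ‖exp (2 * Real.pi * I * ζ) - 1‖ ≤ Real.exp (7 * R + 1) := by
  have hR : 0 ≤ R := (norm_nonneg _).trans hζ
  have hnorm : ‖2 * Real.pi * I * ζ‖ ≤ 7 * R := by
    have hpi := Real.pi_lt_d2
    simp only [norm_mul, norm_I, norm_real, Real.norm_of_nonneg Real.pi_pos.le, norm_ofNat, mul_one]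
    gcongr
    linarith
  have hone : 1 ≤ Real.exp (7 * R) := Real.one_le_exp (by positivity)
  calc ‖exp (2 * Real.pi * I * ζ) - 1‖ ≤ ‖exp (2 * Real.pi * I * ζ)‖ + ‖(1 : ℂ)‖ := norm_sub_le _ _
    _ ≤ Real.exp (7 * R) + 1 := by
        rw [norm_one]
        gcongr
        exact (norm_exp_le_exp_norm _).trans (Real.exp_le_exp.mpr hnorm)
    _ ≤ Real.exp (7 * R) * 2 := by linarith
    _ ≤ Real.exp (7 * R + 1) := by
        rw [Real.exp_add]
        gcongr
        linarith [Real.add_one_le_exp 1]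

lemma norm_flatId_le (n : ℕ) {ζ : ℂ} {R : ℝ} (hζ : ‖ζ‖ ≤ R) :
    ‖flatId n ζ‖ ≤ Real.exp ((7 * n + 1) * (R + 1)) := by
  have hR : 0 ≤ R := (norm_nonneg _).trans hζ
  have hinv : ‖(2 * Real.pi * I : ℂ)⁻¹‖ ≤ 1 := by
    rw [norm_inv]
    refine inv_le_one_of_one_le₀ ?_
    simp only [norm_mul, norm_I, norm_real, Real.norm_of_nonneg Real.pi_pos.le, norm_ofNat, mul_one]
    linarith [Real.pi_gt_three]
  set E := Real.exp (7 * R + 1)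
  have hE : 1 ≤ E := Real.one_le_exp (by positivity)
  have hterm : ∀ m ∈ range n,
      ‖(-1) ^ m * (exp (2 * Real.pi * I * ζ) - 1) ^ (m + 1) / ((m : ℂ) + 1)‖ ≤ E ^ n :=
    fun m hm => by
    have hm1 : 1 ≤ ‖(m : ℂ) + 1‖ := by
      rw [← Nat.cast_succ, norm_natCast]; exact_mod_cast Nat.succ_pos m
    rw [norm_div, norm_mul, norm_pow, norm_pow, norm_neg, norm_one, one_pow, one_mul]
    calc _ ≤ ‖exp (2 * Real.pi * I * ζ) - 1‖ ^ (m + 1) := div_le_self (by positivity) hm1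
      _ ≤ E ^ (m + 1) := by gcongr; exact norm_exp_two_pi_I_mul_sub_one_le hζ
      _ ≤ E ^ n := pow_le_pow_right₀ hE (mem_range.mp hm)
  calc ‖flatId n ζ‖ ≤ R + 1 * (n * E ^ n) := by
        refine (norm_sub_le _ _).trans ?_
        rw [norm_mul]
        gcongr
        exact (norm_sum_le_of_le _ hterm).trans_eq (by simp)
    _ ≤ (R + n) * E ^ n := by
        rw [one_mul, add_mul]; gcongr; exact le_mul_of_one_le_right hR (one_le_pow₀ hE)
    _ ≤ Real.exp (R + n) * E ^ n := by gcongr; linarith [Real.add_one_le_exp (R + n)]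
    _ ≤ Real.exp ((7 * n + 1) * (R + 1)) := by
        rw [← Real.exp_nat_mul, ← Real.exp_add]
        gcongr
        linarith [n.cast_nonneg (α := ℝ)]

section ExpPoly

variable {ι : Type*} [Fintype ι] (c : ι → ℂ) (P : ι → ℝ[X]) (u ν : ι → ℂ) (η : ℂ) (n : ℕ)

/-- The exponential polynomial `∑ cᵢ Pᵢ⁽σ⁾(ζ) uᵢ ^ τ exp (η uᵢ ζ + νᵢ flatId n ζ)`. The indices
`σ` and `τ` count derivatives of the `Pᵢ` and of `exp (η uᵢ ζ)`; differentiation of `flatId n` is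
invisible at the integers up to order `n`. -/
def expPoly (σ τ : ℕ) (ζ : ℂ) : ℂ :=
  ∑ i, c i * aeval ζ (derivative^[σ] (P i)) * u i ^ τ * exp (η * u i * ζ + ν i * flatId n ζ)

lemma hasDerivAt_expPoly (σ τ : ℕ) (ζ : ℂ) :
    HasDerivAt (expPoly c P u ν η n σ τ)
      (expPoly c P u ν η n (σ + 1) τ ζ + η * expPoly c P u ν η n σ (τ + 1) ζ +
        (1 - exp (2 * Real.pi * I * ζ)) ^ n * expPoly (c * ν) P u ν η n σ τ ζ) ζ := by
  have hsum := HasDerivAt.fun_sum (u := univ) fun i _ =>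
    ((((derivative^[σ] (P i)).hasDerivAt_aeval ζ).const_mul (c i)).mul_const (u i ^ τ)).mul
      (((hasDerivAt_id ζ).const_mul (η * u i)).add ((hasDerivAt_flatId n ζ).const_mul (ν i))).cexp
  refine hsum.congr_deriv ?_
  simp only [expPoly, mul_sum, ← sum_add_distrib]
  refine sum_congr rfl fun i _ => ?_
  simp only [Function.iterate_succ_apply', Pi.add_apply, Pi.mul_apply, id]
  ring

lemma differentiable_expPoly (σ τ : ℕ) : Differentiable ℂ (expPoly c P u ν η n σ τ) :=
  fun ζ => (hasDerivAt_expPoly c P u ν η n σ τ ζ).differentiableAt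

lemma le_analyticOrderAt_flat_mul {G : ℂ → ℂ} (hG : Differentiable ℂ G) (x : ℕ) :
    (n : ℕ∞) ≤
      analyticOrderAt ((fun ζ : ℂ => 1 - exp (2 * Real.pi * I * ζ)) ^ n * G) (x : ℂ) := by
  have hbase : AnalyticAt ℂ (fun ζ : ℂ => 1 - exp (2 * Real.pi * I * ζ)) x :=
    Differentiable.analyticAt (by fun_prop) _
  have hzero : 1 ≤ analyticOrderAt (fun ζ : ℂ => 1 - exp (2 * Real.pi * I * ζ)) (x : ℂ) := by
    rw [Order.one_le_iff_ne_zero, ne_eq, hbase.analyticOrderAt_eq_zero]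
    simp [exp_two_pi_mul_I_mul_natCast]
  rw [analyticOrderAt_mul (hbase.pow n) (hG.analyticAt _), analyticOrderAt_pow hbase]
  exact le_add_right (le_trans (by simp) (nsmul_le_nsmul_right hzero n))

lemma le_analyticOrderAt_expPoly {T x : ℕ}
    (hzero : ∀ σ < T, ∀ τ < T, expPoly c P u ν η n σ τ x = 0) {r : ℕ} (hr : r ≤ n + 1) {σ τ : ℕ}
    (hσ : σ + r ≤ T) (hτ : τ + r ≤ T) :
    (r : ℕ∞) ≤ analyticOrderAt (expPoly c P u ν η n σ τ) (x : ℂ) := by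
  induction r generalizing σ τ with
  | zero => simp
  | succ r ih =>
    refine le_analyticOrderAt_of_le_deriv (differentiable_expPoly c P u ν η n σ τ)
      (hzero _ (by omega) _ (by omega)) ?_
    have hderiv : deriv (expPoly c P u ν η n σ τ) =
        expPoly c P u ν η n (σ + 1) τ + (fun _ => η) * expPoly c P u ν η n σ (τ + 1) +
          (fun ζ => 1 - exp (2 * Real.pi * I * ζ)) ^ n * expPoly (c * ν) P u ν η n σ τ :=
      funext fun ζ => (hasDerivAt_expPoly c P u ν η n σ τ ζ).deriv
    have hτ_succ : (r : ℕ∞) ≤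
        analyticOrderAt ((fun _ => η) * expPoly c P u ν η n σ (τ + 1)) (x : ℂ) := by
      rw [analyticOrderAt_mul analyticAt_const
        ((differentiable_expPoly c P u ν η n σ (τ + 1)).analyticAt _)]
      exact le_add_left (ih (by omega) (by omega) (by omega))
    have hflat := (Nat.cast_le.mpr (by omega : r ≤ n)).trans
      (le_analyticOrderAt_flat_mul n (differentiable_expPoly (c * ν) P u ν η n σ τ) x)
    rw [hderiv]
    exact (le_min ((le_min (ih (by omega) (by omega) (by omega)) hτ_succ).trans
      le_analyticOrderAt_add) hflat).trans le_analyticOrderAt_add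

end ExpPoly

section QuadraticInteger

variable {β : ℂ} {t N : ℤ}

lemma sq_eq_of_trace_norm (ht : β + conj β = t) (hN : β * conj β = N) : β ^ 2 = t * β - N := by
  linear_combination β * ht - hN

lemma exists_pow_eq_add_mul (hβ : β ^ 2 = t * β - N) (n : ℕ) :
    ∃ X Y : ℤ, β ^ n = X + Y * β ∧ |X| ≤ (|t| + |N| + 1) ^ n ∧ |Y| ≤ (|t| + |N| + 1) ^ n := by
  induction n with
  | zero => exact ⟨1, 0, by simp, by simp, by simp⟩
  | succ n ih =>
    obtain ⟨X, Y, hXY, hX, hY⟩ := ih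
    have htY : |t| * |Y| ≤ |t| * (|t| + |N| + 1) ^ n := by gcongr
    have hNY : |N| * |Y| ≤ |N| * (|t| + |N| + 1) ^ n := by gcongr
    have htB : 0 ≤ |t| * (|t| + |N| + 1) ^ n := by positivity
    have hNB : 0 ≤ |N| * (|t| + |N| + 1) ^ n := by positivity
    have hsucc : (|t| + |N| + 1) ^ (n + 1) = |t| * (|t| + |N| + 1) ^ n +
        |N| * (|t| + |N| + 1) ^ n + (|t| + |N| + 1) ^ n := by ring
    refine ⟨-(N * Y), X + t * Y, ?_, ?_, ?_⟩
    · rw [pow_succ, hXY]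
      push_cast
      linear_combination (Y : ℂ) * hβ
    · rw [abs_neg, abs_mul, hsucc]
      linarith [abs_nonneg X]
    · rw [hsucc]
      refine (abs_add_le _ _).trans ?_
      rw [abs_mul]
      linarith

lemma normSq_intCast_add_mul (ht : β + conj β = t) (hN : β * conj β = N) (X Y : ℤ) :
    normSq (X + Y * β) = ((X ^ 2 + t * X * Y + N * Y ^ 2 : ℤ) : ℝ) := by
  apply ofReal_injective
  rw [normSq_eq_conj_mul_self]
  simp only [map_add, map_mul, map_intCast]
  push_cast
  linear_combination (X * Y : ℂ) * ht + (Y : ℂ) ^ 2 * hN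

lemma eq_zero_of_norm_intCast_add_mul_lt_one (ht : β + conj β = t) (hN : β * conj β = N)
    {X Y : ℤ} (hlt : ‖(X + Y * β : ℂ)‖ < 1) : (X + Y * β : ℂ) = 0 := by
  have hsq := normSq_intCast_add_mul ht hN X Y
  have hsq_lt : normSq (X + Y * β) < 1 := by
    rw [normSq_eq_norm_sq]
    exact pow_lt_one₀ (norm_nonneg _) hlt two_ne_zero
  have hsq_nonneg := normSq_nonneg (X + Y * β)
  rw [hsq] at hsq_lt hsq_nonneg
  have hform : X ^ 2 + t * X * Y + N * Y ^ 2 = 0 :=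
    le_antisymm (Int.lt_add_one_iff.mp (by exact_mod_cast hsq_lt)) (by exact_mod_cast hsq_nonneg)
  rwa [hform, Int.cast_zero, normSq_eq_zero] at hsq

end QuadraticInteger

section UnitCircle

variable {z : ℂ} {b : ℕ} {t : ℤ}

lemma natCast_mul_add_conj (ht : b * (z + conj z) = t) : (b * z : ℂ) + conj (b * z) = t := by
  rw [← ht, map_mul, map_natCast]
  ring

lemma natCast_mul_mul_conj (hz : ‖z‖ = 1) :
    (b * z : ℂ) * conj (b * z) = ((b ^ 2 : ℤ) : ℂ) := by
  rw [mul_conj, normSq_eq_norm_sq, norm_mul, hz, norm_natCast]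
  push_cast
  ring

lemma exists_pow_mul_pow_eq_add_mul (hz : ‖z‖ = 1) (ht : b * (z + conj z) = t) {n m : ℕ}
    (hnm : n ≤ m) : ∃ X Y : ℤ, (b : ℂ) ^ m * z ^ n = X + Y * (b * z) ∧
      |X| ≤ (|t| + b ^ 2 + 1) ^ m ∧ |Y| ≤ (|t| + b ^ 2 + 1) ^ m := by
  obtain ⟨X, Y, hXY, hX, hY⟩ := exists_pow_eq_add_mul
    (sq_eq_of_trace_norm (natCast_mul_add_conj ht) (natCast_mul_mul_conj hz)) n
  rw [abs_of_nonneg (by positivity : (0 : ℤ) ≤ b ^ 2)] at hX hY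
  have hb : (b : ℤ) ≤ |t| + b ^ 2 + 1 := by nlinarith [abs_nonneg t]
  have hscale : ∀ W : ℤ, |W| ≤ (|t| + b ^ 2 + 1) ^ n →
      |b ^ (m - n) * W| ≤ (|t| + b ^ 2 + 1) ^ m := fun W hW => by
    rw [abs_mul, abs_of_nonneg (by positivity), ← pow_sub_mul_pow _ hnm]
    gcongr
  refine ⟨b ^ (m - n) * X, b ^ (m - n) * Y, ?_, hscale X hX, hscale Y hY⟩
  rw [← pow_sub_mul_pow (b : ℂ) hnm, mul_assoc, ← mul_pow, hXY]
  push_cast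
  ring

end UnitCircle

section Siegel

attribute [local instance] Matrix.seminormedAddCommGroup

/-- Siegel's lemma with twice as many unknowns as equations, where the exponent is `1`. -/
lemma exists_ne_zero_int_vec_of_card_eq_two_mul {ι κ : Type*} [Fintype ι] [Fintype κ] [Nonempty κ]
    (hcard : Fintype.card ι = 2 * Fintype.card κ) (A : Matrix κ ι ℤ) {B : ℝ} (hB : 1 ≤ B)
    (hA : ∀ k i, |(A k i : ℝ)| ≤ B) :
    ∃ c : ι → ℤ, c ≠ 0 ∧ A.mulVec c = 0 ∧ ∀ i, |(c i : ℝ)| ≤ Fintype.card ι * B := by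
  classical
  have hκ : 0 < Fintype.card κ := Fintype.card_pos
  obtain ⟨c, hc, hAc, hnorm⟩ :=
    Int.Matrix.exists_ne_zero_int_vec_norm_le A (by omega) (by omega)
  have hexp : (Fintype.card κ : ℝ) / ((Fintype.card ι : ℝ) - Fintype.card κ) = 1 := by
    rw [hcard, Nat.cast_mul, Nat.cast_two, two_mul, add_sub_cancel_right, div_self (by positivity)]
  have hAB : ‖A‖ ≤ B := (Matrix.norm_le_iff (zero_le_one.trans hB)).mpr hA
  rw [hexp, Real.rpow_one] at hnorm
  refine ⟨c, hc, hAc, fun i => ?_⟩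
  calc |(c i : ℝ)| ≤ ‖c‖ := norm_le_pi_norm c i
    _ ≤ Fintype.card ι * max 1 ‖A‖ := hnorm
    _ ≤ Fintype.card ι * B := by gcongr; exact max_le hB hAB

end Siegel

lemma aeval_natCast_eq_ofReal_eval (P : ℝ[X]) (x : ℕ) :
    aeval (x : ℂ) P = (P.eval (x : ℝ) : ℝ) := by
  rw [← ofReal_natCast]
  exact aeval_algebraMap_apply_eq_algebraMap_eval (x : ℝ) P

section AuxiliaryFunction

variable (θ : ℝ) (p : ℤ) (q h n : ℕ) {K L : ℕ}

/-- The numerators `p l + q m` of the frequencies of the auxiliary function, whose denominator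
is `q`. -/
def freq (i : Fin L × Fin L) : ℤ := p * i.1 + q * i.2

/-- Baker's auxiliary function `∑ c_{klm} P_k(ζ) e ^ {(2πi/q) (p l + q m) ζ}` for the logarithms
`iθ` and `2πi`, with Feldman polynomials `P_k` in place of powers of `ζ`, and with the factor
`e ^ {i (θ - 2πp/q) l flatId(ζ)}` which makes its values at integers `x` those of
`∑ c_{klm} P_k(x) e ^ {iθ l x}`. -/
def auxFun (c : Fin K × Fin L × Fin L → ℤ) : ℕ → ℕ → ℂ → ℂ :=
  expPoly (fun i => (c i : ℂ)) (fun i => feldmanPoly h i.1) (fun i => (freq p q i.2 : ℂ))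
    (fun i => ((θ - 2 * Real.pi * p / q : ℝ) : ℂ) * I * i.2.1) (2 * Real.pi * I / q) n

variable {p q}

lemma injective_freq (hq : 0 < q) (l : Fin L) :
    Function.Injective fun m : Fin L => (freq p q (l, m) : ℂ) := fun m m' hm => by
  have hmul : (q : ℤ) * m = q * m' := add_left_cancel (Int.cast_injective hm)
  exact Fin.ext (by exact_mod_cast mul_left_cancel₀ (by positivity) hmul)

lemma abs_freq_le (hp : |p| ≤ 2 * q) (i : Fin L × Fin L) : |(freq p q i : ℝ)| ≤ 4 * q * L := by
  have hpR : |(p : ℝ)| ≤ 2 * q := by exact_mod_cast hp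
  calc |(freq p q i : ℝ)| ≤ |(p : ℝ)| * (i.1 : ℕ) + q * (i.2 : ℕ) := by
        simp only [freq, Int.cast_add, Int.cast_mul, Int.cast_natCast]
        refine (abs_add_le _ _).trans_eq ?_
        rw [abs_mul, abs_mul, Nat.abs_cast, Nat.abs_cast, Nat.abs_cast]
    _ ≤ 2 * q * L + q * L := by
        gcongr
        exacts [i.1.is_lt.le, i.2.is_lt.le]
    _ ≤ 4 * q * L := by nlinarith [mul_nonneg q.cast_nonneg L.cast_nonneg (α := ℝ)]

lemma auxFun_natCast (hq : 0 < q) (c : Fin K × Fin L × Fin L → ℤ) (σ τ x : ℕ) :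
    auxFun θ p q h n c σ τ x =
      ∑ i, (c i : ℂ) * ((derivative^[σ] (feldmanPoly h i.1)).eval (x : ℝ) : ℝ) *
        (freq p q i.2 : ℂ) ^ τ * exp (θ * I) ^ (i.2.1 * x : ℕ) := by
  refine sum_congr rfl fun i _ => ?_
  rw [aeval_natCast_eq_ofReal_eval, flatId_natCast, ← exp_nat_mul]
  congr 1
  rw [exp_eq_exp_iff_exists_int]
  refine ⟨i.2.2 * x, ?_⟩
  have hq0 : (q : ℂ) ≠ 0 := by exact_mod_cast hq.ne'
  simp only [freq]
  push_cast
  field_simp [hq0]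
  ring

end AuxiliaryFunction

lemma exists_int_coords_of_mem_integralDerivs {z : ℂ} {b d : ℕ} {t : ℤ} (hz : ‖z‖ = 1)
    (ht : b * (z + conj z) = t) {P : ℝ[X]} (hP : P ∈ nonnegCoeffs) (hPd : P ∈ integralDerivs d)
    (σ x : ℕ) {k m : ℕ} (hkm : k ≤ m) :
    ∃ a : Fin 2 → ℤ, (d : ℂ) ^ σ * b ^ m * (((derivative^[σ] P).eval (x : ℝ) : ℝ) * z ^ k) =
        a 0 + a 1 * (b * z) ∧
      ∀ j, |(a j : ℝ)| ≤ d ^ σ * P.eval (x + σ : ℝ) * (|t| + b ^ 2 + 1 : ℤ) ^ m := by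
  obtain ⟨N, hN⟩ := hPd σ x
  rw [eq_intCast] at hN
  obtain ⟨X, Y, hXY, hX, hY⟩ := exists_pow_mul_pow_eq_add_mul hz ht hkm
  have hNC : (N : ℂ) = d ^ σ * ((derivative^[σ] P).eval (x : ℝ) : ℝ) := by
    rw [← ofReal_intCast, hN]
    push_cast
    rfl
  have hN_le : |(N : ℝ)| ≤ d ^ σ * P.eval (x + σ : ℝ) := by
    rw [hN, abs_of_nonneg (mul_nonneg (by positivity) (eval_nonneg_of_mem_nonnegCoeffs
      (iterate_derivative_mem_nonnegCoeffs hP σ) x.cast_nonneg))]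
    gcongr
    exact eval_iterate_derivative_le hP σ x.cast_nonneg
  refine ⟨![N * X, N * Y], ?_, fun j => ?_⟩
  · simp only [Matrix.cons_val_zero, Matrix.cons_val_one, Int.cast_mul, hNC]
    linear_combination (d : ℂ) ^ σ * ((derivative^[σ] P).eval (x : ℝ) : ℝ) * hXY
  · have hbound : ∀ W : ℤ, |W| ≤ (|t| + b ^ 2 + 1) ^ m → |((N * W : ℤ) : ℝ)| ≤
        d ^ σ * P.eval (x + σ : ℝ) * (|t| + b ^ 2 + 1 : ℤ) ^ m := fun W hW => by
      rw [Int.cast_mul, abs_mul]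
      gcongr
      · exact (abs_nonneg _).trans hN_le
      · exact_mod_cast hW
    fin_cases j
    · exact hbound X hX
    · exact hbound Y hY

section AuxiliaryValues

variable {θ : ℝ} {p : ℤ} {q h b K L : ℕ} {t : ℤ}

lemma exists_int_coords_auxFun (hq : 0 < q) (hp : |p| ≤ 2 * q) (hh : 0 < h)
    (ht : b * (exp (θ * I) + conj (exp (θ * I))) = t) (n σ τ x : ℕ) :
    ∃ a : Fin 2 → Fin K × Fin L × Fin L → ℤ,
      (∀ c, (Nat.lcmUpto h : ℂ) ^ σ * b ^ (L * x) * auxFun θ p q h n c σ τ x =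
        (a 0 ⬝ᵥ c : ℤ) + (a 1 ⬝ᵥ c : ℤ) * (b * exp (θ * I))) ∧
      ∀ j i, |(a j i : ℝ)| ≤ Nat.lcmUpto h ^ σ * (feldmanPoly h i.1).eval (x + σ : ℝ) *
        (|t| + b ^ 2 + 1 : ℤ) ^ (L * x) * (4 * q * L) ^ τ := by
  have hterm := fun i : Fin K × Fin L × Fin L => exists_int_coords_of_mem_integralDerivs
    (norm_exp_ofReal_mul_I θ) ht (feldmanPoly_mem_nonnegCoeffs h i.1)
    (feldmanPoly_mem_integralDerivs hh (fun _ => dvd_lcmUpto) i.1) σ x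
    (Nat.mul_le_mul_right x i.2.1.is_lt.le)
  choose a ha ha_le using hterm
  refine ⟨fun j i => a i j * freq p q i.2 ^ τ, fun c => ?_, fun j i => ?_⟩
  · simp only [dotProduct, Int.cast_sum, Int.cast_mul, Int.cast_pow, sum_mul, ← sum_add_distrib]
    rw [auxFun_natCast θ h n hq, mul_sum]
    refine sum_congr rfl fun i _ => ?_
    linear_combination (c i : ℂ) * (freq p q i.2 : ℂ) ^ τ * ha i
  · rw [Int.cast_mul, Int.cast_pow, abs_mul, abs_pow]
    gcongr
    · exact (abs_nonneg _).trans (ha_le i j)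
    · exact ha_le i j
    · exact abs_freq_le hp i.2

lemma norm_frequency_mul_le (hq : 0 < q) (hp : |p| ≤ 2 * q) (i : Fin L × Fin L) {ζ : ℂ} {R : ℝ}
    (hζ : ‖ζ‖ ≤ R) : ‖2 * Real.pi * I / q * freq p q i * ζ‖ ≤ 26 * L * R := by
  have hR : 0 ≤ R := (norm_nonneg _).trans hζ
  have hq0 : (0 : ℝ) < q := by exact_mod_cast hq
  simp only [norm_mul, norm_div, norm_I, norm_real, norm_natCast, norm_intCast, norm_ofNat,
    Real.norm_of_nonneg Real.pi_pos.le, mul_one]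
  calc 2 * Real.pi / q * |(freq p q i : ℝ)| * ‖ζ‖ ≤ 2 * Real.pi / q * (4 * q * L) * R := by
        gcongr
        exact abs_freq_le hp i
    _ = 8 * Real.pi * (L * R) := by field_simp; ring
    _ ≤ 26 * (L * R) := by gcongr; linarith [Real.pi_lt_d2]
    _ = 26 * L * R := by ring

lemma norm_auxFun_le (hq : 0 < q) (hp : |p| ≤ 2 * q) {c : Fin K × Fin L × Fin L → ℤ} {n : ℕ}
    {σ τ : ℕ} {ζ : ℂ} {R H V E : ℝ} (hζ : ‖ζ‖ ≤ R) (hH : ∀ i, |(c i : ℝ)| ≤ H)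
    (hV : ∀ k < K, (feldmanPoly h k).eval (R + σ) ≤ V)
    (hE : |θ - 2 * Real.pi * p / q| * L * ‖flatId n ζ‖ ≤ E) :
    ‖auxFun θ p q h n c σ τ ζ‖ ≤
      (K * (L * L) : ℕ) * (H * V * (4 * q * L) ^ τ * Real.exp (26 * L * R + E)) := by
  have hR : 0 ≤ R := (norm_nonneg _).trans hζ
  have hcard : K * (L * L) = #(univ : Finset (Fin K × Fin L × Fin L)) := by simp
  rw [hcard, ← nsmul_eq_mul]
  refine (norm_sum_le _ _).trans (sum_le_card_nsmul _ _ _ fun i _ => ?_)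
  have hfeldman : ‖aeval ζ (derivative^[σ] (feldmanPoly h i.1))‖ ≤ V := by
    have hmem := feldmanPoly_mem_nonnegCoeffs h i.1
    have hmem_deriv := iterate_derivative_mem_nonnegCoeffs hmem σ
    exact (norm_aeval_le_eval_norm hmem_deriv ζ).trans <|
      (eval_le_eval_of_mem_nonnegCoeffs hmem_deriv (norm_nonneg _) hζ).trans <|
      (eval_iterate_derivative_le hmem σ hR).trans (hV _ i.1.is_lt)
  have hexp : ‖exp (2 * Real.pi * I / q * freq p q i.2 * ζ +
      (θ - 2 * Real.pi * p / q : ℝ) * I * i.2.1 * flatId n ζ)‖ ≤ Real.exp (26 * L * R + E) := by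
    refine (norm_exp_le_exp_norm _).trans (Real.exp_le_exp.mpr ((norm_add_le _ _).trans
      (add_le_add (norm_frequency_mul_le hq hp i.2 hζ) (le_trans ?_ hE))))
    rw [norm_mul, norm_mul, norm_mul, norm_I, norm_real, norm_natCast, Real.norm_eq_abs, mul_one]
    gcongr
    exact i.2.1.is_lt.le
  rw [norm_mul, norm_mul, norm_mul, norm_pow, norm_intCast, norm_intCast]
  have hH0 : 0 ≤ H := (abs_nonneg _).trans (hH i)
  have hV0 : 0 ≤ V := (norm_nonneg _).trans hfeldman
  gcongr
  · exact hH i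
  · exact abs_freq_le hp i.2

/-- The coefficient of `e ^ {iθ l x}` in the values `auxFun θ p q h n c 0 τ x`, as a polynomial
in `x`. -/
def coeffPoly (p : ℤ) (q h : ℕ) (c : Fin K × Fin L × Fin L → ℤ) (τ : ℕ) (l : Fin L) : ℂ[X] :=
  ∑ m, (∑ k, (c (k, l, m) : ℂ) • (feldmanPoly h k).map (algebraMap ℝ ℂ)) *
    C (freq p q (l, m) : ℂ) ^ τ

lemma degree_coeffPoly_lt (c : Fin K × Fin L × Fin L → ℤ) (τ : ℕ) (l : Fin L) :
    (coeffPoly p q h c τ l).degree < K := by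
  rw [← mem_degreeLT]
  refine Submodule.sum_mem _ fun m _ => ?_
  rw [← C_pow, mul_comm, ← smul_eq_C_mul]
  refine Submodule.smul_mem _ _ (Submodule.sum_mem _ fun k _ => Submodule.smul_mem _ _ ?_)
  rw [mem_degreeLT, degree_map, degree_feldmanPoly]
  exact_mod_cast k.is_lt

lemma auxFun_natCast_eq_sum_coeffPoly (hq : 0 < q) (n : ℕ) (c : Fin K × Fin L × Fin L → ℤ)
    (τ x : ℕ) : auxFun θ p q h n c 0 τ x =
      ∑ l : Fin L, (exp (θ * I) ^ (l : ℕ)) ^ x * (coeffPoly p q h c τ l).eval (x : ℂ) := by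
  rw [auxFun_natCast θ h n hq, Fintype.sum_prod_type, sum_comm, Fintype.sum_prod_type]
  refine sum_congr rfl fun l _ => ?_
  simp only [coeffPoly, eval_finsetSum, eval_mul, eval_smul, eval_pow, eval_C, mul_sum, sum_mul,
    eval_map_algebraMap, aeval_natCast_eq_ofReal_eval, Function.iterate_zero, id, pow_mul,
    smul_eq_mul]
  exact sum_congr rfl fun m _ => sum_congr rfl fun k _ => by ring

lemma eq_zero_of_forall_auxFun_natCast_eq_zero (hq : 0 < q)
    (hinj : Function.Injective fun j : ℕ => exp (θ * I) ^ j) {n : ℕ}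
    {c : Fin K × Fin L × Fin L → ℤ}
    (hzero : ∀ x < L * K, ∀ τ < L, auxFun θ p q h n c 0 τ x = 0) : c = 0 := by
  have hcoeff : ∀ τ < L, ∀ l : Fin L, coeffPoly p q h c τ l = 0 := fun τ hτ l =>
    eq_zero_of_forall_sum_pow_mul_eval_eq_zero (s := univ)
      (α := fun l : Fin L => exp (θ * I) ^ (l : ℕ)) (fun _ _ => pow_ne_zero _ (exp_ne_zero _))
      (hinj.comp Fin.val_injective).injOn (fun _ => K) (coeffPoly p q h c τ)
      (fun l _ => degree_coeffPoly_lt c τ l)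
      (fun x hx => by
        rw [← auxFun_natCast_eq_sum_coeffPoly hq n]
        exact hzero x (by simpa using hx) τ hτ) l (mem_univ l)
  ext ⟨k, l, m⟩
  have hfeldman := congrFun (Matrix.eq_zero_of_forall_pow_sum_mul_pow_eq_zero
    (f := fun m => C (freq p q (l, m) : ℂ)) (C_injective.comp (injective_freq hq l))
    fun τ => hcoeff τ τ.is_lt l) m
  have hlin := (linearIndependent_map_feldmanPoly ℂ h).comp _ (Fin.val_injective (n := K))
  exact_mod_cast Fintype.linearIndependent_iff.mp hlin (fun k => (c (k, l, m) : ℂ)) hfeldman k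

end AuxiliaryValues

lemma le_exp_self (x : ℝ) : x ≤ Real.exp x := by
  linarith [Real.add_one_le_exp x]

lemma lcmUpto_pow_le_exp {S T σ : ℕ} (hσ : σ ≤ T) :
    (Nat.lcmUpto S : ℝ) ^ σ ≤ Real.exp (6 * (S * T)) := by
  calc (Nat.lcmUpto S : ℝ) ^ σ ≤ Real.exp (6 * S) ^ σ := by gcongr; exact lcmUpto_le_exp S
    _ = Real.exp (6 * (S * σ)) := by rw [← Real.exp_nat_mul]; ring_nf
    _ ≤ Real.exp (6 * (S * T)) := by gcongr

lemma pow_mul_le_exp {B C : ℝ} (hB : 1 ≤ B) (hBC : B ≤ Real.exp C) (L : ℕ) {x Y : ℕ}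
    (hx : x ≤ Y) : B ^ (L * x) ≤ Real.exp (C * L * Y) :=
  calc B ^ (L * x) ≤ B ^ (L * Y) := pow_le_pow_right₀ hB (Nat.mul_le_mul_left L hx)
    _ ≤ Real.exp C ^ (L * Y) := by gcongr
    _ = Real.exp (C * L * Y) := by rw [← Real.exp_nat_mul]; push_cast; ring_nf

/-- The constraints on the parameters of Baker's method applied to the approximation `2πp/q`:
auxiliary functions with `SM` Feldman polynomials and frequencies `p l + q m`, `l, m < L`, shall
vanish to order `T` at the integers `x < S`. The constant `C` bounds the logarithm of the height
of `e ^ {iθ}`. -/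
structure Admissible (C : ℝ) (p : ℤ) (q S M L T : ℕ) : Prop where
  q_pos : 0 < q
  abs_p_le : |p| ≤ 2 * q
  q_le_exp : (q : ℝ) ≤ Real.exp S
  one_le_T : 1 ≤ T
  T_le_S : T ≤ S
  M_le_T : M ≤ T
  height_mul_L_le : C * L ≤ T
  four_mul_L_le_exp : (4 * L : ℝ) ≤ Real.exp S
  card_eq : M * (L * L) = 4 * (T * T)
  card_le_exp : ((S * M * (L * L) : ℕ) : ℝ) ≤ Real.exp S

/-- The functions `F σ τ` vanish at the integers `x < X` for all orders `σ, τ < r`. -/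
def VanishesTo (F : ℕ → ℕ → ℂ → ℂ) (X r : ℕ) : Prop :=
  ∀ x < X, ∀ σ < r, ∀ τ < r, F σ τ (x : ℂ) = 0

variable {θ C : ℝ} {p : ℤ} {q b S M L T : ℕ} {t : ℤ}

namespace Admissible

lemma S_pos (h : Admissible C p q S M L T) : 0 < S :=
  h.one_le_T.trans h.T_le_S

lemma card_le_exp_mul (h : Admissible C p q S M L T) :
    ((S * M * (L * L) : ℕ) : ℝ) ≤ Real.exp (S * T) :=
  h.card_le_exp.trans <| Real.exp_le_exp.mpr <|
    le_mul_of_one_le_right S.cast_nonneg (by exact_mod_cast h.one_le_T)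

lemma frequency_pow_le (h : Admissible C p q S M L T) {τ : ℕ} (hτ : τ ≤ T) :
    (4 * q * L : ℝ) ^ τ ≤ Real.exp (2 * (S * T)) := by
  calc (4 * q * L : ℝ) ^ τ = (q * (4 * L)) ^ τ := by ring
    _ ≤ (Real.exp S * Real.exp S) ^ τ := by gcongr; exacts [h.q_le_exp, h.four_mul_L_le_exp]
    _ = Real.exp (2 * (S * τ)) := by rw [← Real.exp_add, ← Real.exp_nat_mul]; ring_nf
    _ ≤ Real.exp (2 * (S * T)) := by gcongr

lemma eval_feldmanPoly_le (h : Admissible C p q S M L T) {k x σ : ℕ} (hk : k < S * M)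
    (hx : x < S) (hσ : σ < T) :
    (feldmanPoly S k).eval (x + σ : ℝ) ≤ Real.exp (3 * (S * T)) := by
  have hM : (M : ℝ) ≤ T := by exact_mod_cast h.M_le_T
  have hxσ : (x + σ : ℝ) ≤ (2 : ℕ) * S := by
    exact_mod_cast (by linarith [h.T_le_S] : x + σ ≤ 2 * S)
  have hexp : Real.exp 1 * ((2 : ℕ) + 1) ≤ Real.exp (3 : ℕ) := by
    calc Real.exp 1 * ((2 : ℕ) + 1) ≤ Real.exp 1 * Real.exp 2 := by
          gcongr
          exact_mod_cast Real.add_one_le_exp 2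
      _ = Real.exp (3 : ℕ) := by rw [← Real.exp_add]; norm_num
  calc (feldmanPoly S k).eval (x + σ : ℝ) ≤ Real.exp ((3 : ℕ) * S * M) :=
        eval_feldmanPoly_le_exp hk hexp (by positivity) hxσ
    _ ≤ Real.exp (3 * (S * T)) := by rw [mul_assoc, Nat.cast_ofNat]; gcongr

end Admissible

lemma one_le_abs_add_sq_add_one (t : ℤ) (b : ℕ) : (1 : ℝ) ≤ (|t| + b ^ 2 + 1 : ℤ) := by
  exact_mod_cast (by linarith [abs_nonneg t, sq_nonneg (b : ℤ)] : 1 ≤ |t| + (b : ℤ) ^ 2 + 1)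

section Lattice

variable (hb : 0 < b) (ht : b * (exp (θ * I) + conj (exp (θ * I))) = t)
  (hC : ((|t| + b ^ 2 + 1 : ℤ) : ℝ) ≤ Real.exp C)
include hb ht

lemma Admissible.auxFun_natCast_eq_zero_of_norm_lt_one (h : Admissible C p q S M L T) {n σ τ x : ℕ}
    {c : Fin (S * M) × Fin L × Fin L → ℤ}
    (hlt : ‖(Nat.lcmUpto S : ℂ) ^ σ * b ^ (L * x) * auxFun θ p q S n c σ τ x‖ < 1) :
    auxFun θ p q S n c σ τ x = 0 := by
  obtain ⟨a, ha, -⟩ := exists_int_coords_auxFun (K := S * M) h.q_pos h.abs_p_le h.S_pos ht n σ τ x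
  rw [ha] at hlt
  have hz := eq_zero_of_norm_intCast_add_mul_lt_one (natCast_mul_add_conj ht)
    (natCast_mul_mul_conj (norm_exp_ofReal_mul_I θ)) hlt
  rw [← ha] at hz
  refine (mul_eq_zero.mp hz).resolve_left (mul_ne_zero ?_ ?_)
  · exact pow_ne_zero _ (Nat.cast_ne_zero.mpr (Nat.lcmUpto_pos S).ne')
  · exact pow_ne_zero _ (Nat.cast_ne_zero.mpr hb.ne')

include hC

lemma Admissible.exists_int_coords_le_exp (h : Admissible C p q S M L T) (n : ℕ) {σ τ x : ℕ}
    (hσ : σ < T) (hτ : τ < T) (hx : x < S) :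
    ∃ a : Fin 2 → Fin (S * M) × Fin L × Fin L → ℤ,
      (∀ c, a 0 ⬝ᵥ c = 0 → a 1 ⬝ᵥ c = 0 → auxFun θ p q S n c σ τ x = 0) ∧
      ∀ j i, |(a j i : ℝ)| ≤ Real.exp (12 * (S * T)) := by
  obtain ⟨a, ha, ha_le⟩ :=
    exists_int_coords_auxFun (K := S * M) h.q_pos h.abs_p_le h.S_pos ht n σ τ x
  refine ⟨a, fun c h0 h1 => h.auxFun_natCast_eq_zero_of_norm_lt_one hb ht ?_, fun j i => ?_⟩
  · simp only [ha c, h0, h1, Int.cast_zero, zero_mul, add_zero, norm_zero, zero_lt_one]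
  have hheight : ((|t| + b ^ 2 + 1 : ℤ) : ℝ) ^ (L * x) ≤ Real.exp (S * T) := by
    refine (pow_mul_le_exp (one_le_abs_add_sq_add_one t b) hC L hx.le).trans ?_
    rw [mul_comm (S : ℝ)]
    gcongr
    exact h.height_mul_L_le
  calc |(a j i : ℝ)| ≤ _ := ha_le j i
    _ ≤ Real.exp (6 * (S * T)) * Real.exp (3 * (S * T)) * Real.exp (S * T) *
        Real.exp (2 * (S * T)) := by
      gcongr
      · exact eval_nonneg_of_mem_nonnegCoeffs (feldmanPoly_mem_nonnegCoeffs S i.1) (by positivity)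
      · exact lcmUpto_pow_le_exp hσ.le
      · exact h.eval_feldmanPoly_le i.1.is_lt hx hσ
      · exact h.frequency_pow_le hτ.le
    _ = Real.exp (12 * (S * T)) := by simp only [← Real.exp_add]; ring_nf

lemma Admissible.exists_coeffs (h : Admissible C p q S M L T) (n : ℕ) :
    ∃ c : Fin (S * M) × Fin L × Fin L → ℤ, c ≠ 0 ∧ (∀ i, |(c i : ℝ)| ≤ Real.exp (13 * (S * T))) ∧
      VanishesTo (auxFun θ p q S n c) S T := by
  have hS := h.S_pos
  have hT := h.one_le_T
  have : Nonempty (Fin S × Fin T × Fin T × Fin 2) := ⟨⟨0, hS⟩, ⟨0, hT⟩, ⟨0, hT⟩, 0⟩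
  have hcard : Fintype.card (Fin (S * M) × Fin L × Fin L) =
      2 * Fintype.card (Fin S × Fin T × Fin T × Fin 2) := by
    simp only [Fintype.card_prod, Fintype.card_fin]
    rw [mul_assoc, h.card_eq]
    ring
  choose a ha ha_le using fun k : Fin S × Fin T × Fin T =>
    h.exists_int_coords_le_exp hb ht hC n k.2.1.is_lt k.2.2.is_lt k.1.is_lt
  obtain ⟨c, hc, hac, hc_le⟩ := exists_ne_zero_int_vec_of_card_eq_two_mul hcard
    (Matrix.of fun k i => a (k.1, k.2.1, k.2.2.1) k.2.2.2 i) (Real.one_le_exp (by positivity))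
    (fun _ _ => ha_le _ _ _)
  refine ⟨c, hc, fun i => ?_, fun x hx σ hσ τ hτ => ?_⟩
  · calc |(c i : ℝ)| ≤ _ := hc_le i
      _ ≤ Real.exp (S * T) * Real.exp (12 * (S * T)) := by
        gcongr
        simpa only [Fintype.card_prod, Fintype.card_fin] using h.card_le_exp_mul
      _ = Real.exp (13 * (S * T)) := by rw [← Real.exp_add]; ring_nf
  · exact ha (⟨x, hx⟩, ⟨σ, hσ⟩, ⟨τ, hτ⟩) c (congrFun hac (⟨x, hx⟩, ⟨σ, hσ⟩, ⟨τ, hτ⟩, 0))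
      (congrFun hac (⟨x, hx⟩, ⟨σ, hσ⟩, ⟨τ, hτ⟩, 1))

end Lattice

section Extrapolation

variable {c : Fin (S * M) × Fin L × Fin L → ℤ} {g A : ℕ}
  (hc : ∀ i, |(c i : ℝ)| ≤ Real.exp (13 * (S * T))) (hAg : Real.exp 1 * (A + 1) ≤ Real.exp g)
  (hgM : g * M ≤ T)
include hc hAg hgM

lemma Admissible.norm_auxFun_le_exp (h : Admissible C p q S M L T) {σ τ : ℕ} {ζ : ℂ} {R : ℝ}
    (hζ : ‖ζ‖ ≤ R) (hRA : R + σ ≤ A * S) (hτ : τ ≤ T)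
    (hε : |θ - 2 * Real.pi * p / q| * L * Real.exp ((7 * T + 1) * (R + 1)) ≤ 1) :
    ‖auxFun θ p q S T c σ τ ζ‖ ≤ Real.exp (17 * (S * T) + 26 * L * R + 1) := by
  have hR : 0 ≤ R := (norm_nonneg _).trans hζ
  have hfeldman : ∀ k < S * M, (feldmanPoly S k).eval (R + σ) ≤ Real.exp (S * T) := fun k hk => by
    refine (eval_feldmanPoly_le_exp hk hAg (by positivity) hRA).trans (Real.exp_le_exp.mpr ?_)
    exact_mod_cast (by nlinarith [Nat.mul_le_mul_left S hgM] : g * S * M ≤ S * T)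
  have hflat : |θ - 2 * Real.pi * p / q| * L * ‖flatId T ζ‖ ≤ 1 :=
    le_trans (by gcongr; exact norm_flatId_le T hζ) hε
  calc ‖auxFun θ p q S T c σ τ ζ‖ ≤ _ :=
        norm_auxFun_le h.q_pos h.abs_p_le hζ hc hfeldman hflat
    _ ≤ Real.exp (S * T) * (Real.exp (13 * (S * T)) * Real.exp (S * T) * Real.exp (2 * (S * T)) *
        Real.exp (26 * L * R + 1)) := by
      gcongr
      exacts [h.card_le_exp_mul, h.frequency_pow_le hτ]
    _ = Real.exp (17 * (S * T) + 26 * L * R + 1) := by simp only [← Real.exp_add]; ring_nf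

variable {ρ r X Y : ℕ} (hρ : Real.exp 50 ≤ ρ) (hr : 2 * r ≤ T) (hXY : X ≤ Y)
  (hYA : (ρ + 1 : ℝ) * Y + S ≤ A * S)
  (hε : |θ - 2 * Real.pi * p / q| * L * Real.exp ((7 * T + 1) * ((ρ + 1) * Y + 1)) ≤ 1)
include hρ hr hXY hYA hε

lemma Admissible.norm_auxFun_natCast_le (h : Admissible C p q S M L T)
    (hzero : VanishesTo (auxFun θ p q S T c) X (2 * r)) {x σ τ : ℕ} (hx : x < Y) (hσ : σ < r)
    (hτ : τ < r) :
    ‖auxFun θ p q S T c σ τ x‖ ≤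
      Real.exp (17 * (S * T) + 26 * L * ((ρ + 1) * Y) + 1 - 50 * (r * X)) := by
  have hσS : (σ : ℝ) ≤ S := by exact_mod_cast (by linarith [h.T_le_S] : σ ≤ S)
  have hρ_pos : (0 : ℝ) < ρ := (Real.exp_pos _).trans_le hρ
  have hpow : (ρ : ℝ)⁻¹ ^ (r * X) ≤ Real.exp (-(50 * (r * X))) := by
    calc (ρ : ℝ)⁻¹ ^ (r * X) ≤ (Real.exp 50)⁻¹ ^ (r * X) := by gcongr
      _ = Real.exp (-(50 * (r * X))) := by
          rw [← Real.exp_neg, ← Real.exp_nat_mul]; push_cast; ring_nf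
  have hschwarz := norm_natCast_le_of_le_analyticOrderAt (r := r)
    (differentiable_expPoly _ _ _ _ _ _ σ τ)
    (fun j hj => le_analyticOrderAt_expPoly _ _ _ _ _ _ (hzero j hj) (by omega) (by omega)
      (by omega)) hXY hx hρ_pos
    (fun ζ hζ => h.norm_auxFun_le_exp hc hAg hgM hζ.le (by linarith) (by omega) hε)
  calc ‖auxFun θ p q S T c σ τ x‖ ≤ _ := hschwarz
    _ ≤ _ * Real.exp (-(50 * (r * X))) := by gcongr
    _ = _ := by rw [← Real.exp_add]; ring_nf

end Extrapolation

lemma Admissible.vanishesTo_of_vanishesTo_two_mul (h : Admissible C p q S M L T) (hb : 0 < b)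
    (ht : b * (exp (θ * I) + conj (exp (θ * I))) = t)
    (hC : ((|t| + b ^ 2 + 1 : ℤ) : ℝ) ≤ Real.exp C) {c : Fin (S * M) × Fin L × Fin L → ℤ}
    (hc : ∀ i, |(c i : ℝ)| ≤ Real.exp (13 * (S * T))) {g A : ℕ}
    (hAg : Real.exp 1 * (A + 1) ≤ Real.exp g)
    (hgM : g * M ≤ T) {ρ r X Y : ℕ} (hρ : Real.exp 50 ≤ ρ) (hr : 2 * r ≤ T) (hXY : X ≤ Y)
    (hYA : (ρ + 1 : ℝ) * Y + S ≤ A * S)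
    (hε : |θ - 2 * Real.pi * p / q| * L * Real.exp ((7 * T + 1) * ((ρ + 1) * Y + 1)) ≤ 1)
    (hgain : 24 * (S * T) + (26 * (ρ + 1) + C) * L * Y < 50 * (r * X : ℝ))
    (hzero : VanishesTo (auxFun θ p q S T c) X (2 * r)) :
    VanishesTo (auxFun θ p q S T c) Y r := by
  intro x hx σ hσ τ hτ
  have hST : (1 : ℝ) ≤ S * T := by exact_mod_cast Nat.mul_pos h.S_pos h.one_le_T
  have hb_le : (b : ℝ) ≤ (|t| + b ^ 2 + 1 : ℤ) := by
    exact_mod_cast (by nlinarith [abs_nonneg t] : (b : ℤ) ≤ |t| + b ^ 2 + 1)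
  refine h.auxFun_natCast_eq_zero_of_norm_lt_one hb ht ?_
  rw [norm_mul, norm_mul, norm_pow, norm_pow, Complex.norm_natCast, Complex.norm_natCast]
  calc
    (Nat.lcmUpto S : ℝ) ^ σ * b ^ (L * x) * ‖auxFun θ p q S T c σ τ x‖
    _ ≤ Real.exp (6 * (S * T)) * Real.exp (C * L * Y) *
        Real.exp (17 * (S * T) + 26 * L * ((ρ + 1) * Y) + 1 - 50 * (r * X)) := by
      gcongr
      · exact lcmUpto_pow_le_exp (by omega)
      · refine le_trans ?_ (pow_mul_le_exp (one_le_abs_add_sq_add_one t b) hC L hx.le)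
        gcongr
      · exact h.norm_auxFun_natCast_le hc hAg hgM hρ hr hXY hYA hε hzero hx hσ hτ
    _ = Real.exp (23 * (S * T) + 1 + (26 * (ρ + 1) + C) * L * Y - 50 * (r * X)) := by
      simp only [← Real.exp_add]; ring_nf
    _ < 1 := Real.exp_lt_one_iff.mpr (by linarith)

lemma exists_scale (C : ℝ) (ρ : ℕ) : ∃ g : ℕ, 512 ≤ g ∧ 512 * (26 * (ρ + 1) + C) ≤ g ∧
    Real.exp 1 * (((ρ + 2) * g ^ 8 : ℕ) + 1) ≤ Real.exp g := by
  obtain ⟨g, hg⟩ := exists_nat_ge (max 512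
    (max (512 * (26 * (ρ + 1) + C)) (Nat.factorial 9 * (Real.exp 1 * (ρ + 3)))))
  simp only [max_le_iff] at hg
  obtain ⟨hg512, hgC, hgρ⟩ := hg
  refine ⟨g, by exact_mod_cast hg512, hgC, ?_⟩
  have hg8 : (1 : ℝ) ≤ (g : ℝ) ^ 8 := one_le_pow₀ (by linarith)
  calc Real.exp 1 * (((ρ + 2) * g ^ 8 : ℕ) + 1) ≤ Real.exp 1 * ((ρ + 3) * g ^ 8) := by
        gcongr
        push_cast
        linarith
    _ = Nat.factorial 9 * (Real.exp 1 * (ρ + 3)) * g ^ 8 / Nat.factorial 9 := by field_simp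
    _ ≤ g * g ^ 8 / Nat.factorial 9 := by gcongr
    _ = (g : ℝ) ^ 9 / Nat.factorial 9 := by ring
    _ ≤ Real.exp g := Real.pow_div_factorial_le_exp _ g.cast_nonneg 9

lemma admissible_of_le {g : ℕ} (hg : 512 ≤ g) (hgC : 512 * C ≤ g) (hS : 2 ^ 19 * g ^ 10 ≤ S)
    (hq : 0 < q) (hp : |p| ≤ 2 * q) (hqS : (q : ℝ) ≤ Real.exp S) :
    Admissible C p q S (g ^ 4) (512 * g ^ 3) (256 * g ^ 5) where
  q_pos := hq
  abs_p_le := hp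
  q_le_exp := hqS
  one_le_T := Nat.mul_pos (by norm_num) (pow_pos (by omega) 5)
  T_le_S := hS.trans' (Nat.mul_le_mul (by norm_num) (Nat.pow_le_pow_right (by omega) (by norm_num)))
  M_le_T := (Nat.pow_le_pow_right (by omega) (by norm_num)).trans
    (Nat.le_mul_of_pos_left _ (by norm_num))
  height_mul_L_le := by
    have hpow : (g : ℝ) ^ 4 ≤ 256 * g ^ 5 := by
      exact_mod_cast (Nat.pow_le_pow_right (by omega) (by norm_num)).trans
        (Nat.le_mul_of_pos_left (g ^ 5) (by norm_num))
    calc C * (512 * g ^ 3 : ℕ) = 512 * C * g ^ 3 := by push_cast; ring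
      _ ≤ g * g ^ 3 := by gcongr
      _ = (g : ℝ) ^ 4 := by ring
      _ ≤ (256 * g ^ 5 : ℕ) := by exact_mod_cast hpow
  four_mul_L_le_exp := by
    refine le_trans ?_ (le_exp_self S)
    have hpow : g ^ 3 ≤ g ^ 10 := Nat.pow_le_pow_right (by omega) (by norm_num)
    exact_mod_cast (by omega : 4 * (512 * g ^ 3) ≤ S)
  card_eq := by ring
  card_le_exp := by
    refine le_trans ?_ (Real.pow_div_factorial_le_exp (S : ℝ) S.cast_nonneg 2)
    rw [le_div_iff₀ (by positivity)]
    exact_mod_cast (calc S * g ^ 4 * (512 * g ^ 3 * (512 * g ^ 3)) * Nat.factorial 2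
        = S * (2 ^ 19 * g ^ 10) := by rw [Nat.factorial_two]; ring
      _ ≤ S * S := Nat.mul_le_mul_left S hS
      _ = S ^ 2 := by ring)

lemma gain_lt {ρ g i : ℕ} (hg : 512 ≤ g) (hgC : 512 * (26 * (ρ + 1) + C) ≤ g) (hS : 0 < S)
    (hi : i ≤ 7) :
    24 * (S * (256 * g ^ 5 : ℕ)) + (26 * (ρ + 1) + C) * (512 * g ^ 3 : ℕ) * (g ^ (i + 1) * S : ℕ)
      < 50 * ((2 ^ (7 - i) * g ^ 5 : ℕ) * (g ^ i * S : ℕ) : ℝ) := by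
  have hpos : (0 : ℝ) < g ^ 5 * S := by positivity
  have hw : (128 : ℝ) ≤ 2 ^ (7 - i) * g ^ i := by
    calc (128 : ℝ) = 2 ^ (7 - i) * 2 ^ i := by rw [← pow_add, Nat.sub_add_cancel hi]; norm_num
      _ ≤ 2 ^ (7 - i) * g ^ i := by gcongr; exact_mod_cast (by omega : 2 ≤ g)
  have hgw : (g : ℝ) ^ i ≤ 2 ^ (7 - i) * g ^ i :=
    le_mul_of_one_le_left (by positivity) (one_le_pow₀ (by norm_num))
  calc 24 * (S * (256 * g ^ 5 : ℕ)) + (26 * (ρ + 1) + C) * (512 * g ^ 3 : ℕ) * (g ^ (i + 1) * S : ℕ)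
      = 48 * (128 * (g ^ 5 * S)) + 512 * (26 * (ρ + 1) + C) * (g ^ (i + 4) * S) := by
        push_cast; ring
    _ ≤ 48 * (2 ^ (7 - i) * g ^ i * (g ^ 5 * S)) + g * (g ^ (i + 4) * S) := by gcongr
    _ = 48 * (2 ^ (7 - i) * g ^ i * (g ^ 5 * S)) + g ^ i * (g ^ 5 * S) := by ring
    _ ≤ 49 * (2 ^ (7 - i) * g ^ i * (g ^ 5 * S)) := by
        linarith [mul_le_mul_of_nonneg_right hgw hpos.le]
    _ < 50 * (2 ^ (7 - i) * g ^ i * (g ^ 5 * S)) := by gcongr; norm_num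
    _ = 50 * ((2 ^ (7 - i) * g ^ 5 : ℕ) * (g ^ i * S : ℕ)) := by push_cast; ring

lemma mul_mul_exp_le_one {δ R : ℝ} {D : ℕ} (hS : 0 < S)
    (hδ : δ ≤ Real.exp (-((L + (7 * T + 1) * (D + 1) : ℕ) * S))) (hR : R ≤ D * S) :
    δ * L * Real.exp ((7 * T + 1) * (R + 1)) ≤ 1 := by
  have hS1 : (1 : ℝ) ≤ S := by exact_mod_cast hS
  have hL : (L : ℝ) ≤ Real.exp (L * S) := (le_exp_self _).trans <|
    Real.exp_le_exp.mpr (le_mul_of_one_le_right L.cast_nonneg hS1)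
  calc δ * L * Real.exp ((7 * T + 1) * (R + 1))
      ≤ Real.exp (-((L + (7 * T + 1) * (D + 1) : ℕ) * S)) * Real.exp (L * S) *
        Real.exp ((7 * T + 1) * (D * S + S)) := by gcongr
    _ = 1 := by
      rw [← Real.exp_add, ← Real.exp_add, Real.exp_eq_one_iff]
      push_cast
      ring

/-- An extrapolation step halves the order of vanishing and multiplies the number of zeros by `g`.
After eight steps there are more zeros, with multiplicity, than the zero estimate allows. -/
lemma vanishesTo_pow_mul {g ρ : ℕ} (hb : 0 < b)
    (ht : b * (exp (θ * I) + conj (exp (θ * I))) = t)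
    (hC : ((|t| + b ^ 2 + 1 : ℤ) : ℝ) ≤ Real.exp C) (hρ : Real.exp 50 ≤ ρ) (hg : 512 ≤ g)
    (hgC : 512 * (26 * (ρ + 1) + C) ≤ g)
    (hgA : Real.exp 1 * (((ρ + 2) * g ^ 8 : ℕ) + 1) ≤ Real.exp g)
    (h : Admissible C p q S (g ^ 4) (512 * g ^ 3) (256 * g ^ 5))
    (hδ : |θ - 2 * Real.pi * p / q| ≤ Real.exp
      (-((512 * g ^ 3 + (7 * (256 * g ^ 5) + 1) * ((ρ + 1) * g ^ 8 + 1) : ℕ) * S)))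
    {c : Fin (S * g ^ 4) × Fin (512 * g ^ 3) × Fin (512 * g ^ 3) → ℤ}
    (hc : ∀ i, |(c i : ℝ)| ≤ Real.exp (13 * (S * (256 * g ^ 5 : ℕ))))
    (hzero : VanishesTo (auxFun θ p q S (256 * g ^ 5) c) S (256 * g ^ 5)) {i : ℕ} (hi : i ≤ 8) :
    VanishesTo (auxFun θ p q S (256 * g ^ 5) c) (g ^ i * S) (2 ^ (8 - i) * g ^ 5) := by
  induction i with
  | zero => simpa using hzero
  | succ i ih =>
    have hgpos : 0 < g := by omega
    have hY : ((g ^ (i + 1) * S : ℕ) : ℝ) ≤ g ^ 8 * S := by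
      exact_mod_cast Nat.mul_le_mul_right S (Nat.pow_le_pow_right hgpos hi)
    have hS_le : (S : ℝ) ≤ g ^ 8 * S := by
      exact_mod_cast Nat.le_mul_of_pos_left S (pow_pos hgpos 8)
    have hr : 2 * (2 ^ (7 - i) * g ^ 5) = 2 ^ (8 - i) * g ^ 5 := by
      rw [show 8 - i = (7 - i) + 1 by omega, pow_succ]
      ring
    rw [show 8 - (i + 1) = 7 - i by omega]
    refine h.vanishesTo_of_vanishesTo_two_mul hb ht hC hc hgA
      ((pow_succ' g 4).symm.trans_le (Nat.le_mul_of_pos_left _ (by norm_num))) hρ (hr.trans_le ?_)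
      ?_ ?_ ?_ (gain_lt hg hgC h.S_pos (by omega)) (hr ▸ ih (by omega))
    · exact Nat.mul_le_mul_right _ (Nat.pow_le_pow_right (by norm_num) (Nat.sub_le 8 i))
    · exact Nat.mul_le_mul_right S (Nat.pow_le_pow_right hgpos i.le_succ)
    · calc (ρ + 1 : ℝ) * (g ^ (i + 1) * S : ℕ) + S ≤ (ρ + 1) * (g ^ 8 * S) + g ^ 8 * S := by gcongr
        _ = ((ρ + 2) * g ^ 8 : ℕ) * S := by push_cast; ring
    · refine mul_mul_exp_le_one h.S_pos hδ ?_
      push_cast at hY ⊢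
      rw [mul_assoc]
      gcongr

theorem exists_forall_exp_neg_lt_abs_sub (hb : 0 < b)
    (ht : b * (exp (θ * I) + conj (exp (θ * I))) = t)
    (hinj : Function.Injective fun n : ℕ => exp (θ * I) ^ n) :
    ∃ W S₀ : ℕ, ∀ S ≥ S₀, ∀ (p : ℤ) (q : ℕ), 0 < q → |p| ≤ 2 * q → (q : ℝ) ≤ Real.exp S →
      Real.exp (-(W * S)) < |θ - 2 * Real.pi * p / q| := by
  obtain ⟨C, hC⟩ : ∃ C, ((|t| + b ^ 2 + 1 : ℤ) : ℝ) ≤ Real.exp C := ⟨_, le_exp_self _⟩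
  obtain ⟨ρ, hρ⟩ := exists_nat_ge (Real.exp 50)
  obtain ⟨g, hg, hgC, hgA⟩ := exists_scale C ρ
  refine ⟨512 * g ^ 3 + (7 * (256 * g ^ 5) + 1) * ((ρ + 1) * g ^ 8 + 1), 2 ^ 19 * g ^ 10,
    fun S hS p q hq hp hqS => ?_⟩
  by_contra! hδ
  have hgC' : 512 * C ≤ g := by linarith [ρ.cast_nonneg (α := ℝ)]
  have h := admissible_of_le hg hgC' hS hq hp hqS
  obtain ⟨c, hc, hc_le, hzero⟩ := h.exists_coeffs hb ht hC (256 * g ^ 5)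
  have hlast := vanishesTo_pow_mul hb ht hC hρ hg hgC hgA h hδ hc_le hzero le_rfl
  have hlen : 512 * g ^ 3 * (S * g ^ 4) ≤ g ^ 8 * S := by
    calc 512 * g ^ 3 * (S * g ^ 4) = 512 * (g ^ 7 * S) := by ring
      _ ≤ g * (g ^ 7 * S) := Nat.mul_le_mul_right _ hg
      _ = g ^ 8 * S := by ring
  have hord : 512 * g ^ 3 ≤ 2 ^ (8 - 8) * g ^ 5 := by
    calc 512 * g ^ 3 ≤ g ^ 2 * g ^ 3 := Nat.mul_le_mul_right _ (by nlinarith)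
      _ = 2 ^ (8 - 8) * g ^ 5 := by ring
  exact hc (eq_zero_of_forall_auxFun_natCast_eq_zero hq hinj fun x hx τ hτ =>
    hlast x (hx.trans_le hlen) 0 (by positivity) τ (hτ.trans_le hord))

end BakerMethod

section Angle

open Filter Complex
open scoped ComplexConjugate

variable {θ : ℝ}

lemma irrational_div_two_pi (hcos : ∃ q : ℚ, Real.cos θ = q)
    (hcos' : ∀ k : ℤ, Real.cos θ ≠ k / 2) : Irrational (θ / (2 * Real.pi)) := by
  rintro ⟨r, hr⟩
  have hθ : θ = (2 * r : ℚ) * Real.pi := by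
    rw [eq_div_iff Real.two_pi_pos.ne'] at hr
    push_cast
    linarith
  rcases niven ⟨_, hθ⟩ hcos with h | h | h | h | h
  · exact hcos' (-2) (by rw [h]; norm_num)
  · exact hcos' (-1) (by rw [h]; norm_num)
  · exact hcos' 0 (by rw [h]; norm_num)
  · exact hcos' 1 (by rw [h]; norm_num)
  · exact hcos' 2 (by rw [h]; norm_num)

lemma injective_exp_mul_I_pow (hirr : Irrational (θ / (2 * Real.pi))) :
    Function.Injective fun n : ℕ => exp (θ * I) ^ n := by
  intro j k hjk
  simp only [← exp_nat_mul, exp_eq_exp_iff_exists_int] at hjk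
  obtain ⟨n, hn⟩ := hjk
  by_contra hne
  have hsub : (j - k : ℝ) ≠ 0 := sub_ne_zero.mpr (by exact_mod_cast hne)
  have hmul : (j - k : ℝ) * θ = n * (2 * Real.pi) := by
    have h : I * ((j - k) * θ) = I * (n * (2 * Real.pi)) := by linear_combination hn
    exact_mod_cast mul_left_cancel₀ I_ne_zero h
  refine hirr ⟨n / (j - k), ?_⟩
  push_cast
  rw [div_eq_div_iff hsub Real.two_pi_pos.ne', ← hmul, mul_comm]

lemma den_mul_exp_add_conj {r : ℚ} (hr : Real.cos θ = r) :
    (r.den : ℂ) * (exp (θ * I) + conj (exp (θ * I))) = (2 * r.num : ℤ) := by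
  have hden : (r.den : ℂ) * r = r.num := by exact_mod_cast Rat.den_mul_eq_num r
  rw [add_conj, exp_ofReal_mul_I_re, hr]
  push_cast
  linear_combination 2 * hden

lemma one_lt_abs_sub_of_two_mul_lt_abs (hθ : θ ∈ Set.Ico 0 (2 * Real.pi)) {p : ℤ} {q : ℕ}
    (hq : 0 < q) (hp : 2 * q < |p|) : 1 < |θ - 2 * Real.pi * p / q| := by
  have hp' : (2 : ℝ) < |(p : ℝ)| / q := by
    rw [lt_div_iff₀ (by exact_mod_cast hq)]
    exact_mod_cast hp
  have habs : |2 * Real.pi * p / q| = 2 * Real.pi * (|(p : ℝ)| / q) := by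
    rw [abs_div, abs_mul, abs_of_pos Real.two_pi_pos, Nat.abs_cast, mul_div_assoc]
  have htri := abs_sub_abs_le_abs_sub (2 * Real.pi * p / q) θ
  rw [abs_sub_comm _ θ, habs, abs_of_nonneg hθ.1] at htri
  nlinarith [hθ.2, Real.pi_gt_three]

lemma eventually_one_div_pow_lt_abs_sub (hθ : θ ∈ Set.Ico 0 (2 * Real.pi)) {W S₀ : ℕ}
    (hbound : ∀ S ≥ S₀, ∀ (p : ℤ) (q : ℕ), 0 < q → |p| ≤ 2 * q → (q : ℝ) ≤ Real.exp S →
      Real.exp (-(W * S)) < |θ - 2 * Real.pi * p / q|) :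
    ∀ᶠ q : ℕ in atTop, ∀ p : ℤ, 1 / (q : ℝ) ^ (2 * W) < |θ - 2 * Real.pi * p / q| := by
  have hlog : Tendsto (fun q : ℕ => Real.log q) atTop atTop :=
    Real.tendsto_log_atTop.comp tendsto_natCast_atTop_atTop
  filter_upwards [hlog.eventually_ge_atTop 1, hlog.eventually_ge_atTop S₀, eventually_gt_atTop 0]
    with q hq1 hqS₀ hq p
  have hq_pos : (0 : ℝ) < q := by exact_mod_cast hq
  rcases le_or_gt |p| (2 * q) with hp | hp
  · set S := ⌈Real.log q⌉₊
    have hlog_le : Real.log q ≤ S := Nat.le_ceil _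
    have hle_log : (S : ℝ) ≤ 2 * Real.log q := by
      linarith [Nat.ceil_lt_add_one (zero_le_one.trans hq1)]
    have hS₀ : S₀ ≤ S := by exact_mod_cast hqS₀.trans hlog_le
    calc 1 / (q : ℝ) ^ (2 * W) = Real.exp (-(W * (2 * Real.log q))) := by
          rw [one_div, pow_mul, Real.exp_neg, Real.exp_nat_mul, two_mul, Real.exp_add,
            Real.exp_log hq_pos, sq]
      _ ≤ Real.exp (-(W * S)) := by gcongr
      _ < |θ - 2 * Real.pi * p / q| :=
          hbound S hS₀ p q hq hp ((Real.log_le_iff_le_exp hq_pos).mp hlog_le)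
  · refine lt_of_le_of_lt ?_ (one_lt_abs_sub_of_two_mul_lt_abs hθ hq hp)
    exact div_le_one_of_le₀ (one_le_pow₀ (by exact_mod_cast hq)) (by positivity)

lemma exists_forall_div_pow_lt_abs_sub (hirr : Irrational (θ / (2 * Real.pi))) {m : ℕ}
    (hev : ∀ᶠ q : ℕ in atTop, ∀ p : ℤ, 1 / (q : ℝ) ^ m < |θ - 2 * Real.pi * p / q|) :
    ∃ c > 0, ∀ (p : ℤ) (q : ℕ), 0 < q → c / (q : ℝ) ^ m < |θ - 2 * Real.pi * p / q| := by
  obtain ⟨Q, hQ⟩ := eventually_atTop.mp hev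
  obtain ⟨ε, hε, hε_pos⟩ := ((hirr.eventually_forall_le_dist_cast_div_of_denom_le Q).filter_mono
    nhdsWithin_le_nhds).and self_mem_nhdsWithin |>.exists (f := nhdsWithin 0 (Set.Ioi (0 : ℝ)))
  refine ⟨min ε 1, lt_min hε_pos one_pos, fun p q hq => ?_⟩
  rcases le_total Q q with hQq | hqQ
  · exact lt_of_le_of_lt (by gcongr; exact min_le_right ε 1) (hQ q hQq p)
  have hscale : θ - 2 * Real.pi * p / q = 2 * Real.pi * (θ / (2 * Real.pi) - p / q) := by
    field_simp
  calc min ε 1 / (q : ℝ) ^ m ≤ ε :=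
        (div_le_self (by positivity) (one_le_pow₀ (by exact_mod_cast hq))).trans (min_le_left ε 1)
    _ < 2 * Real.pi * ε := by nlinarith [Real.pi_gt_three]
    _ ≤ 2 * Real.pi * |θ / (2 * Real.pi) - p / q| := by gcongr; exact hε q hqQ p
    _ = |θ - 2 * Real.pi * p / q| := by rw [hscale, abs_mul, abs_of_pos Real.two_pi_pos]

lemma exists_forall_div_pow_lt_abs_sub_of_mem_Ico (hθ : θ ∈ Set.Ico 0 (2 * Real.pi))
    (hcos : ∃ q : ℚ, Real.cos θ = q) (hcos' : ∀ k : ℤ, Real.cos θ ≠ k / 2) :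
    ∃ c > 0, ∃ m : ℕ, ∀ (p : ℤ) (q : ℕ), 0 < q → c / (q : ℝ) ^ m < |θ - 2 * Real.pi * p / q| := by
  have hirr := irrational_div_two_pi hcos hcos'
  obtain ⟨r, hr⟩ := hcos
  obtain ⟨W, S₀, hbound⟩ := exists_forall_exp_neg_lt_abs_sub r.den_pos (den_mul_exp_add_conj hr)
    (injective_exp_mul_I_pow hirr)
  obtain ⟨c, hc, hlt⟩ :=
    exists_forall_div_pow_lt_abs_sub hirr (eventually_one_div_pow_lt_abs_sub hθ hbound)
  exact ⟨c, hc, 2 * W, hlt⟩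

theorem exists_div_pow_lt_abs_sub_two_pi_mul_div (hcos : ∃ q : ℚ, Real.cos θ = q)
    (hcos' : ∀ k : ℤ, Real.cos θ ≠ k / 2) :
    ∃ c > 0, ∃ m : ℕ, ∀ p q : ℤ, 1 ≤ q → c / (q : ℝ) ^ m < |θ - 2 * Real.pi * p / q| := by
  set N := ⌊θ / (2 * Real.pi)⌋
  have hmem : θ - N * (2 * Real.pi) ∈ Set.Ico 0 (2 * Real.pi) :=
    ⟨Int.sub_floor_div_mul_nonneg θ Real.two_pi_pos, Int.sub_floor_div_mul_lt θ Real.two_pi_pos⟩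
  rw [← Real.cos_sub_int_mul_two_pi θ N] at hcos
  simp only [← Real.cos_sub_int_mul_two_pi θ N] at hcos'
  obtain ⟨c, hc, m, hlt⟩ := exists_forall_div_pow_lt_abs_sub_of_mem_Ico hmem hcos hcos'
  refine ⟨c, hc, m, fun p q hq => ?_⟩
  lift q to ℕ using by omega
  have hq' : 0 < q := by omega
  convert! hlt (p - N * q) q hq' using 2
  push_cast
  field_simp
  ring

lemma exists_two_div_pi_mul_abs_sub_le_abs_cos (x : ℝ) :
    ∃ n : ℤ, 2 / Real.pi * |x - (2 * n + 1) * Real.pi / 2| ≤ |Real.cos x| := by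
  set n := round ((x - Real.pi / 2) / Real.pi)
  set y := x - (2 * n + 1) * Real.pi / 2
  have hy : |y| ≤ Real.pi / 2 := by
    have hround := abs_sub_round ((x - Real.pi / 2) / Real.pi)
    have hy_eq : y = ((x - Real.pi / 2) / Real.pi - n) * Real.pi := by field_simp; ring
    rw [hy_eq, abs_mul, abs_of_pos Real.pi_pos]
    nlinarith [Real.pi_pos]
  have hcos : |Real.cos x| = |Real.sin y| := by
    have hx : x = y + Real.pi / 2 + n * Real.pi := by ring
    rw [hx, Real.cos_add_int_mul_pi, Real.cos_add_pi_div_two, abs_mul, abs_neg, abs_zpow, abs_neg,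
      abs_one, one_zpow, one_mul]
  exact ⟨n, hcos ▸ Real.mul_abs_le_abs_sin hy⟩

lemma div_pow_lt_abs_cos_natCast_mul {c : ℝ} (hc : 0 < c) {m : ℕ}
    (hlt : ∀ p q : ℤ, 1 ≤ q → c / (q : ℝ) ^ m < |θ - 2 * Real.pi * p / q|) {k : ℕ} (hk : 1 ≤ k) :
    c / (2 * 4 ^ m) / (k : ℝ) ^ m < |Real.cos (k * θ)| := by
  have hk1 : (1 : ℝ) ≤ k := by exact_mod_cast hk
  obtain ⟨n, hn⟩ := exists_two_div_pi_mul_abs_sub_le_abs_cos (k * θ)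
  have hscale : k * θ - (2 * n + 1) * Real.pi / 2 =
      k * (θ - 2 * Real.pi * (2 * n + 1 : ℤ) / (4 * k : ℤ)) := by
    push_cast
    field_simp
    ring
  have hpi : 1 / 2 ≤ 2 / Real.pi := by
    rw [div_le_div_iff₀ two_pos Real.pi_pos]
    linarith [Real.pi_le_four]
  calc c / (2 * 4 ^ m) / (k : ℝ) ^ m = 1 / 2 * (1 * (c / ((4 * k : ℤ) : ℝ) ^ m)) := by
        push_cast
        rw [mul_pow]
        field_simp
    _ < 1 / 2 * (1 * |θ - 2 * Real.pi * (2 * n + 1 : ℤ) / (4 * k : ℤ)|) := by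
        gcongr
        exact hlt _ _ (by omega)
    _ ≤ 2 / Real.pi * (k * |θ - 2 * Real.pi * (2 * n + 1 : ℤ) / (4 * k : ℤ)|) := by gcongr
    _ = 2 / Real.pi * |k * θ - (2 * n + 1) * Real.pi / 2| := by
        rw [hscale, abs_mul, Nat.abs_cast]
    _ ≤ |Real.cos (k * θ)| := hn

end Angle

end AngleApprox

theorem statement12_general (θ : ℝ) (hcosQ : ∃ q : ℚ, Real.cos θ = (q : ℝ))
    (hcosHalf : ∀ k : ℤ, Real.cos θ ≠ (k : ℝ) / 2) :
    ∃ c > 0, ∃ m : ℕ,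
      (∀ p q : ℤ, 1 ≤ q → |θ - 2 * Real.pi * p / q| > c / (q : ℝ) ^ m) ∧
      (∀ k : ℕ, 1 ≤ k → |Real.cos (k * θ)| > c / (k : ℝ) ^ m) := by
  obtain ⟨c, hc, m, hlt⟩ := AngleApprox.exists_div_pow_lt_abs_sub_two_pi_mul_div hcosQ hcosHalf
  have hle : c / (2 * 4 ^ m) ≤ c :=
    div_le_self hc.le (one_le_mul_of_one_le_of_one_le one_le_two (one_le_pow₀ (by norm_num)))
  refine ⟨c / (2 * 4 ^ m), by positivity, m, fun p q hq => ?_, fun k hk =>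
    AngleApprox.div_pow_lt_abs_cos_natCast_mul hc hlt hk⟩
  refine lt_of_le_of_lt ?_ (hlt p q hq)
  gcongr

/-- Baker-type Diophantine bounds for an angle with rational,
non-half-integer cosine: `|θ - 2πp/q| > c q^{-m}` and `|cos(kθ)| > c k^{-m}`. -/
theorem statement12 (θ : ℝ) (hθ : θ ∈ Set.Ico 0 (2 * Real.pi))
    (hcosQ : ∃ q : ℚ, Real.cos θ = (q : ℝ))
    (hcosHalf : ∀ k : ℤ, Real.cos θ ≠ (k : ℝ) / 2) :
    ∃ c > 0, ∃ m : ℕ,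
      (∀ p q : ℤ, 1 ≤ q → |θ - 2 * Real.pi * p / q| > c / (q : ℝ) ^ m) ∧
      (∀ k : ℕ, 1 ≤ k → |Real.cos (k * θ)| > c / (k : ℝ) ^ m) :=
  statement12_general θ hcosQ hcosHalf
end
end

section
/- Let θ ∈ [0,2π) with cos θ = b/(2a) ∈ ℚ∖(1/2)ℤ for coprime integers a,b with a>1, and set z = e^{iθ}. Then: (i) if q₁ and q₂ are polynomials of degree at most D with integer coefficients all lying in {0,1,…,a−1} and q₁(z) = q₂(z), then q₁ = q₂; and (ii) there exists C>0 (depending only on a) such that for every integer D > 1 there exists a nonzero polynomial q ∈ ℤ[X] of degree at most D, all of whose coefficients have absolute value at most a−1, with |q(z)| ≤ C·D·a^{1−D/2}. -/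
/-!
Two polynomials with digits in `{0, …, a - 1}` that agree at `z` differ by a polynomial vanishing
at `z` whose coefficients are smaller than `a` in absolute value. By Gauss's lemma this difference
is divisible over `ℤ` by any irreducible integer polynomial vanishing at `z`; when the leading
coefficient of the latter is at least `a`, so is that of every nonzero multiple, and the difference
is zero. For `z = e^{iθ}` the polynomial `a X² - b X + a` qualifies.

Conversely, the values at `z`, `‖z‖ ≤ 1`, of the `a ^ (D + 1)` digit polynomials of degree at most
`D` lie in a square of side `2a(D + 1)`. Cut it into `N²` subsquares with `N = a ^ ⌊D / 2⌋`: as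
`N² < a ^ (D + 1)`, two values share a subsquare, and the difference of the corresponding
polynomials is small at `z`.
-/

noncomputable section

open Polynomial

section Divisibility

theorem dvd_of_irreducible_of_aeval_eq_zero {R L : Type*} [CommRing R] [IsDomain R]
    [IsGCDMonoid R] [Field L] [Algebra R L] [FaithfulSMul R L] {p q : R[X]} {z : L}
    (hp : Irreducible p) (hpz : aeval z p = 0) (hqz : aeval z q = 0) : p ∣ q := by
  let K := FractionRing R
  let : Algebra K L := FractionRing.liftAlgebra R L
  have hdeg : p.natDegree ≠ 0 := by
    intro h
    obtain ⟨c, rfl⟩ := natDegree_eq_zero.1 h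
    rw [aeval_C, FaithfulSMul.algebraMap_eq_zero_iff] at hpz
    exact hp.ne_zero (by rw [hpz, C_0])
  have hprim : p.IsPrimitive := hp.isPrimitive hdeg
  have hpK : Irreducible (p.map (algebraMap R K)) :=
    hprim.irreducible_iff_irreducible_map_fraction_map.1 hp
  apply hprim.dvd_of_fraction_map_dvd_fraction_map (K := K)
  apply (hpK.dvd_iff_aeval_eq_zero (b := z) _).1
  · rwa [aeval_map_algebraMap]
  · rwa [aeval_map_algebraMap]

theorem eq_zero_of_dvd_of_abs_leadingCoeff_lt {p q : ℤ[X]} (hpq : p ∣ q)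
    (h : |q.leadingCoeff| < |p.leadingCoeff|) : q = 0 :=
  leadingCoeff_eq_zero.1 <|
    Int.eq_zero_of_abs_lt_dvd ((abs_dvd _ _).2 (leadingCoeff_dvd_leadingCoeff hpq)) h

theorem injOn_aeval_of_irreducible {L : Type*} [Field L] [CharZero L] {a : ℤ} {p : ℤ[X]} {z : L}
    (hp : Irreducible p) (hpa : a ≤ |p.leadingCoeff|) (hpz : aeval z p = 0) :
    Set.InjOn (aeval z) {q : ℤ[X] | ∀ j, q.coeff j ∈ Set.Ico 0 a} := by
  intro q₁ hq₁ q₂ hq₂ heq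
  have hdvd : p ∣ q₁ - q₂ :=
    dvd_of_irreducible_of_aeval_eq_zero hp hpz (by rw [map_sub, heq, sub_self])
  refine sub_eq_zero.1 (eq_zero_of_dvd_of_abs_leadingCoeff_lt hdvd (lt_of_lt_of_le ?_ hpa))
  rw [leadingCoeff, coeff_sub]
  exact abs_sub_lt_of_nonneg_of_lt (hq₁ _).1 (hq₁ _).2 (hq₂ _).1 (hq₂ _).2

end Divisibility

section Quadratic

theorem isPrimitive_quadratic {R : Type*} [CommRing R] {a b : R} (hab : IsCoprime a b) (c : R) :
    (C a * X ^ 2 + C b * X + C c).IsPrimitive := by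
  intro r hr
  rw [C_dvd_iff_dvd_coeff] at hr
  exact hab.isUnit_of_dvd' (by simpa using hr 2) (by simpa [coeff_X, coeff_C] using hr 1)

theorem irreducible_quadratic_of_discrim_ne_sq {K : Type*} [Field K] {a b c : K} (ha : a ≠ 0)
    (h : ∀ s, discrim a b c ≠ s ^ 2) : Irreducible (C a * X ^ 2 + C b * X + C c) := by
  apply irreducible_of_degree_le_three_of_not_isRoot
  · simp [natDegree_quadratic ha]
  · intro x hx
    refine quadratic_ne_zero_of_discrim_ne_sq h x ?_
    simpa [sq] using hx

theorem irreducible_int_quadratic_of_discrim_neg {a b c : ℤ} (hab : IsCoprime a b)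
    (h : discrim a b c < 0) : Irreducible (C a * X ^ 2 + C b * X + C c) := by
  have ha : a ≠ 0 := by
    rintro rfl
    simp only [discrim] at h
    nlinarith [sq_nonneg b]
  have hdiscrim (s : ℚ) : discrim (a : ℚ) b c ≠ s ^ 2 := by
    have : discrim (a : ℚ) b c < 0 := by simp only [discrim] at h ⊢; exact_mod_cast h
    exact (this.trans_le (sq_nonneg s)).ne
  rw [IsPrimitive.Int.irreducible_iff_irreducible_map_cast (isPrimitive_quadratic hab c)]
  simpa using irreducible_quadratic_of_discrim_ne_sq (Int.cast_ne_zero.2 ha) hdiscrim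

theorem discrim_neg_of_cos_eq {θ : ℝ} {a b : ℤ} (ha : 1 < a) (hab : IsCoprime a b)
    (hcos : Real.cos θ = b / (2 * a)) : discrim a (-b) a < 0 := by
  have hle : b ^ 2 ≤ (2 * a) ^ 2 := by
    have h2a : (0 : ℝ) < 2 * a := by exact_mod_cast (by omega : 0 < 2 * a)
    have hcos_sq := Real.cos_sq_le_one θ
    rw [hcos, div_pow, div_le_one (pow_pos h2a 2)] at hcos_sq
    exact_mod_cast hcos_sq
  have hne : b ^ 2 ≠ (2 * a) ^ 2 := by
    intro h
    have hunit : IsUnit a :=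
      (hab.pow_right (n := 2)).isUnit_of_dvd' dvd_rfl (h ▸ ⟨4 * a, by ring⟩)
    rcases Int.isUnit_iff.1 hunit with h | h <;> omega
  have := lt_of_le_of_ne hle hne
  rw [discrim]
  linarith

theorem exp_mul_I_sq_sub_two_mul_cos_mul_exp_add_one (θ : ℂ) :
    Complex.exp (θ * Complex.I) ^ 2 - 2 * Complex.cos θ * Complex.exp (θ * Complex.I) + 1 = 0 := by
  rw [Complex.exp_mul_I]
  linear_combination Complex.sin θ ^ 2 * Complex.I_sq - Complex.sin_sq_add_cos_sq θ

theorem aeval_exp_mul_I_eq_zero_of_cos_eq {θ : ℝ} {a b : ℤ} (ha : a ≠ 0)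
    (hcos : Real.cos θ = b / (2 * a)) :
    aeval (Complex.exp (θ * Complex.I)) (C a * X ^ 2 + C (-b) * X + C a) = 0 := by
  have hb : (b : ℂ) = 2 * a * Complex.cos θ := by
    rw [← Complex.ofReal_cos, hcos]
    push_cast
    field_simp
  simp only [map_add, map_mul, map_pow, map_neg, map_intCast, aeval_X, eq_intCast, hb]
  linear_combination (a : ℂ) * exp_mul_I_sq_sub_two_mul_cos_mul_exp_add_one θ

end Quadratic

section Pigeonhole

variable {K : Type*} [Field K] [LinearOrder K] [IsStrictOrderedRing K] [FloorRing K]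

theorem abs_sub_lt_of_floor_div_eq {x y w : K} (hw : 0 < w) (h : ⌊x / w⌋ = ⌊y / w⌋) :
    |x - y| < w := by
  have := Int.abs_sub_lt_one_of_floor_eq_floor h
  rwa [← sub_div, abs_div, abs_of_pos hw, div_lt_one hw] at this

theorem floor_div_div_mem_Ico {x L : K} {N : ℕ} (hN : N ≠ 0) (hx : x ∈ Set.Ico 0 L) :
    ⌊x / (L / N)⌋ ∈ Finset.Ico (0 : ℤ) N := by
  have hL : 0 < L := hx.1.trans_lt hx.2
  have hN' : (0 : K) < N := by positivity
  rw [Finset.mem_Ico, Int.floor_nonneg, Int.floor_lt, Int.cast_natCast,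
    div_lt_iff₀ (by positivity), mul_div_cancel₀ _ hN'.ne']
  exact ⟨div_nonneg hx.1 (by positivity), hx.2⟩

theorem exists_ne_forall_abs_sub_lt_of_pow_lt_card {ι κ : Type*} [Fintype ι] [Fintype κ]
    {f : ι → κ → K} {c L : κ → K} (hf : ∀ i k, f i k ∈ Set.Ico (c k) (c k + L k)) {N : ℕ}
    (hN : N ≠ 0) (hcard : N ^ Fintype.card κ < Fintype.card ι) :
    ∃ i j, i ≠ j ∧ ∀ k, |f i k - f j k| < L k / N := by
  classical
  let cell (i : ι) (k : κ) : ℤ := ⌊(f i k - c k) / (L k / N)⌋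
  have hoffset (i k) : f i k - c k ∈ Set.Ico 0 (L k) :=
    ⟨sub_nonneg.2 (hf i k).1, sub_lt_iff_lt_add'.2 (hf i k).2⟩
  obtain ⟨i, -, j, -, hij, hcell⟩ := Finset.exists_ne_map_eq_of_card_lt_of_maps_to
    (s := Finset.univ) (t := Fintype.piFinset fun _ : κ ↦ Finset.Ico (0 : ℤ) N) (f := cell)
    (by simpa using hcard)
    (fun i _ ↦ Fintype.mem_piFinset.2 fun k ↦ floor_div_div_mem_Ico hN (hoffset i k))
  refine ⟨i, j, hij, fun k ↦ ?_⟩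
  have hL : 0 < L k := (hoffset i k).1.trans_lt (hoffset i k).2
  simpa using abs_sub_lt_of_floor_div_eq (by positivity) (congrFun hcell k)

theorem exists_ne_norm_sub_lt_of_sq_lt_card {ι : Type*} [Fintype ι] {f : ι → ℂ} {M : ℝ}
    (hf : ∀ i, ‖f i‖ < M) {N : ℕ} (hN : N ≠ 0) (hcard : N ^ 2 < Fintype.card ι) :
    ∃ i j, i ≠ j ∧ ‖f i - f j‖ < 4 * M / N := by
  have mem_Ico {x : ℝ} (hx : |x| < M) : x ∈ Set.Ico (-M) (-M + 2 * M) := by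
    rw [abs_lt] at hx
    exact ⟨hx.1.le, by linarith⟩
  obtain ⟨i, j, hij, h⟩ := exists_ne_forall_abs_sub_lt_of_pow_lt_card (N := N)
    (f := fun i ↦ ![(f i).re, (f i).im]) (c := fun _ ↦ -M) (L := fun _ ↦ 2 * M)
    (fun i ↦ Fin.forall_fin_two.2 ⟨mem_Ico ((Complex.abs_re_le_norm _).trans_lt (hf i)),
      mem_Ico ((Complex.abs_im_le_norm _).trans_lt (hf i))⟩)
    hN (by simpa using hcard)
  refine ⟨i, j, hij, ?_⟩
  calc ‖f i - f j‖ ≤ |(f i - f j).re| + |(f i - f j).im| := Complex.norm_le_abs_re_add_abs_im _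
    _ < 2 * M / N + 2 * M / N := add_lt_add (h 0) (h 1)
    _ = 4 * M / N := by ring

end Pigeonhole

theorem norm_aeval_le_of_abs_coeff_le {A : Type*} [SeminormedRing A] [NormOneClass A] {z : A}
    (hz : ‖z‖ ≤ 1) {q : ℤ[X]} {n : ℕ} (hn : q.natDegree < n) {B : ℝ}
    (hB : ∀ i, |(q.coeff i : ℝ)| ≤ B) : ‖aeval z q‖ ≤ n * B := by
  rw [aeval_eq_sum_range' hn]
  calc ‖∑ i ∈ Finset.range n, q.coeff i • z ^ i‖ ≤ ∑ _i ∈ Finset.range n, B := by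
        refine norm_sum_le_of_le _ fun i _ ↦ (norm_zsmul_le _ _).trans ?_
        have hzi : ‖z ^ i‖ ≤ 1 := (norm_pow_le z i).trans (pow_le_one₀ (norm_nonneg z) hz)
        rw [Int.norm_eq_abs]
        exact (mul_le_of_le_one_right (abs_nonneg _) hzi).trans (hB i)
    _ = n * B := by simp

section DigitPolynomial

variable {a n : ℕ}

/-- The integer polynomial `∑ i < n, v i * X ^ i` whose coefficients are the base-`a` digits
`v 0, …, v (n - 1)`. -/
def digitPolynomial (v : Fin n → Fin a) : ℤ[X] :=
  ofFn n fun i ↦ ((v i : ℕ) : ℤ)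

theorem digitPolynomial_injective :
    Function.Injective (digitPolynomial : (Fin n → Fin a) → ℤ[X]) := by
  intro v w h
  funext i
  exact Fin.ext (by exact_mod_cast congrFun (injective_ofFn n h) i)

theorem natDegree_digitPolynomial_lt (hn : n ≠ 0) (v : Fin n → Fin a) :
    (digitPolynomial v).natDegree < n :=
  ofFn_natDegree_lt (Nat.one_le_iff_ne_zero.2 hn) _

theorem coeff_digitPolynomial_mem_Ico (ha : a ≠ 0) (v : Fin n → Fin a) (i : ℕ) :
    (digitPolynomial v).coeff i ∈ Set.Ico (0 : ℤ) a := by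
  rw [digitPolynomial]
  rcases lt_or_ge i n with hi | hi
  · rw [ofFn_coeff_eq_val_of_lt _ hi]
    exact ⟨by positivity, by exact_mod_cast (v ⟨i, hi⟩).isLt⟩
  · rw [ofFn_coeff_eq_zero_of_ge _ hi]
    exact ⟨le_rfl, by positivity⟩

theorem norm_aeval_digitPolynomial_lt {A : Type*} [SeminormedRing A] [NormOneClass A] {z : A}
    (hz : ‖z‖ ≤ 1) (ha : a ≠ 0) (hn : n ≠ 0) (v : Fin n → Fin a) :
    ‖aeval z (digitPolynomial v)‖ < n * a := by
  have hcoeff (i : ℕ) : |((digitPolynomial v).coeff i : ℝ)| ≤ a - 1 := by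
    obtain ⟨hnonneg, hlt⟩ := coeff_digitPolynomial_mem_Ico ha v i
    rw [abs_of_nonneg (by exact_mod_cast hnonneg)]
    exact_mod_cast Int.le_sub_one_of_lt hlt
  calc ‖aeval z (digitPolynomial v)‖ ≤ n * (a - 1) :=
        norm_aeval_le_of_abs_coeff_le hz (natDegree_digitPolynomial_lt hn v) hcoeff
    _ < n * a := by gcongr; exact sub_one_lt _

end DigitPolynomial

section SmallValues

variable {z : ℂ}

theorem exists_ne_zero_norm_aeval_lt_of_sq_lt_pow (hz : ‖z‖ ≤ 1) {a n N : ℕ} (hN : N ≠ 0)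
    (hcard : N ^ 2 < a ^ n) :
    ∃ q : ℤ[X], q ≠ 0 ∧ q.natDegree < n ∧ (∀ j, |q.coeff j| < a) ∧
      ‖aeval z q‖ < 4 * (n * a) / N := by
  have hone_lt : 1 < a ^ n := (Nat.one_le_pow 2 N (Nat.pos_of_ne_zero hN)).trans_lt hcard
  have hn : n ≠ 0 := by rintro rfl; simp at hone_lt
  have ha : a ≠ 0 := by rintro rfl; simp [hn] at hone_lt
  obtain ⟨v, w, hvw, hnorm⟩ := exists_ne_norm_sub_lt_of_sq_lt_card
    (f := fun v : Fin n → Fin a ↦ aeval z (digitPolynomial v))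
    (norm_aeval_digitPolynomial_lt hz ha hn) hN (by simpa using hcard)
  refine ⟨digitPolynomial v - digitPolynomial w, sub_ne_zero.2 (digitPolynomial_injective.ne hvw),
    ?_, fun j ↦ ?_, by rwa [map_sub]⟩
  · exact (natDegree_sub_le _ _).trans_lt
      (max_lt (natDegree_digitPolynomial_lt hn v) (natDegree_digitPolynomial_lt hn w))
  · have hv := coeff_digitPolynomial_mem_Ico ha v j
    have hw := coeff_digitPolynomial_mem_Ico ha w j
    rw [coeff_sub]
    exact abs_sub_lt_of_nonneg_of_lt hv.1 hv.2 hw.1 hw.2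

theorem inv_pow_half_le_rpow {x : ℝ} (hx : 1 ≤ x) (D : ℕ) :
    (x ^ (D / 2))⁻¹ ≤ x ^ ((1 : ℝ) - (D : ℝ) / 2) := by
  rw [← Real.rpow_natCast, ← Real.rpow_neg (by positivity)]
  apply Real.rpow_le_rpow_of_exponent_le hx
  have : (D : ℝ) ≤ 2 * (D / 2 : ℕ) + 1 := by exact_mod_cast (by omega : D ≤ 2 * (D / 2) + 1)
  linarith

theorem exists_ne_zero_norm_aeval_le_rpow (hz : ‖z‖ ≤ 1) {a D : ℕ} (ha : 1 < a) (hD : D ≠ 0) :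
    ∃ q : ℤ[X], q ≠ 0 ∧ q.natDegree ≤ D ∧ (∀ j, |q.coeff j| < a) ∧
      ‖aeval z q‖ ≤ 8 * a * D * (a : ℝ) ^ ((1 : ℝ) - (D : ℝ) / 2) := by
  have hcard : (a ^ (D / 2)) ^ 2 < a ^ (D + 1) := by
    rw [← pow_mul]
    exact Nat.pow_lt_pow_right ha (by omega)
  obtain ⟨q, hq, hdeg, hcoeff, hnorm⟩ :=
    exists_ne_zero_norm_aeval_lt_of_sq_lt_pow hz (by positivity) hcard
  refine ⟨q, hq, Nat.lt_succ_iff.1 hdeg, hcoeff, hnorm.le.trans ?_⟩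
  have hD' : (1 : ℝ) ≤ D := by exact_mod_cast Nat.one_le_iff_ne_zero.2 hD
  push_cast
  calc 4 * ((D + 1) * a) / (a : ℝ) ^ (D / 2)
      ≤ 4 * ((D + D) * a) / (a : ℝ) ^ (D / 2) := by gcongr
    _ = 8 * a * D * ((a : ℝ) ^ (D / 2))⁻¹ := by ring
    _ ≤ 8 * a * D * (a : ℝ) ^ ((1 : ℝ) - (D : ℝ) / 2) := by
      gcongr
      exact inv_pow_half_le_rpow (by exact_mod_cast ha.le) D

end SmallValues

theorem statement13_general {a : ℤ} (ha : 1 < a) {p : ℤ[X]} (hp : Irreducible p)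
    (hpa : a ≤ |p.leadingCoeff|) {z : ℂ} (hpz : aeval z p = 0) (hz : ‖z‖ ≤ 1) :
    Set.InjOn (aeval z) {q : ℤ[X] | ∀ j, q.coeff j ∈ Set.Ico 0 a} ∧
    ∀ D : ℕ, D ≠ 0 → ∃ q : ℤ[X], q ≠ 0 ∧ q.natDegree ≤ D ∧ (∀ j, |q.coeff j| ≤ a - 1) ∧
      ‖aeval z q‖ ≤ 8 * a * D * (a : ℝ) ^ ((1 : ℝ) - (D : ℝ) / 2) := by
  refine ⟨injOn_aeval_of_irreducible hp hpa hpz, fun D hD ↦ ?_⟩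
  lift a to ℕ using by omega
  simp only [Int.le_sub_one_iff, Int.cast_natCast]
  exact exists_ne_zero_norm_aeval_le_rpow hz (by exact_mod_cast ha) hD

/-- Let `cos θ = b/(2a)` with `a, b` coprime, `a > 1`, and `z = e^{iθ}`.
(i) Evaluation at `z` is injective on polynomials with coefficients in `{0, …, a-1}` of
bounded degree; (ii) pigeonholing produces a nonzero polynomial of degree at most `D`,
coefficients of absolute value at most `a - 1`, with `|q(z)| ≤ C D a^{1 - D/2}`. -/
theorem statement13 (θ : ℝ) (hθ : θ ∈ Set.Ico 0 (2 * Real.pi))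
    (a b : ℤ) (ha : 1 < a) (hab : IsCoprime a b)
    (hcos : Real.cos θ = (b : ℝ) / (2 * a))
    (z : ℂ) (hz : z = Complex.exp ((θ : ℂ) * Complex.I)) :
    (∀ D : ℕ, ∀ q₁ q₂ : Polynomial ℤ, q₁.natDegree ≤ D → q₂.natDegree ≤ D →
      (∀ j, 0 ≤ q₁.coeff j ∧ q₁.coeff j < a) → (∀ j, 0 ≤ q₂.coeff j ∧ q₂.coeff j < a) →
      Polynomial.aeval z q₁ = Polynomial.aeval z q₂ → q₁ = q₂) ∧
    (∃ C > 0, ∀ D : ℕ, 1 < D → ∃ q : Polynomial ℤ, q ≠ 0 ∧ q.natDegree ≤ D ∧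
      (∀ j, |q.coeff j| ≤ a - 1) ∧
      ‖Polynomial.aeval z q‖ ≤ C * D * (a : ℝ) ^ ((1 : ℝ) - (D : ℝ) / 2)) := by
  obtain ⟨hinj, hsmall⟩ := statement13_general ha
    (irreducible_int_quadratic_of_discrim_neg hab.neg_right (discrim_neg_of_cos_eq ha hab hcos))
    (by rw [leadingCoeff_quadratic (by omega)]; exact le_abs_self a)
    (aeval_exp_mul_I_eq_zero_of_cos_eq (by omega) hcos) (Complex.norm_exp_ofReal_mul_I θ).le
  subst hz
  exact ⟨fun _ _ _ _ _ h₁ h₂ h ↦ hinj h₁ h₂ h, 8 * a, by positivity,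
    fun D hD ↦ hsmall D (by omega)⟩
end
end

section
/- Let θ ∈ [0,2π) with cos θ = b/(2a) ∈ ℚ∖(1/2)ℤ for coprime integers a,b with a>1, and set z = e^{iθ}. Then for every integer D ≥ 0 and every nonzero polynomial q ∈ ℤ[X] of degree at most D all of whose coefficients lie in {0,1,…,a−1}, one has |q(z)| ≥ a^{−D/2}. -/
/-!
The point `z = e^{iθ}` is a nonreal root of the primitive polynomial `p = aX² - bX + a`, whose
other root is the conjugate of `z`. By Gauss's lemma `q(z) = 0` forces `p ∣ q`, which is impossible
when `a` does not divide the leading coefficient of `q`. So `Res(p, q)` is a nonzero integer, and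
evaluating it as a product over the roots of `p` gives `1 ≤ |Res(p, q)| = a ^ D * |q(z)|²`; the
exponent is `D` rather than `deg q` because the resultant treats `q` as having formal degree `D`.
-/

noncomputable section

section Polynomials

open Polynomial ComplexConjugate

theorem algebraMap_resultant_eq_prod_aeval {R K : Type*} [CommRing R] [CommRing K] [IsDomain K]
    [Algebra R K] [FaithfulSMul R K] {p q : R[X]} {n : ℕ} (hq : q.natDegree ≤ n)
    (hp : (p.map (algebraMap R K)).Splits) :
    algebraMap R K (p.resultant q p.natDegree n) =
      algebraMap R K p.leadingCoeff ^ n * ((p.aroots K).map fun x ↦ aeval x q).prod := by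
  have hinj := FaithfulSMul.algebraMap_injective R K
  have h := resultant_eq_prod_eval _ (q.map (algebraMap R K)) n (natDegree_map_le.trans hq) hp
  rw [natDegree_map_eq_of_injective hinj, leadingCoeff_map_of_injective hinj,
    resultant_map_map] at h
  simpa only [eval_map_algebraMap] using h

theorem one_le_abs_leadingCoeff_pow_mul_prod_norm_aeval {p q : ℤ[X]} {n : ℕ}
    (hp : p ≠ 0) (hq : q.natDegree ≤ n) (hroots : ∀ x ∈ p.aroots ℂ, aeval x q ≠ 0) :
    1 ≤ |(p.leadingCoeff : ℝ)| ^ n * ((p.aroots ℂ).map fun x ↦ ‖aeval x q‖).prod := by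
  have hres := algebraMap_resultant_eq_prod_aeval hq (IsAlgClosed.splits (p.map (algebraMap ℤ ℂ)))
  rw [eq_intCast, eq_intCast] at hres
  have hne : p.resultant q p.natDegree n ≠ 0 := by
    rw [← Int.cast_ne_zero (α := ℂ), hres]
    refine mul_ne_zero (pow_ne_zero _ (by simpa using hp)) (Multiset.prod_ne_zero ?_)
    simpa using hroots
  have hnorm := congrArg norm hres
  rw [norm_mul, norm_pow, Complex.norm_intCast, Complex.norm_intCast, ← normHom_apply,
    map_multiset_prod, Multiset.map_map] at hnorm
  exact (by exact_mod_cast Int.one_le_abs hne : (1 : ℝ) ≤ _).trans_eq hnorm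

section Conjugation

variable {R : Type*} [CommRing R] [Algebra R ℝ] [Algebra R ℂ] [IsScalarTower R ℝ ℂ]

theorem aeval_conj_of_isScalarTower (p : R[X]) (z : ℂ) :
    aeval (conj z) p = conj (aeval z p) :=
  aeval_algHom_apply (Complex.conjAe.toAlgHom.restrictScalars R) z p

theorem aroots_eq_pair_conj_of_natDegree_eq_two [FaithfulSMul R ℂ] {p : R[X]} {z : ℂ}
    (hdeg : p.natDegree = 2) (hz : aeval z p = 0) (him : z.im ≠ 0) :
    p.aroots ℂ = {z, conj z} := by
  have hp : p.map (algebraMap R ℂ) ≠ 0 :=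
    (Polynomial.map_ne_zero_iff (FaithfulSMul.algebraMap_injective R ℂ)).2
      (ne_zero_of_natDegree_gt (hdeg.symm ▸ two_pos))
  have hne : z ≠ conj z := fun h ↦ him (Complex.conj_eq_iff_im.1 h.symm)
  refine (Multiset.eq_of_le_of_card_le ((Multiset.le_iff_subset (by simpa using hne)).2 ?_) ?_).symm
  · simp [Multiset.subset_iff, hp, hz, aeval_conj_of_isScalarTower]
  · exact ((card_roots' _).trans natDegree_map_le).trans hdeg.le

end Conjugation

theorem one_le_abs_leadingCoeff_pow_mul_norm_aeval_sq {p q : ℤ[X]} {z : ℂ} {n : ℕ}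
    (hdeg : p.natDegree = 2) (hz : aeval z p = 0) (him : z.im ≠ 0)
    (hq : q.natDegree ≤ n) (hqz : aeval z q ≠ 0) :
    1 ≤ |(p.leadingCoeff : ℝ)| ^ n * ‖aeval z q‖ ^ 2 := by
  have hroots := aroots_eq_pair_conj_of_natDegree_eq_two hdeg hz him
  have h := one_le_abs_leadingCoeff_pow_mul_prod_norm_aeval (p := p) (q := q)
    (ne_zero_of_natDegree_gt (hdeg.symm ▸ two_pos)) hq
    (by simpa [hroots, aeval_conj_of_isScalarTower] using hqz)
  simpa [hroots, aeval_conj_of_isScalarTower, ← sq] using h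

theorem dvd_of_map_dvd_map_of_isPrimitive {K : Type*} [Field K] [CharZero K] {p q : ℤ[X]}
    (hp : p.IsPrimitive) (h : p.map (Int.castRingHom K) ∣ q.map (Int.castRingHom K)) : p ∣ q := by
  rw [IsPrimitive.Int.dvd_iff_map_cast_dvd_map_cast p q hp, ← map_dvd_map' (algebraMap ℚ K),
    Polynomial.map_map, Polynomial.map_map]
  rwa [RingHom.ext_int ((algebraMap ℚ K).comp (Int.castRingHom ℚ)) (Int.castRingHom K)]

theorem dvd_of_aeval_eq_zero_of_natDegree_eq_two {p q : ℤ[X]} {z : ℂ} (hp : p.IsPrimitive)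
    (hdeg : p.natDegree = 2) (hz : aeval z p = 0) (him : z.im ≠ 0) (hqz : aeval z q = 0) :
    p ∣ q := by
  let s : ℝ[X] := X ^ 2 - C (2 * z.re) * X + C (‖z‖ ^ 2)
  have dvd_map {f : ℤ[X]} (hf : aeval z f = 0) : s ∣ f.map (Int.castRingHom ℝ) :=
    quadratic_dvd_of_aeval_eq_zero_im_ne_zero _ ((aeval_map_algebraMap ℝ z f).trans hf) him
  have hs : s.natDegree = 2 := by
    simp only [s]
    compute_degree!
  have hassoc : Associated s (p.map (Int.castRingHom ℝ)) :=
    associated_of_dvd_of_natDegree_le (dvd_map hz)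
      ((Polynomial.map_ne_zero_iff Int.cast_injective).2 hp.ne_zero)
      (natDegree_map_le.trans (hdeg.trans hs.symm).le)
  exact dvd_of_map_dvd_map_of_isPrimitive hp (hassoc.dvd_iff_dvd_left.1 (dvd_map hqz))

theorem aeval_ne_zero_of_not_dvd_leadingCoeff {p q : ℤ[X]} {z : ℂ} (hp : p.IsPrimitive)
    (hdeg : p.natDegree = 2) (hz : aeval z p = 0) (him : z.im ≠ 0)
    (hlead : ¬p.leadingCoeff ∣ q.leadingCoeff) : aeval z q ≠ 0 := fun hqz ↦
  hlead (leadingCoeff_dvd_leadingCoeff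
    (dvd_of_aeval_eq_zero_of_natDegree_eq_two hp hdeg hz him hqz))

/-- The polynomial `aX² - bX + a`, which has `e^{iθ}` as a root when `2a cos θ = b`. The middle
coefficient is written as `+ C (-b)` to match Mathlib's normal form of quadratic polynomials. -/
def unitCircleQuadratic (a b : ℤ) : ℤ[X] := C a * X ^ 2 + C (-b) * X + C a

namespace unitCircleQuadratic

theorem natDegree_eq {a : ℤ} (ha : a ≠ 0) (b : ℤ) : (unitCircleQuadratic a b).natDegree = 2 :=
  natDegree_quadratic ha

theorem leadingCoeff_eq {a : ℤ} (ha : a ≠ 0) (b : ℤ) :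
    (unitCircleQuadratic a b).leadingCoeff = a :=
  leadingCoeff_quadratic ha

theorem isPrimitive {a b : ℤ} (hab : IsCoprime a b) : (unitCircleQuadratic a b).IsPrimitive := by
  intro r hr
  rw [C_dvd_iff_dvd_coeff] at hr
  have h_dvd_a : r ∣ a := by simpa [unitCircleQuadratic, -eq_intCast] using hr 0
  have h_dvd_b : r ∣ b := by
    simpa [unitCircleQuadratic, coeff_X, coeff_C, -eq_intCast, -map_neg] using hr 1
  exact hab.isUnit_of_dvd' h_dvd_a h_dvd_b

theorem aeval_exp {θ : ℝ} {a b : ℤ} (hcos : 2 * a * Real.cos θ = b) :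
    aeval (Complex.exp (θ * Complex.I)) (unitCircleQuadratic a b) = 0 := by
  have hb : (b : ℂ) = 2 * a * Complex.cos θ := by exact_mod_cast hcos.symm
  have hexp : Complex.exp (θ * Complex.I) * Complex.exp (-θ * Complex.I) = 1 := by
    rw [← Complex.exp_add, neg_mul, add_neg_cancel, Complex.exp_zero]
  simp only [unitCircleQuadratic, map_add, map_mul, map_pow, aeval_X, aeval_C, algebraMap_int_eq,
    Int.coe_castRingHom, Int.cast_neg, hb, Complex.cos]
  linear_combination -(a : ℂ) * hexp

end unitCircleQuadratic

end Polynomials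

theorem sin_ne_zero_of_two_mul_cos_eq {θ : ℝ} {a b : ℤ} (ha : ¬IsUnit a) (hab : IsCoprime a b)
    (hcos : 2 * a * Real.cos θ = b) : Real.sin θ ≠ 0 := by
  intro hsin
  have hcos_sq : Real.cos θ ^ 2 = 1 := by
    simpa only [hsin, zero_pow two_ne_zero, zero_add] using Real.sin_sq_add_cos_sq θ
  have hb_sq : b ^ 2 = a * (4 * a) := by
    have : (b : ℝ) ^ 2 = a * (4 * a) := by
      rw [← hcos, mul_pow, hcos_sq]
      ring
    exact_mod_cast this
  exact ha (hab.pow_right.isUnit_of_dvd' dvd_rfl ⟨4 * a, hb_sq⟩)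

theorem rpow_neg_div_two_le_of_one_le_pow_mul_sq {a x : ℝ} {n : ℕ} (ha : 0 < a) (hx : 0 ≤ x)
    (h : 1 ≤ a ^ n * x ^ 2) : a ^ (-(n : ℝ) / 2) ≤ x := by
  have hsq : (a ^ (-(n : ℝ) / 2)) ^ 2 = (a ^ n)⁻¹ := by
    rw [← Real.rpow_mul_natCast ha.le, Nat.cast_two, div_mul_cancel₀ _ two_ne_zero,
      Real.rpow_neg ha.le, Real.rpow_natCast]
  rwa [← sq_le_sq₀ (Real.rpow_nonneg ha.le _) hx, hsq, inv_le_iff_one_le_mul₀' (pow_pos ha n)]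

theorem statement14_general {θ : ℝ} {a b : ℤ} (ha : 0 < a) (hab : IsCoprime a b)
    (hcos : Real.cos θ = b / (2 * a)) {D : ℕ} {q : Polynomial ℤ} (hD : q.natDegree ≤ D)
    (hlead : ¬a ∣ q.leadingCoeff) :
    (a : ℝ) ^ (-(D : ℝ) / 2) ≤ ‖Polynomial.aeval (Complex.exp (θ * Complex.I)) q‖ := by
  have haR : (0 : ℝ) < a := by exact_mod_cast ha
  have hcos' : 2 * a * Real.cos θ = b := by rw [hcos, mul_div_cancel₀ _ (by positivity)]
  have him : (Complex.exp (θ * Complex.I)).im ≠ 0 := by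
    rw [Complex.exp_ofReal_mul_I_im]
    exact sin_ne_zero_of_two_mul_cos_eq (fun hunit ↦ hlead hunit.dvd) hab hcos'
  have hdeg := unitCircleQuadratic.natDegree_eq ha.ne' b
  have hlc := unitCircleQuadratic.leadingCoeff_eq ha.ne' b
  have hroot := unitCircleQuadratic.aeval_exp hcos'
  have hqz := aeval_ne_zero_of_not_dvd_leadingCoeff (unitCircleQuadratic.isPrimitive hab) hdeg
    hroot him (hlc.symm ▸ hlead)
  have hbound := one_le_abs_leadingCoeff_pow_mul_norm_aeval_sq hdeg hroot him hD hqz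
  rw [hlc, abs_of_pos haR] at hbound
  exact rpow_neg_div_two_le_of_one_le_pow_mul_sq haR (norm_nonneg _) hbound

/-- Let `cos θ = b/(2a)` with `a, b` coprime, `a > 1`, and `z = e^{iθ}`.
Every nonzero integer polynomial of degree at most `D` with coefficients in `{0, …, a-1}`
satisfies `|q(z)| ≥ a^{-D/2}`. -/
theorem statement14 (θ : ℝ) (hθ : θ ∈ Set.Ico 0 (2 * Real.pi))
    (a b : ℤ) (ha : 1 < a) (hab : IsCoprime a b)
    (hcos : Real.cos θ = (b : ℝ) / (2 * a))
    (z : ℂ) (hz : z = Complex.exp ((θ : ℂ) * Complex.I)) :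
    ∀ D : ℕ, ∀ q : Polynomial ℤ, q ≠ 0 → q.natDegree ≤ D →
      (∀ j, 0 ≤ q.coeff j ∧ q.coeff j < a) →
      ‖Polynomial.aeval z q‖ ≥ (a : ℝ) ^ (-(D : ℝ) / 2) := by
  intro D q hq hD hcoeff
  have hlead : ¬a ∣ q.leadingCoeff := fun hdvd ↦ Polynomial.leadingCoeff_ne_zero.2 hq
    (Int.eq_zero_of_dvd_of_nonneg_of_lt (hcoeff _).1 (hcoeff _).2 hdvd)
  exact hz ▸ statement14_general (by lia) hab hcos hD hlead
end
end

section
/- Let θ ∈ [0,2π) with cos θ ∈ ℚ∖(1/2)ℤ. Then there exist constants c ∈ (0,1) and C>0 such that for all sufficiently large n ∈ ℕ, all real r with n^C < r < exp(c·n), all φ ∈ ℝ, and all j ∈ {1,…,n}, there exists an integer j' with j ≤ j' ≤ j + C·log r such that d(r·cos(j'θ + φ), ℤ) > c. -/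
noncomputable section

open Filter

/-! Suppose `x k = r cos (kθ + φ)` stays within `c` of integers `m k` for `k` in a window of length
about `2T`. With `2 cos θ = p / q` in lowest terms, `q x (k+2) + q x k = p x (k+1)`; if `c` is small
the integers `m k` satisfy the same recurrence, since its two sides are then integers that differ by
less than `1`. Coprimality forces an extra factor `q` into the inner terms at each step towards the
middle of the window, so the two middle terms are divisible by `q ^ T`. As `q ≥ 2`, some
`T = O(log r)` makes `q ^ T` exceed them, hence they vanish, and two consecutive values of
`r cos (kθ + φ)` are at most `c` in absolute value. This contradicts `sin θ ≠ 0` once `r` is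
large. -/

theorem sum_intCast_mul_eq_zero_of_sum_abs_lt_one {ι R : Type*} [Ring R] [LinearOrder R]
    [IsStrictOrderedRing R] {s : Finset ι} {a m : ι → ℤ} {x : ι → R}
    (hx : ∑ i ∈ s, a i * x i = 0) (h : ∑ i ∈ s, |(a i : R)| * |x i - m i| < 1) :
    ∑ i ∈ s, a i * m i = 0 := by
  rw [← Int.abs_lt_one_iff, ← Int.cast_lt (R := R)]
  calc ((|∑ i ∈ s, a i * m i| : ℤ) : R)
      = |∑ i ∈ s, a i * (x i - m i)| := by
        simp only [mul_sub, Finset.sum_sub_distrib, hx, zero_sub, abs_neg, Int.cast_abs,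
          Int.cast_sum, Int.cast_mul]
    _ ≤ ∑ i ∈ s, |(a i : R)| * |x i - m i| := by
        simpa only [abs_mul] using Finset.abs_sum_le_sum_abs (fun i ↦ (a i : R) * (x i - m i)) s
    _ < ((1 : ℤ) : R) := by rwa [Int.cast_one]

theorem pow_dvd_of_three_term_recurrence {R : Type*} [CommSemiring R] {p q : R}
    (hpq : IsCoprime q p) {m : ℕ → R} {N : ℕ}
    (hrec : ∀ k, k + 2 ≤ N → q * m (k + 2) + q * m k = p * m (k + 1)) :
    ∀ {t k : ℕ}, t ≤ k → k + t ≤ N → q ^ t ∣ m k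
  | 0, _, _, _ => by simp
  | t + 1, 0, h, _ => by simp at h
  | t + 1, k + 1, htk, hkt => by
    have ih : ∀ i ≥ t, i + t ≤ N → q ^ t ∣ m i := fun i h h' ↦
      pow_dvd_of_three_term_recurrence hpq hrec h h'
    have hdvd : q ^ (t + 1) ∣ p * m (k + 1) := by
      rw [← hrec k (by lia), pow_succ']
      exact dvd_add (mul_dvd_mul_left q (ih (k + 2) (by lia) (by lia)))
        (mul_dvd_mul_left q (ih k (by lia) (by lia)))
    exact hpq.pow_left.dvd_of_dvd_mul_left hdvd

theorem round_three_term_recurrence {p q : ℤ} {u v w ε : ℝ} (hrec : q * w + q * u = p * v)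
    (hε : ε * (2 * |(q : ℝ)| + |(p : ℝ)|) < 1) (hu : |u - round u| ≤ ε)
    (hv : |v - round v| ≤ ε) (hw : |w - round w| ≤ ε) :
    q * round w + q * round u = p * round v := by
  have hsum : ∑ i, ![q, -p, q] i * ![round u, round v, round w] i = 0 := by
    apply sum_intCast_mul_eq_zero_of_sum_abs_lt_one (x := ![u, v, w])
    · simp only [Fin.sum_univ_three, Matrix.cons_val_zero, Matrix.cons_val_one, Matrix.cons_val,
        Int.cast_neg, neg_mul]
      linarith
    · simp only [Fin.sum_univ_three, Matrix.cons_val_zero, Matrix.cons_val_one, Matrix.cons_val,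
        Int.cast_neg, abs_neg]
      calc |(q : ℝ)| * |u - round u| + |(p : ℝ)| * |v - round v| + |(q : ℝ)| * |w - round w|
          ≤ |(q : ℝ)| * ε + |(p : ℝ)| * ε + |(q : ℝ)| * ε := by gcongr
        _ = ε * (2 * |(q : ℝ)| + |(p : ℝ)|) := by ring
        _ < 1 := hε
  simp only [Fin.sum_univ_three, Matrix.cons_val_zero, Matrix.cons_val_one, Matrix.cons_val,
    neg_mul] at hsum
  linarith

theorem abs_le_of_three_term_recurrence {p q : ℤ} {x : ℕ → ℝ} {ε : ℝ} {N : ℕ}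
    (hpq : IsCoprime q p) (hrec : ∀ k, k + 2 ≤ N → q * x (k + 2) + q * x k = p * x (k + 1))
    (hε : ε * (2 * |(q : ℝ)| + |(p : ℝ)|) < 1) (hx : ∀ k ≤ N, |x k - round (x k)| ≤ ε)
    {t k : ℕ} (htk : t ≤ k) (hkt : k + t ≤ N) (hlt : |x k| + ε < (q : ℝ) ^ t) :
    |x k| ≤ ε := by
  have hxk := hx k (by lia)
  have hdvd : q ^ t ∣ round (x k) :=
    pow_dvd_of_three_term_recurrence hpq (m := fun i ↦ round (x i))
      (fun i hi ↦ round_three_term_recurrence (hrec i hi) hε (hx i (by lia)) (hx (i + 1) (by lia))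
        (hx (i + 2) hi)) htk hkt
  have hround_lt : |(round (x k) : ℝ)| < (q : ℝ) ^ t := by
    linarith [abs_sub_abs_le_abs_sub (round (x k) : ℝ) (x k), abs_sub_comm (x k) (round (x k))]
  have hround : round (x k) = 0 :=
    Int.eq_zero_of_abs_lt_dvd hdvd (mod_cast hround_lt)
  simpa [hround] using hxk

theorem abs_sin_le_abs_cos_add_abs_cos (θ α : ℝ) :
    |Real.sin θ| ≤ |Real.cos α| + |Real.cos (α + θ)| :=
  calc |Real.sin θ|
      = |Real.sin (α + θ) * Real.cos α - Real.cos (α + θ) * Real.sin α| := by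
        rw [← Real.sin_sub, add_sub_cancel_left]
    _ ≤ |Real.sin (α + θ)| * |Real.cos α| + |Real.cos (α + θ)| * |Real.sin α| := by
        simpa only [abs_mul] using
          abs_sub (Real.sin (α + θ) * Real.cos α) (Real.cos (α + θ) * Real.sin α)
    _ ≤ 1 * |Real.cos α| + |Real.cos (α + θ)| * 1 := by
        gcongr <;> exact Real.abs_sin_le_one _
    _ = |Real.cos α| + |Real.cos (α + θ)| := by ring

theorem sin_ne_zero_of_forall_cos_ne_intCast_div_two {θ : ℝ}
    (hcos : ∀ k : ℤ, Real.cos θ ≠ (k : ℝ) / 2) : Real.sin θ ≠ 0 := fun hsin ↦ by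
  rcases Real.sin_eq_zero_iff_cos_eq.mp hsin with h | h
  · exact hcos 2 (by rw [h]; norm_num)
  · exact hcos (-2) (by rw [h]; norm_num)

theorem exists_lt_abs_sub_round_mul_cos {p q : ℤ} {θ r ε : ℝ} {T : ℕ} (hpq : IsCoprime q p)
    (hcos : q * (2 * Real.cos θ) = p) (hε : ε * (2 * |(q : ℝ)| + |(p : ℝ)|) < 1)
    (hr : 0 ≤ r) (hsin : 2 * ε < r * |Real.sin θ|) (hT : r + ε < (q : ℝ) ^ T) (φ : ℝ) :
    ∃ k ≤ 2 * T + 1,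
      ε < |r * Real.cos (k * θ + φ) - round (r * Real.cos (k * θ + φ))| := by
  by_contra! hnear
  set x : ℕ → ℝ := fun k ↦ r * Real.cos (k * θ + φ) with hx
  have hrec (k : ℕ) : q * x (k + 2) + q * x k = p * x (k + 1) := by
    have hprod := Real.two_mul_cos_mul_cos (k * θ + φ + θ) θ
    have h₂ : ((k + 2 : ℕ) : ℝ) * θ + φ = k * θ + φ + θ + θ := by push_cast; ring
    have h₁ : ((k + 1 : ℕ) : ℝ) * θ + φ = k * θ + φ + θ := by push_cast; ring
    rw [add_sub_cancel_right] at hprod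
    simp only [hx, h₂, h₁, ← hcos]
    linear_combination -(q * r) * hprod
  have habs (k : ℕ) : |x k| = r * |Real.cos (k * θ + φ)| := by rw [abs_mul, abs_of_nonneg hr]
  have hsmall (k : ℕ) (hTk : T ≤ k) (hkT : k ≤ T + 1) : |x k| ≤ ε := by
    refine abs_le_of_three_term_recurrence hpq (fun k _ ↦ hrec k) hε hnear hTk (by lia)
      (hT.trans_le' ?_)
    rw [habs]
    gcongr
    exact mul_le_of_le_one_right hr (Real.abs_cos_le_one _)
  have hle : r * |Real.sin θ| ≤ |x T| + |x (T + 1)| := by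
    have hshift : ((T + 1 : ℕ) : ℝ) * θ + φ = T * θ + φ + θ := by push_cast; ring
    rw [habs, habs, hshift, ← mul_add]
    gcongr
    exact abs_sin_le_abs_cos_add_abs_cos _ _
  linarith [hsmall T le_rfl (by lia), hsmall (T + 1) (by lia) le_rfl]

theorem exists_pos_eventually_exists_add_one_le_pow {b : ℝ} (hb : 1 < b) :
    ∃ C > 0, ∀ᶠ r in atTop, ∃ T : ℕ, r + 1 ≤ b ^ T ∧ 2 * T + 1 ≤ C * Real.log r := by
  have hlogb : 0 < Real.log b := Real.log_pos hb
  refine ⟨4 / Real.log b + 1, by positivity, ?_⟩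
  filter_upwards [eventually_ge_atTop 2, Real.tendsto_log_atTop.eventually_ge_atTop 3]
    with r hr hlog
  have hr_le_sq : r + 1 ≤ r ^ 2 := by nlinarith
  have hlogr : Real.logb b (r + 1) ≤ 2 / Real.log b * Real.log r :=
    calc Real.logb b (r + 1) ≤ Real.logb b (r ^ 2) :=
          Real.logb_le_logb_of_le hb (by linarith) hr_le_sq
      _ = 2 / Real.log b * Real.log r := by
          rw [Real.logb_pow, Real.logb]; push_cast; ring
  refine ⟨⌈Real.logb b (r + 1)⌉₊, ?_, ?_⟩
  · rw [← Real.rpow_natCast, ← Real.logb_le_iff_le_rpow hb (by linarith)]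
    exact Nat.le_ceil _
  · have hceil := Nat.ceil_lt_add_one (Real.logb_nonneg hb (by linarith : 1 ≤ r + 1))
    have hexpand : (4 / Real.log b + 1) * Real.log r
        = 2 * (2 / Real.log b * Real.log r) + Real.log r := by ring
    linarith

theorem exists_isCoprime_mul_eq_of_forall_ne_intCast {y : ℝ} (hrat : ∃ s : ℚ, y = s)
    (hnotint : ∀ k : ℤ, y ≠ k) :
    ∃ p q : ℤ, 1 < q ∧ IsCoprime q p ∧ q * y = p := by
  obtain ⟨s, rfl⟩ := hrat
  refine ⟨s.num, s.den, ?_, ?_, mod_cast s.den_mul_eq_num⟩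
  · have hden : s.den ≠ 1 := fun h ↦ hnotint s.num (mod_cast (Rat.den_eq_one_iff s).mp h |>.symm)
    have := s.pos
    lia
  · exact (Int.isCoprime_iff_gcd_eq_one.mpr (by simpa [Int.gcd] using s.reduced)).symm

theorem statement15_general (θ : ℝ) (hcosQ : ∃ q : ℚ, Real.cos θ = (q : ℝ))
    (hcosHalf : ∀ k : ℤ, Real.cos θ ≠ (k : ℝ) / 2) :
    ∃ c : ℝ, 0 < c ∧ c < 1 ∧ ∃ C > 0, ∀ᶠ r : ℝ in atTop, ∀ φ : ℝ, ∀ j : ℕ,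
      ∃ j' : ℕ, j ≤ j' ∧ (j' : ℝ) ≤ (j : ℝ) + C * Real.log r ∧
        ∀ m : ℤ, |r * Real.cos ((j' : ℝ) * θ + φ) - (m : ℝ)| > c := by
  have hsin : Real.sin θ ≠ 0 := sin_ne_zero_of_forall_cos_ne_intCast_div_two hcosHalf
  obtain ⟨p, q, hq, hpq, hcos⟩ :
      ∃ p q : ℤ, 1 < q ∧ IsCoprime q p ∧ q * (2 * Real.cos θ) = p :=
    exists_isCoprime_mul_eq_of_forall_ne_intCast (hcosQ.imp' (2 * ·) fun s hs ↦ by simp [hs])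
      fun k hk ↦ hcosHalf k (by linarith)
  have hden : 1 < 2 * |(q : ℝ)| + |(p : ℝ)| + 1 := by
    have hq₀ : (0 : ℝ) < |(q : ℝ)| := abs_pos.mpr (mod_cast (zero_lt_one.trans hq).ne')
    linarith [abs_nonneg (p : ℝ)]
  set c : ℝ := (2 * |(q : ℝ)| + |(p : ℝ)| + 1)⁻¹
  have hc₀ : 0 < c := by positivity
  have hc₁ : c < 1 := inv_lt_one_of_one_lt₀ hden
  have hcε : c * (2 * |(q : ℝ)| + |(p : ℝ)|) < 1 := by
    linarith [inv_mul_cancel₀ (zero_lt_one.trans hden).ne']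
  obtain ⟨C, hC, hpow⟩ := exists_pos_eventually_exists_add_one_le_pow (b := q) (mod_cast hq)
  refine ⟨c, hc₀, hc₁, C, hC, ?_⟩
  filter_upwards [hpow, eventually_ge_atTop 0,
    (tendsto_id.atTop_mul_const (abs_pos.mpr hsin)).eventually_gt_atTop (2 * c)]
    with r ⟨T, hT, hTC⟩ hr hrsin φ j
  obtain ⟨k, hk, hlt⟩ := exists_lt_abs_sub_round_mul_cos hpq hcos hcε hr hrsin
    (by linarith) (j * θ + φ)
  refine ⟨j + k, by lia, ?_, fun m ↦ ?_⟩
  · have hkT : (k : ℝ) ≤ 2 * T + 1 := mod_cast hk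
    push_cast
    linarith
  · have hshift : ((j + k : ℕ) : ℝ) * θ + φ = k * θ + (j * θ + φ) := by push_cast; ring
    rw [hshift]
    exact hlt.trans_le (round_le _ m)

/-- For `cos θ ∈ ℚ ∖ ½ℤ`, for large `n`, `n^C < r < exp(cn)`, any `φ`
and any `j ∈ {1, …, n}`, there is `j' ∈ [j, j + C log r]` with
`d(r cos(j'θ + φ), ℤ) > c`. -/
theorem statement15 (θ : ℝ) (hθ : θ ∈ Set.Ico 0 (2 * Real.pi))
    (hcosQ : ∃ q : ℚ, Real.cos θ = (q : ℝ))
    (hcosHalf : ∀ k : ℤ, Real.cos θ ≠ (k : ℝ) / 2) :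
    ∃ c : ℝ, 0 < c ∧ c < 1 ∧ ∃ C > 0, ∃ n₀ : ℕ, ∀ n : ℕ, n₀ ≤ n →
      ∀ r : ℝ, (n : ℝ) ^ C < r → r < Real.exp (c * n) →
      ∀ φ : ℝ, ∀ j : ℕ, 1 ≤ j → j ≤ n →
        ∃ j' : ℕ, j ≤ j' ∧ (j' : ℝ) ≤ (j : ℝ) + C * Real.log r ∧
          ∀ m : ℤ, |r * Real.cos ((j' : ℝ) * θ + φ) - (m : ℝ)| > c := by
  obtain ⟨c, hc₀, hc₁, C, hC, hlarge⟩ := statement15_general θ hcosQ hcosHalf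
  obtain ⟨n₀, hn₀⟩ := eventually_atTop.mp <|
    ((tendsto_rpow_atTop hC).comp tendsto_natCast_atTop_atTop).eventually
      (eventually_forall_ge_atTop.mpr hlarge)
  exact ⟨c, hc₀, hc₁, C, hC, n₀, fun n hn r hr _ φ j _ _ ↦ hn₀ n hn r hr.le φ j⟩
end
end

section
/- Let a > 1 and b ≠ 0 be coprime integers, let p be a prime dividing a, let K ∈ ℕ, and let j₀ ∈ ℤ. Suppose (y_j) are real numbers satisfying the recurrence y_{j+1} + y_{j−1} = (b/a)·y_j for all j with |j − j₀| ≤ K−1, and (m_j) are integers with |y_j − m_j| < 1/(4a|b|) for all j with |j − j₀| ≤ K. Then m_{j₀} is divisible by p^{K·v_p(a)}, where v_p(a) is the p-adic valuation of a (in particular this holds trivially if m_{j₀} = 0). -/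
/-!
Clear denominators: `a * (y (j + 1) + y (j - 1)) - b * y j = 0`. Replacing each `y i` by the
integer `m i` changes the left-hand side by less than `1`, and the result is an integer, so the
`m j` satisfy the same recurrence exactly. As `a` is coprime to `b`, the recurrence shows that every
power of `a` dividing both `m (j + 1)` and `m (j - 1)` can be raised by one to divide `m j`.
Iterating from the edge of the window to its center, one gains a factor `a` per step.
-/

theorem sum_mul_eq_zero_of_abs_sub_intCast_le {ι R : Type*} [Ring R] [LinearOrder R]
    [IsStrictOrderedRing R] {s : Finset ι} {c n : ι → ℤ} {x : ι → R} {δ : R}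
    (hδ : (∑ i ∈ s, |(c i : R)|) * δ < 1) (hxn : ∀ i ∈ s, |x i - n i| ≤ δ)
    (hx : ∑ i ∈ s, c i * x i = 0) : ∑ i ∈ s, c i * n i = 0 := by
  have hlt : |((∑ i ∈ s, c i * n i : ℤ) : R)| < 1 := by
    calc |((∑ i ∈ s, c i * n i : ℤ) : R)|
        = |∑ i ∈ s, c i * (x i - n i)| := by
          simp only [mul_sub, Finset.sum_sub_distrib, hx, zero_sub, abs_neg, Int.cast_sum,
            Int.cast_mul]
      _ ≤ ∑ i ∈ s, |c i * (x i - n i)| := Finset.abs_sum_le_sum_abs _ _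
      _ ≤ ∑ i ∈ s, |(c i : R)| * δ := by
          refine Finset.sum_le_sum fun i hi ↦ ?_
          rw [abs_mul]
          exact mul_le_mul_of_nonneg_left (hxn i hi) (abs_nonneg _)
      _ < 1 := by rwa [← Finset.sum_mul]
  exact Int.abs_lt_one_iff.mp (mod_cast hlt)

theorem mul_add_eq_mul_of_abs_sub_intCast_le {R : Type*} [CommRing R] [LinearOrder R]
    [IsStrictOrderedRing R] {a b k l n : ℤ} {x y z δ : R}
    (hδ : (2 * |(a : R)| + |(b : R)|) * δ < 1)
    (hx : |x - k| ≤ δ) (hy : |y - l| ≤ δ) (hz : |z - n| ≤ δ)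
    (h : a * (x + z) = b * y) : a * (k + n) = b * l := by
  have hcoeff : (|(a : R)| + |(b : R)| + |(a : R)|) * δ < 1 := by linarith
  have hxyz : a * x + -(b * y) + a * z = 0 := by linear_combination h
  have hsum : ∑ i, ![a, -b, a] i * ![k, l, n] i = 0 :=
    sum_mul_eq_zero_of_abs_sub_intCast_le (x := ![x, y, z]) (δ := δ)
      (by simpa [Fin.sum_univ_three] using hcoeff)
      (by simp [Fin.forall_fin_succ, hx, hy, hz])
      (by simpa [Fin.sum_univ_three] using hxyz)
  have hkln : a * k + -(b * l) + a * n = 0 := by simpa [Fin.sum_univ_three] using hsum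
  linear_combination hkln

theorem two_mul_abs_add_abs_mul_one_div_lt_one {F : Type*} [Field F] [LinearOrder F]
    [IsStrictOrderedRing F] {a b : ℤ} (ha : 0 < a) (hb : b ≠ 0) :
    (2 * |(a : F)| + |(b : F)|) * (1 / (4 * a * |(b : F)|)) < 1 := by
  have ha₁ : (1 : F) ≤ a := mod_cast ha
  have hb₁ : (1 : F) ≤ |(b : F)| := mod_cast Int.one_le_abs hb
  rw [abs_of_pos (by positivity), mul_one_div, div_lt_one (by positivity)]
  have hleft : (a : F) ≤ a * |(b : F)| := le_mul_of_one_le_right (by positivity) hb₁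
  have hright : |(b : F)| ≤ a * |(b : F)| := le_mul_of_one_le_left (by positivity) ha₁
  linarith

theorem pow_dvd_of_forall_mul_add_eq_mul {R : Type*} [CommSemiring R] {a b : R}
    (hab : IsCoprime a b) {m : ℤ → R} {K : ℕ} {j₀ : ℤ}
    (hm : ∀ j : ℤ, |j - j₀| ≤ (K : ℤ) - 1 → a * (m (j + 1) + m (j - 1)) = b * m j) :
    a ^ K ∣ m j₀ := by
  induction K generalizing j₀ with
  | zero => simp
  | succ K ih =>
    have hright : a ^ K ∣ m (j₀ + 1) := ih fun j hj ↦ hm j (by rw [abs_le] at hj ⊢; lia)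
    have hleft : a ^ K ∣ m (j₀ - 1) := ih fun j hj ↦ hm j (by rw [abs_le] at hj ⊢; lia)
    have hmul : a ^ (K + 1) ∣ b * m j₀ := by
      rw [← hm j₀ (by simp), pow_succ']
      exact mul_dvd_mul_left a (dvd_add hright hleft)
    exact hab.pow_left.dvd_of_dvd_mul_left hmul

theorem pow_mul_padicValInt_dvd_pow (p : ℕ) (a : ℤ) (K : ℕ) :
    (p : ℤ) ^ (K * padicValInt p a) ∣ a ^ K := by
  rw [mul_comm, pow_mul]
  exact pow_dvd_pow_of_dvd (padicValInt_dvd a) K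

theorem statement17_general {F : Type*} [Field F] [LinearOrder F] [IsStrictOrderedRing F]
    {a b : ℤ} (ha : a ≠ 0) (hab : IsCoprime a b) {K : ℕ} {j₀ : ℤ} {y : ℤ → F} {m : ℤ → ℤ} {δ : F}
    (hδ : (2 * |(a : F)| + |(b : F)|) * δ < 1)
    (hrec : ∀ j : ℤ, |j - j₀| ≤ (K : ℤ) - 1 → y (j + 1) + y (j - 1) = (b / a : F) * y j)
    (happrox : ∀ j : ℤ, |j - j₀| ≤ (K : ℤ) → |y j - m j| ≤ δ) :
    a ^ K ∣ m j₀ := by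
  refine pow_dvd_of_forall_mul_add_eq_mul hab fun j hj ↦ ?_
  have hy : a * (y (j + 1) + y (j - 1)) = b * y j := by
    rw [hrec j hj]
    field_simp
  exact mul_add_eq_mul_of_abs_sub_intCast_le hδ (happrox (j + 1) (by grind))
    (happrox j (by grind)) (happrox (j - 1) (by grind)) hy

/-- If `(y_j)` satisfies the recurrence `y_{j+1} + y_{j-1} = (b/a) y_j`
on a window of radius `K - 1` around `j₀` and the integers `m_j` approximate `y_j` to
within `1/(4a|b|)` on the window of radius `K`, then `p^{K·v_p(a)} ∣ m_{j₀}` for every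
prime `p` dividing `a`. -/
theorem statement17 (a b : ℤ) (ha : 1 < a) (hb : b ≠ 0) (hab : IsCoprime a b)
    (p : ℕ) (hp : p.Prime) (hpa : (p : ℤ) ∣ a)
    (K : ℕ) (j₀ : ℤ) (y : ℤ → ℝ) (m : ℤ → ℤ)
    (hrec : ∀ j : ℤ, |j - j₀| ≤ (K : ℤ) - 1 →
      y (j + 1) + y (j - 1) = ((b : ℝ) / (a : ℝ)) * y j)
    (happrox : ∀ j : ℤ, |j - j₀| ≤ (K : ℤ) →
      |y j - (m j : ℝ)| < 1 / (4 * (a : ℝ) * |(b : ℝ)|)) :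
    (p : ℤ) ^ (K * padicValInt p a) ∣ m j₀ :=
  (pow_mul_padicValInt_dvd_pow p a K).trans <|
    statement17_general (by lia) hab (two_mul_abs_add_abs_mul_one_div_lt_one (by lia) hb) hrec
      fun j hj ↦ (happrox j hj).le
end

section
/- There exists an absolute constant C>0 with the following property. Let μ and ν be Borel probability measures on ℝ², let L ≥ 1, ε > 0 and κ > 0, and suppose that ∫_{|ξ| < L} |μ̂(ξ) − ν̂(ξ)| dξ < ε and that ν is absolutely continuous with respect to Lebesgue measure with density bounded almost everywhere by κ. Then for every r > L^{−1/4} and every x₀ ∈ ℝ², |μ(B_r(x₀)) − ν(B_r(x₀))| ≤ C·(ε·r² + L^{−3} + κ·L^{−1/2}·r²). -/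
open MeasureTheory

noncomputable section

/-- The Fourier transform (characteristic function) of a measure on `ℂ ≅ ℝ²`:
`μ̂(ξ) = ∫ exp(-i⟨ξ, x⟩) dμ(x)` with `⟨ξ, x⟩ = Re(ξ · conj x)`. -/
def measFT (μ : Measure ℂ) (ξ : ℂ) : ℂ :=
  ∫ x, Complex.exp (-(((ξ * (starRingEnd ℂ) x).re : ℝ) : ℂ) * Complex.I) ∂μ

/-!
Smoothing `μ` and `ν` by a probability measure `ρ` whose characteristic function vanishes outside
the ball of radius `L` makes the difference of the characteristic functions integrable, with
integral at most `∫ ‖ξ‖ < L, ‖μ̂ ξ - ν̂ ξ‖`; Fourier inversion against a smooth bump then compares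
the two smoothed measures on balls. Such a `ρ` exists with all moments finite, namely `‖𝓕 ψ‖²`
for a bump function `ψ`, so by Markov's inequality the smoothing moves mass by more than `δ` with
probability at most `C (L δ)⁻ᵏ`. The price is a slight enlargement of the ball, which the density
bound on `ν` controls. Changing the radius `r` by the factor `1 ± L ^ (-1/2) / 2` balances the
errors when `r > L ^ (-1/4)`.
-/

section

open Metric Module
open scoped FourierTransform SchwartzMap ContDiff NNReal ComplexConjugate RealInnerProductSpace

section Convolution

variable {E : Type*} [NormedAddCommGroup E] [SecondCountableTopology E] [MeasurableSpace E]
  [BorelSpace E] (μ ρ : Measure E) [IsProbabilityMeasure μ] [IsProbabilityMeasure ρ]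

lemma measureReal_ball_le_conv (x : E) (s δ : ℝ) :
    μ.real (ball x s) ≤ (μ ∗ ρ).real (ball x (s + δ)) + ρ.real {y | δ ≤ ‖y‖} := by
  calc μ.real (ball x s) = (μ.prod ρ).real (ball x s ×ˢ Set.univ) := by
        simp [measureReal_prod_prod]
    _ ≤ (μ.prod ρ).real ((fun p ↦ p.1 + p.2) ⁻¹' ball x (s + δ) ∪ Set.univ ×ˢ {y | δ ≤ ‖y‖}) := by
        refine measureReal_mono ?_
        rintro ⟨u, y⟩ ⟨hu, -⟩
        refine (lt_or_ge ‖y‖ δ).imp (fun hy ↦ ?_) fun hy ↦ ⟨trivial, hy⟩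
        calc dist (u + y) x ≤ dist (u + y) u + dist u x := dist_triangle _ _ _
          _ = ‖y‖ + dist u x := by simp [dist_eq_norm]
          _ < s + δ := by linarith [mem_ball.1 hu]
    _ ≤ (μ.prod ρ).real ((fun p ↦ p.1 + p.2) ⁻¹' ball x (s + δ)) +
          (μ.prod ρ).real (Set.univ ×ˢ {y | δ ≤ ‖y‖}) := measureReal_union_le _ _
    _ = (μ ∗ ρ).real (ball x (s + δ)) + ρ.real {y | δ ≤ ‖y‖} := by
        rw [Measure.conv, map_measureReal_apply (by fun_prop) measurableSet_ball]
        simp [measureReal_prod_prod]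

lemma measureReal_conv_closedBall_le (x : E) (s δ : ℝ) :
    (μ ∗ ρ).real (closedBall x s) ≤ μ.real (ball x (s + δ)) + ρ.real {y | δ ≤ ‖y‖} := by
  calc (μ ∗ ρ).real (closedBall x s)
      = (μ.prod ρ).real ((fun p ↦ p.1 + p.2) ⁻¹' closedBall x s) := by
        rw [Measure.conv, map_measureReal_apply (by fun_prop) measurableSet_closedBall]
    _ ≤ (μ.prod ρ).real (ball x (s + δ) ×ˢ Set.univ ∪ Set.univ ×ˢ {y | δ ≤ ‖y‖}) := by
        refine measureReal_mono ?_
        rintro ⟨u, y⟩ hu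
        refine (lt_or_ge ‖y‖ δ).imp (fun hy ↦ ⟨?_, trivial⟩) fun hy ↦ ⟨trivial, hy⟩
        calc dist u x ≤ dist u (u + y) + dist (u + y) x := dist_triangle _ _ _
          _ = ‖y‖ + dist (u + y) x := by simp
          _ < s + δ := by linarith [mem_closedBall.1 hu]
    _ ≤ (μ.prod ρ).real (ball x (s + δ) ×ˢ Set.univ) +
          (μ.prod ρ).real (Set.univ ×ˢ {y | δ ≤ ‖y‖}) := measureReal_union_le _ _
    _ = μ.real (ball x (s + δ)) + ρ.real {y | δ ≤ ‖y‖} := by simp [measureReal_prod_prod]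

end Convolution

lemma measureReal_le_norm_le {E : Type*} [NormedAddCommGroup E] [MeasurableSpace E]
    {ρ : Measure E} {k : ℕ} (hρ : Integrable (fun x ↦ ‖x‖ ^ k) ρ) {δ : ℝ} (hδ : 0 < δ) :
    ρ.real {x | δ ≤ ‖x‖} ≤ (∫ x, ‖x‖ ^ k ∂ρ) * (δ ^ k)⁻¹ := by
  have hpos : 0 < δ ^ k := by positivity
  rw [← div_eq_mul_inv, le_div_iff₀' hpos]
  calc δ ^ k * ρ.real {x | δ ≤ ‖x‖} ≤ δ ^ k * ρ.real {x | δ ^ k ≤ ‖x‖ ^ k} := by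
        refine mul_le_mul_of_nonneg_left (measureReal_mono (fun x hx ↦ ?_) ?_) hpos.le
        · exact pow_le_pow_left₀ hδ.le hx k
        · exact (hρ.measure_ge_lt_top hpos).ne
    _ ≤ ∫ x, ‖x‖ ^ k ∂ρ :=
        mul_meas_ge_le_integral_of_nonneg (ae_of_all _ fun x ↦ by positivity) hρ _

variable {V : Type*} [NormedAddCommGroup V] [InnerProductSpace ℝ V] [FiniteDimensional ℝ V]

/-- A smooth bump function as a complex-valued Schwartz function. -/
def schwartzBump {x : V} (b : ContDiffBump x) : 𝓢(V, ℂ) :=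
  HasCompactSupport.toSchwartzMap (f := fun y ↦ (b y : ℂ))
    (b.hasCompactSupport.comp_left Complex.ofReal_zero)
    (Complex.ofRealCLM.contDiff.comp b.contDiff)

lemma schwartzBump_apply {x : V} (b : ContDiffBump x) (y : V) : schwartzBump b y = (b y : ℂ) := rfl

variable (V) in
lemma exists_schwartzMap_support_subset_ball {R : ℝ} (hR : 0 < R) :
    ∃ ψ : 𝓢(V, ℂ), ψ ≠ 0 ∧ Function.support ψ ⊆ ball 0 R := by
  let b : ContDiffBump (0 : V) := ⟨R / 2, R, by positivity, by linarith⟩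
  refine ⟨schwartzBump b, fun h ↦ ?_, fun y hy ↦ ?_⟩
  · have h0 : schwartzBump b 0 = 0 := by rw [h, zero_apply]
    rw [schwartzBump_apply, Complex.ofReal_eq_zero] at h0
    exact (b.pos_of_mem_ball (mem_ball_self hR)).ne' h0
  · rw [← b.support_eq]
    exact fun hb ↦ hy (by rw [schwartzBump_apply, hb, Complex.ofReal_zero])

variable [MeasurableSpace V] [BorelSpace V]

section EnergySpectrum

/-- The energy spectral density measure of `ψ`, i.e. `‖𝓕 ψ x‖² dx`. Its characteristic function is
the autocorrelation of `ψ`, hence compactly supported when `ψ` is. -/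
def energySpectrum (ψ : 𝓢(V, ℂ)) : Measure V :=
  volume.withDensity fun x ↦ ‖𝓕 ψ x‖ₑ ^ 2

lemma measurable_enorm_fourier_sq (ψ : 𝓢(V, ℂ)) : Measurable fun x ↦ ‖𝓕 ψ x‖ₑ ^ 2 := by
  have := (𝓕 ψ).continuous.measurable
  fun_prop

lemma integral_energySpectrum (ψ : 𝓢(V, ℂ)) (f : V → ℂ) :
    ∫ x, f x ∂energySpectrum ψ = ∫ x, ‖𝓕 ψ x‖ ^ 2 • f x := by
  rw [energySpectrum, integral_withDensity_eq_integral_toReal_smul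
    (measurable_enorm_fourier_sq ψ) (ae_of_all _ fun x ↦ by simp)]
  simp

lemma integrable_norm_pow_energySpectrum (ψ : 𝓢(V, ℂ)) (k : ℕ) :
    Integrable (fun x ↦ ‖x‖ ^ k) (energySpectrum ψ) := by
  rw [energySpectrum, integrable_withDensity_iff (measurable_enorm_fourier_sq ψ)
    (ae_of_all _ fun x ↦ by simp)]
  simp only [ENNReal.toReal_pow, toReal_enorm]
  obtain ⟨C, -, hC⟩ := (𝓕 ψ).decay 0 0
  refine (((𝓕 ψ).integrable_pow_mul volume k).mul_const C).mono'
    (by have := (𝓕 ψ).continuous; fun_prop) (ae_of_all _ fun x ↦ ?_)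
  have hx : ‖𝓕 ψ x‖ ≤ C := by simpa using hC x
  simp only [norm_mul, norm_pow, norm_norm, sq, ← mul_assoc]
  gcongr

instance isFiniteMeasure_energySpectrum (ψ : 𝓢(V, ℂ)) : IsFiniteMeasure (energySpectrum ψ) := by
  have : Integrable (fun _ ↦ (1 : ℝ)) (energySpectrum ψ) := by
    simpa using integrable_norm_pow_energySpectrum ψ 0
  exact (integrable_const_iff_isFiniteMeasure one_ne_zero).1 this

lemma energySpectrum_ne_zero {ψ : 𝓢(V, ℂ)} (hψ : ψ ≠ 0) : energySpectrum ψ ≠ 0 := by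
  contrapose! hψ
  rw [energySpectrum, withDensity_eq_zero_iff (measurable_enorm_fourier_sq ψ).aemeasurable] at hψ
  have hzero : (𝓕 ψ : 𝓢(V, ℂ)) =ᵐ[volume] (0 : V → ℂ) := hψ.mono fun x hx ↦ by simpa using hx
  have h : 𝓕 ψ = 0 := DFunLike.coe_injective <|
    ((𝓕 ψ).continuous.ae_eq_iff_eq volume continuous_zero).1 hzero
  exact (FourierTransform.fourierEquiv ℂ 𝓢(V, ℂ)).map_eq_zero_iff.1 h

lemma fourier_compSubConstCLM (ψ : 𝓢(V, ℂ)) (a x : V) :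
    𝓕 (ψ.compSubConstCLM ℂ a) x = Real.fourierChar (-⟪a, x⟫) • 𝓕 ψ x := by
  have h := congrFun (VectorFourier.fourierIntegral_comp_add_right Real.fourierChar volume
    (innerₗ V) ψ (-a)) x
  rw [map_neg, LinearMap.neg_apply, innerₗ_apply_apply] at h
  have hcomp : ⇑(ψ.compSubConstCLM ℂ a) = ψ ∘ fun v ↦ v + -a := by
    ext v
    simp [sub_eq_add_neg]
  rw [SchwartzMap.fourier_coe, SchwartzMap.fourier_coe, hcomp]
  exact h

lemma charFun_energySpectrum (ψ : 𝓢(V, ℂ)) (t : V) :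
    charFun (energySpectrum ψ) t = ∫ v, conj (ψ v) * ψ (v + (2 * Real.pi)⁻¹ • t) := by
  set a := (2 * Real.pi)⁻¹ • t
  have hphase (x : V) : (Real.fourierChar (-⟪-a, x⟫) : ℂ) = Complex.exp (⟪x, t⟫ * Complex.I) := by
    rw [Real.fourierChar_apply, inner_neg_left, neg_neg, real_inner_smul_left, real_inner_comm]
    congr 2
    push_cast
    field_simp
  calc charFun (energySpectrum ψ) t
      = ∫ x, inner ℂ (𝓕 ψ x) (𝓕 (ψ.compSubConstCLM ℂ (-a)) x) := by
        rw [charFun_apply, integral_energySpectrum]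
        congr 1 with x
        rw [fourier_compSubConstCLM, Circle.smul_def, hphase]
        simp [← Complex.mul_conj']
        ring
    _ = ∫ v, conj (ψ v) * ψ (v + a) := by
        rw [SchwartzMap.integral_inner_fourier_fourier]
        simp [mul_comm]

lemma charFun_energySpectrum_eq_zero {ψ : 𝓢(V, ℂ)} {R : ℝ} (hψ : Function.support ψ ⊆ ball 0 R)
    {t : V} (ht : 4 * Real.pi * R ≤ ‖t‖) : charFun (energySpectrum ψ) t = 0 := by
  rw [charFun_energySpectrum]
  refine integral_eq_zero_of_ae (ae_of_all _ fun v ↦ ?_)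
  by_contra h
  obtain ⟨hv, hva⟩ := mul_ne_zero_iff.1 h
  have hv' : ‖v‖ < R := by simpa using hψ ((map_ne_zero _).1 hv)
  have hva' : ‖v + (2 * Real.pi)⁻¹ • t‖ < R := by simpa using hψ hva
  have ht' : ‖(2 * Real.pi)⁻¹ • t‖ < 2 * R := by
    have := norm_sub_le (v + (2 * Real.pi)⁻¹ • t) v
    rw [add_sub_cancel_left] at this
    linarith
  rw [norm_smul, Real.norm_of_nonneg (by positivity), inv_mul_lt_iff₀ (by positivity)] at ht'
  linarith

end EnergySpectrum

section BandLimited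

variable (V)

lemma exists_isProbabilityMeasure_charFun_eq_zero :
    ∃ ρ : Measure V, IsProbabilityMeasure ρ ∧ (∀ k : ℕ, Integrable (fun x ↦ ‖x‖ ^ k) ρ) ∧
      ∀ t, 1 ≤ ‖t‖ → charFun ρ t = 0 := by
  obtain ⟨ψ, hψ, hsupp⟩ := exists_schwartzMap_support_subset_ball V
    (R := (4 * Real.pi)⁻¹) (by positivity)
  set σ := energySpectrum ψ
  have : NeZero σ := ⟨energySpectrum_ne_zero hψ⟩
  have hσ : (σ Set.univ)⁻¹ ≠ ⊤ := by simpa using NeZero.ne σ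
  refine ⟨(σ Set.univ)⁻¹ • σ, inferInstance,
    fun k ↦ (integrable_norm_pow_energySpectrum ψ k).smul_measure hσ, fun t ht ↦ ?_⟩
  have ht' : charFun σ t = 0 := charFun_energySpectrum_eq_zero hsupp (by field_simp; exact ht)
  rw [charFun_apply, integral_smul_measure, ← charFun_apply, ht', smul_zero]

lemma exists_isProbabilityMeasure_charFun_eq_zero_of_le_norm (k : ℕ) :
    ∃ A : ℝ, 0 ≤ A ∧ ∀ L > 0, ∃ ρ : Measure V, IsProbabilityMeasure ρ ∧
      (∀ t, L ≤ ‖t‖ → charFun ρ t = 0) ∧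
      ∀ δ > 0, ρ.real {x | δ ≤ ‖x‖} ≤ A * ((L * δ) ^ k)⁻¹ := by
  obtain ⟨ρ, _, hmoment, hcharFun⟩ := exists_isProbabilityMeasure_charFun_eq_zero V
  refine ⟨∫ x, ‖x‖ ^ k ∂ρ, by positivity, fun L hL ↦
    ⟨ρ.map (L⁻¹ • ·), Measure.isProbabilityMeasure_map (by fun_prop), fun t ht ↦ ?_,
      fun δ hδ ↦ ?_⟩⟩
  · rw [charFun_map_smul]
    refine hcharFun _ ?_
    rwa [norm_smul, norm_inv, Real.norm_of_nonneg hL.le, le_inv_mul_iff₀ hL, mul_one]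
  · have hpre : (L⁻¹ • ·) ⁻¹' {x : V | δ ≤ ‖x‖} = {x | L * δ ≤ ‖x‖} := by
      ext x
      simp [norm_smul, abs_of_pos hL, le_inv_mul_iff₀ hL]
    rw [map_measureReal_apply (by fun_prop) (measurableSet_le measurable_const measurable_norm),
      hpre]
    exact measureReal_le_norm_le (hmoment k) (by positivity)

end BandLimited

section FourierInversion

lemma integral_fourier_eq_integral_mul_charFun (μ : Measure V) [IsFiniteMeasure μ] {f : V → ℂ}
    (hf : Integrable f) :
    ∫ x, 𝓕 f x ∂μ = ∫ ξ, f ξ * charFun μ (-(2 * Real.pi) • ξ) := by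
  have h := VectorFourier.integral_fourierIntegral_smul_eq_flip (L := innerₗ V) (ν := μ)
    (g := (1 : V → ℂ)) Real.continuous_fourierChar continuous_inner hf (integrable_const 1)
  have hξ (ξ : V) : (-(2 * Real.pi)⁻¹) • (-(2 * Real.pi)) • ξ = ξ := by
    rw [smul_smul, neg_mul_neg, inv_mul_cancel₀ (by positivity), one_smul]
  simp only [flip_innerₗ, Pi.one_apply, smul_eq_mul, mul_one] at h
  simp only [charFun_eq_fourierIntegral', hξ]
  exact h

lemma integral_eq_integral_fourierInv_mul_charFun (μ : Measure V) [IsFiniteMeasure μ]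
    (f : 𝓢(V, ℂ)) :
    ∫ x, f x ∂μ = ∫ ξ, 𝓕⁻ f ξ * charFun μ (-(2 * Real.pi) • ξ) := by
  rw [← integral_fourier_eq_integral_mul_charFun μ (𝓕⁻ f).integrable, ← SchwartzMap.fourier_coe,
    FourierTransform.fourier_fourierInv_eq]

lemma norm_integral_sub_integral_le {μ ν : Measure V} [IsFiniteMeasure μ] [IsFiniteMeasure ν]
    (hμν : Integrable fun t ↦ charFun μ t - charFun ν t) (f : 𝓢(V, ℂ)) :
    ‖∫ x, f x ∂μ - ∫ x, f x ∂ν‖ ≤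
      ((2 * Real.pi) ^ finrank ℝ V)⁻¹ * (∫ x, ‖f x‖) * ∫ t, ‖charFun μ t - charFun ν t‖ := by
  have hint (μ : Measure V) [IsFiniteMeasure μ] :
      Integrable fun ξ ↦ 𝓕⁻ f ξ * charFun μ (-(2 * Real.pi) • ξ) :=
    (𝓕⁻ f).integrable.mul_bdd (c := μ.real Set.univ)
      (measurable_charFun.comp (measurable_const_smul _)).aestronglyMeasurable
      (ae_of_all _ fun ξ ↦ norm_charFun_le _)
  rw [integral_eq_integral_fourierInv_mul_charFun, integral_eq_integral_fourierInv_mul_charFun,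
    ← integral_sub (hint μ) (hint ν)]
  calc ‖∫ ξ, (𝓕⁻ f ξ * charFun μ (-(2 * Real.pi) • ξ) - 𝓕⁻ f ξ * charFun ν (-(2 * Real.pi) • ξ))‖
      ≤ ∫ ξ, (∫ x, ‖f x‖) *
          ‖charFun μ (-(2 * Real.pi) • ξ) - charFun ν (-(2 * Real.pi) • ξ)‖ := by
        refine norm_integral_le_of_norm_le
          ((hμν.comp_smul (neg_ne_zero.2 (by positivity))).norm.const_mul _)
          (ae_of_all _ fun ξ ↦ ?_)
        rw [← mul_sub, norm_mul]
        gcongr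
        exact VectorFourier.norm_fourierIntegral_le_integral_norm _ _ _ _ _
    _ = _ := by
        rw [integral_const_mul, Measure.integral_comp_smul volume
          (fun t ↦ ‖charFun μ t - charFun ν t‖), abs_inv, abs_pow, abs_neg,
          abs_of_pos Real.two_pi_pos, smul_eq_mul]
        ring

lemma measureReal_closedBall_le_of_integrable_charFun_sub {μ ν : Measure V} [IsFiniteMeasure μ]
    [IsFiniteMeasure ν] (hμν : Integrable fun t ↦ charFun μ t - charFun ν t) (x : V) {s t : ℝ}
    (hs : 0 < s) (hst : s < t) :
    μ.real (closedBall x s) ≤ ν.real (closedBall x t) + ((2 * Real.pi) ^ finrank ℝ V)⁻¹ *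
      volume.real (closedBall x t) * ∫ t, ‖charFun μ t - charFun ν t‖ := by
  let b : ContDiffBump x := ⟨s, t, hs, hst⟩
  have hb := norm_integral_sub_integral_le hμν (schwartzBump b)
  simp only [schwartzBump_apply, integral_complex_ofReal, ← Complex.ofReal_sub, Complex.norm_real,
    Real.norm_of_nonneg b.nonneg] at hb
  calc μ.real (closedBall x s) ≤ ∫ y, b y ∂μ := b.measure_closedBall_le_integral μ
    _ ≤ ∫ y, b y ∂ν + ((2 * Real.pi) ^ finrank ℝ V)⁻¹ * (∫ y, b y) *
          ∫ t, ‖charFun μ t - charFun ν t‖ := by linarith [le_of_abs_le hb]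
    _ ≤ _ := by
        gcongr
        · exact b.integral_le_measure_closedBall ν
        · exact b.integral_le_measure_closedBall volume

end FourierInversion

section Smoothing

lemma integrableOn_charFun_sub {μ ν : Measure V} [IsFiniteMeasure μ] [IsFiniteMeasure ν]
    {S : Set V} (hS : volume S < ⊤) : IntegrableOn (fun t ↦ charFun μ t - charFun ν t) S :=
  .of_bound hS (measurable_charFun.sub measurable_charFun).aestronglyMeasurable
    (μ.real Set.univ + ν.real Set.univ)
    (ae_of_all _ fun t ↦ norm_sub_le_of_le (norm_charFun_le t) (norm_charFun_le t))

variable {μ ν ρ : Measure V} [IsProbabilityMeasure μ] [IsProbabilityMeasure ν]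
  [IsProbabilityMeasure ρ] {L : ℝ}

lemma integrable_charFun_conv_sub (hρ : ∀ t, L ≤ ‖t‖ → charFun ρ t = 0) :
    Integrable fun t ↦ charFun (μ ∗ ρ) t - charFun (ν ∗ ρ) t := by
  have hsupp : (Function.support fun t ↦ charFun (μ ∗ ρ) t - charFun (ν ∗ ρ) t) ⊆ ball 0 L := by
    intro t ht
    by_contra h
    exact ht (by simp [charFun_conv, hρ t (by simpa using h)])
  rw [← integrableOn_iff_integrable_of_support_subset hsupp]
  exact integrableOn_charFun_sub measure_ball_lt_top

lemma integral_norm_charFun_conv_sub_le (hρ : ∀ t, L ≤ ‖t‖ → charFun ρ t = 0) :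
    ∫ t, ‖charFun (μ ∗ ρ) t - charFun (ν ∗ ρ) t‖ ≤
      ∫ t in ball 0 L, ‖charFun μ t - charFun ν t‖ := by
  rw [← integral_indicator measurableSet_ball]
  refine integral_mono (integrable_charFun_conv_sub hρ).norm
    (IntegrableOn.integrable_indicator (integrableOn_charFun_sub measure_ball_lt_top).norm
      measurableSet_ball) fun t ↦ ?_
  simp only [charFun_conv, ← sub_mul, norm_mul]
  by_cases ht : t ∈ ball 0 L
  · rw [Set.indicator_of_mem ht]
    exact mul_le_of_le_one_right (norm_nonneg _) (norm_charFun_le_one t)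
  · rw [Set.indicator_of_notMem ht, hρ t (by simpa using ht), norm_zero, mul_zero]

lemma measureReal_ball_le_of_charFun_eq_zero (hρ : ∀ t, L ≤ ‖t‖ → charFun ρ t = 0) (x : V)
    {s δ : ℝ} (hs : 0 < s) (hδ : 0 < δ) :
    μ.real (ball x s) ≤ ν.real (ball x (s + 3 * δ)) + 2 * ρ.real {y | δ ≤ ‖y‖} +
      ((2 * Real.pi) ^ finrank ℝ V)⁻¹ * volume.real (closedBall x (s + 2 * δ)) *
        ∫ t in ball 0 L, ‖charFun μ t - charFun ν t‖ := by
  have hμ := measureReal_ball_le_conv μ ρ x s δ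
  have hν := measureReal_conv_closedBall_le ν ρ x (s + 2 * δ) δ
  rw [show s + 2 * δ + δ = s + 3 * δ by ring] at hν
  have hconv : (μ ∗ ρ).real (ball x (s + δ)) ≤ (ν ∗ ρ).real (closedBall x (s + 2 * δ)) +
      ((2 * Real.pi) ^ finrank ℝ V)⁻¹ * volume.real (closedBall x (s + 2 * δ)) *
        ∫ t in ball 0 L, ‖charFun μ t - charFun ν t‖ :=
    calc (μ ∗ ρ).real (ball x (s + δ)) ≤ (μ ∗ ρ).real (closedBall x (s + δ)) :=
          measureReal_mono ball_subset_closedBall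
      _ ≤ _ := measureReal_closedBall_le_of_integrable_charFun_sub
          (t := s + 2 * δ) (integrable_charFun_conv_sub (ν := ν) hρ) x (by positivity) (by linarith)
      _ ≤ _ := by gcongr; exact integral_norm_charFun_conv_sub_le hρ
  linarith

variable (V) in
lemma exists_measureReal_ball_le_add (k : ℕ) :
    ∃ A : ℝ, 0 ≤ A ∧ ∀ μ ν : Measure V, IsProbabilityMeasure μ → IsProbabilityMeasure ν →
      ∀ L > 0, ∀ s > 0, ∀ η > 0, ∀ x : V, μ.real (ball x s) ≤ ν.real (ball x (s + η)) +
        A * (((L * η) ^ k)⁻¹ +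
          (s + η) ^ finrank ℝ V * ∫ t in ball 0 L, ‖charFun μ t - charFun ν t‖) := by
  obtain ⟨A, hA, hρ⟩ := exists_isProbabilityMeasure_charFun_eq_zero_of_le_norm V k
  set B := ((2 * Real.pi) ^ finrank ℝ V)⁻¹ * volume.real (ball (0 : V) 1)
  have : 0 ≤ B := by positivity
  refine ⟨2 * 3 ^ k * A + B, by positivity, fun μ ν _ _ L hL s hs η hη x ↦ ?_⟩
  obtain ⟨ρ, _, hcharFun, htail⟩ := hρ L hL
  set I := ∫ t in ball 0 L, ‖charFun μ t - charFun ν t‖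
  have : 0 ≤ I := by positivity
  have htail' : ρ.real {y | η / 3 ≤ ‖y‖} ≤ 3 ^ k * A * ((L * η) ^ k)⁻¹ := by
    refine (htail (η / 3) (by positivity)).trans_eq ?_
    rw [← mul_div_assoc, div_pow]
    field_simp
  have hvolume : ((2 * Real.pi) ^ finrank ℝ V)⁻¹ * volume.real (closedBall x (s + 2 * (η / 3))) ≤
      B * (s + η) ^ finrank ℝ V := by
    rw [Measure.addHaar_real_closedBall _ _ (by positivity), mul_comm (_ ^ _), ← mul_assoc]
    gcongr
    linarith
  calc μ.real (ball x s)
      ≤ ν.real (ball x (s + 3 * (η / 3))) + 2 * ρ.real {y | η / 3 ≤ ‖y‖} +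
        ((2 * Real.pi) ^ finrank ℝ V)⁻¹ * volume.real (closedBall x (s + 2 * (η / 3))) * I :=
        measureReal_ball_le_of_charFun_eq_zero hcharFun x hs (by positivity)
    _ ≤ ν.real (ball x (s + η)) + 2 * (3 ^ k * A * ((L * η) ^ k)⁻¹) +
          B * (s + η) ^ finrank ℝ V * I := by
        rw [mul_div_cancel₀ η three_ne_zero]
        gcongr
    _ ≤ _ := by
        have h₁ : 0 ≤ B * ((L * η) ^ k)⁻¹ := by positivity
        have h₂ : 0 ≤ 2 * 3 ^ k * A * ((s + η) ^ finrank ℝ V * I) := by positivity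
        linarith

end Smoothing

section BoundedDensity

lemma le_smul_of_rnDeriv_le {α : Type*} [MeasurableSpace α] {μ ν : Measure α}
    [ν.HaveLebesgueDecomposition μ] (hν : ν ≪ μ) {c : ENNReal}
    (hc : ∀ᵐ x ∂μ, ν.rnDeriv μ x ≤ c) : ν ≤ c • μ := by
  rw [← Measure.withDensity_rnDeriv_eq ν μ hν, ← withDensity_const]
  exact withDensity_mono hc

lemma pow_sub_pow_le_mul_pow {K : Type*} [Field K] [LinearOrder K] [IsStrictOrderedRing K]
    {s t : K} (hs : 0 ≤ s) (ht : 0 < t) (n : ℕ) :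
    t ^ n - s ^ n ≤ n * ((t - s) / t) * t ^ n := by
  have hbernoulli : 1 + n * (s / t - 1) ≤ (s / t) ^ n :=
    one_add_mul_sub_le_pow (by linarith [div_nonneg hs ht.le]) n
  rw [div_pow, le_div_iff₀ (by positivity)] at hbernoulli
  rw [sub_div, div_self ht.ne']
  linarith

lemma measureReal_ball_le_of_le_smul_volume {ν : Measure V} {κ : ℝ≥0} (hν : ν ≤ κ • volume)
    (x : V) {s t : ℝ} (hs : 0 < s) (hst : s ≤ t) :
    ν.real (ball x t) ≤ ν.real (ball x s) +
      κ * volume.real (ball (0 : V) 1) * (finrank ℝ V * ((t - s) / t) * t ^ finrank ℝ V) := by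
  have ht : 0 < t := hs.trans_le hst
  have hball {u : ℝ} (hu : 0 < u) :
      volume.real (ball x u) = u ^ finrank ℝ V * volume.real (ball (0 : V) 1) := by
    simp [measureReal_def, Measure.addHaar_ball_of_pos _ _ hu, hu.le]
  have hle (S : Set V) (hS : volume S ≠ ⊤) : ν.real S ≤ κ * volume.real S := by
    rw [← measureReal_nnreal_smul_apply]
    exact ENNReal.toReal_mono (by simpa using! ENNReal.mul_ne_top ENNReal.coe_ne_top hS) (hν S)
  calc ν.real (ball x t) = ν.real (ball x s ∪ ball x t \ ball x s) := by
        rw [Set.union_sdiff_cancel (ball_subset_ball hst)]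
    _ ≤ ν.real (ball x s) + ν.real (ball x t \ ball x s) := measureReal_union_le _ _
    _ ≤ ν.real (ball x s) + κ * volume.real (ball x t \ ball x s) := by
        gcongr
        exact hle _ (measure_ne_top_of_subset Set.sdiff_subset measure_ball_lt_top.ne)
    _ = ν.real (ball x s) + κ * volume.real (ball (0 : V) 1) *
          (t ^ finrank ℝ V - s ^ finrank ℝ V) := by
        rw [measureReal_sdiff (ball_subset_ball hst) measurableSet_ball, hball ht, hball hs]
        ring
    _ ≤ _ := by
        gcongr
        exact pow_sub_pow_le_mul_pow hs.le ht _

lemma measureReal_ball_add_mul_le_of_le_smul_volume {ν : Measure V} {κ : ℝ≥0}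
    (hν : ν ≤ κ • volume) (x : V) {r s θ : ℝ} (hr : 0 < r) (hs : 0 < s) (hθ : 0 ≤ θ)
    (hrs : r ≤ s + θ * r) (hsr : s + θ * r ≤ 2 * r) :
    ν.real (ball x (s + θ * r)) ≤ ν.real (ball x s) + 2 ^ finrank ℝ V *
      (volume.real (ball (0 : V) 1) * finrank ℝ V) * (κ * θ * r ^ finrank ℝ V) := by
  calc ν.real (ball x (s + θ * r))
      ≤ ν.real (ball x s) + κ * volume.real (ball (0 : V) 1) * (finrank ℝ V *
          ((s + θ * r - s) / (s + θ * r)) * (s + θ * r) ^ finrank ℝ V) :=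
        measureReal_ball_le_of_le_smul_volume hν x hs (le_add_of_nonneg_right (by positivity))
    _ ≤ ν.real (ball x s) + κ * volume.real (ball (0 : V) 1) *
          (finrank ℝ V * θ * (2 * r) ^ finrank ℝ V) := by
        gcongr
        rw [add_sub_cancel_left]
        exact div_le_of_le_mul₀ (by positivity) hθ (by gcongr)
    _ = _ := by rw [mul_pow]; ring

variable (V) in
lemma exists_abs_measureReal_ball_sub_le (k : ℕ) :
    ∃ A : ℝ, 0 ≤ A ∧ ∀ μ ν : Measure V, IsProbabilityMeasure μ → IsProbabilityMeasure ν →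
      ∀ κ : ℝ≥0, ν ≤ κ • volume → ∀ L > 0, ∀ r > 0, ∀ θ > 0, θ < 1 → ∀ x : V,
        |μ.real (ball x r) - ν.real (ball x r)| ≤ A * (((L * (θ * r)) ^ k)⁻¹ +
          (∫ t in ball 0 L, ‖charFun μ t - charFun ν t‖) * r ^ finrank ℝ V +
          κ * θ * r ^ finrank ℝ V) := by
  obtain ⟨A, hA, hcompare⟩ := exists_measureReal_ball_le_add V k
  set d := finrank ℝ V
  set β := volume.real (ball (0 : V) 1)
  have : 0 ≤ β := by positivity
  refine ⟨2 ^ d * (A + β * d), by positivity,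
    fun μ ν hμ hν κ hκ L hL r hr θ hθ hθ' x ↦ ?_⟩
  set X := ((L * (θ * r)) ^ k)⁻¹
  set I := ∫ t in ball 0 L, ‖charFun μ t - charFun ν t‖ with hI
  have hθr : 0 < θ * r := by positivity
  have hθr' : θ * r < r := mul_lt_of_lt_one_left hr hθ'
  have hfourier {t : ℝ} (ht : 0 ≤ t) (htr : t ≤ 2 * r) :
      A * (X + t ^ d * I) ≤ 2 ^ d * A * (X + I * r ^ d) := by
    calc A * (X + t ^ d * I) ≤ A * (2 ^ d * X + (2 * r) ^ d * I) := by
          gcongr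
          exact le_mul_of_one_le_left (by positivity) (one_le_pow₀ one_le_two)
      _ = 2 ^ d * A * (X + I * r ^ d) := by rw [mul_pow]; ring
  have hsum : 2 ^ d * A * (X + I * r ^ d) + 2 ^ d * (β * d) * (κ * θ * r ^ d) ≤
      2 ^ d * (A + β * d) * (X + I * r ^ d + κ * θ * r ^ d) := by
    have h₁ : 0 ≤ 2 ^ d * A * (κ * θ * r ^ d) := by positivity
    have h₂ : 0 ≤ 2 ^ d * (β * d) * (X + I * r ^ d) := by positivity
    linarith
  have hupper : μ.real (ball x r) - ν.real (ball x r) ≤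
      2 ^ d * (A + β * d) * (X + I * r ^ d + κ * θ * r ^ d) := by
    have hannulus := measureReal_ball_add_mul_le_of_le_smul_volume hκ x hr hr hθ.le
      (by linarith) (by linarith)
    linarith [hcompare μ ν hμ hν L hL r hr (θ * r) hθr x,
      hfourier (t := r + θ * r) (by positivity) (by linarith)]
  have hlower : ν.real (ball x r) - μ.real (ball x r) ≤
      2 ^ d * (A + β * d) * (X + I * r ^ d + κ * θ * r ^ d) := by
    have hνμ := hcompare ν μ hν hμ L hL (r - θ * r) (sub_pos.2 hθr') (θ * r) hθr x
    simp only [norm_sub_rev (charFun ν _), ← hI, sub_add_cancel] at hνμ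
    have hannulus := measureReal_ball_add_mul_le_of_le_smul_volume hκ x hr (sub_pos.2 hθr') hθ.le
      (by linarith) (by linarith)
    rw [sub_add_cancel] at hannulus
    linarith [hfourier hr.le (by linarith)]
  exact abs_sub_le_iff.2 ⟨hupper, hlower⟩

end BoundedDensity

lemma inv_pow_mul_rpow_le {L r : ℝ} (hL : 0 < L) (hr : L ^ (-(1 / 4) : ℝ) ≤ r) (N : ℕ) :
    ((L * (L ^ (-(1 / 2) : ℝ) / 2 * r)) ^ (4 * N))⁻¹ ≤ 16 ^ N * L ^ (-(N : ℝ)) := by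
  have hquarter : L ^ (1 / 4 : ℝ) = L * (L ^ (-(1 / 2) : ℝ) * L ^ (-(1 / 4) : ℝ)) := by
    rw [← Real.rpow_add hL, ← Real.rpow_one_add' hL.le (by norm_num)]
    norm_num
  have hscale : L ^ (1 / 4 : ℝ) / 2 ≤ L * (L ^ (-(1 / 2) : ℝ) / 2 * r) :=
    calc L ^ (1 / 4 : ℝ) / 2 = L * (L ^ (-(1 / 2) : ℝ) / 2 * L ^ (-(1 / 4) : ℝ)) := by
          rw [hquarter]
          ring
      _ ≤ L * (L ^ (-(1 / 2) : ℝ) / 2 * r) := by gcongr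
  calc ((L * (L ^ (-(1 / 2) : ℝ) / 2 * r)) ^ (4 * N))⁻¹
      ≤ ((L ^ (1 / 4 : ℝ) / 2) ^ (4 * N))⁻¹ := by gcongr
    _ = 16 ^ N * L ^ (-(N : ℝ)) := by
        rw [div_pow, pow_mul, pow_mul, ← Real.rpow_mul_natCast hL.le]
        norm_num [Real.rpow_neg hL.le, div_eq_mul_inv, mul_comm]

variable (V) in
theorem statement18_general (N : ℕ) :
    ∃ C > 0, ∀ μ ν : Measure V, IsProbabilityMeasure μ → IsProbabilityMeasure ν →
      ∀ (L ε : ℝ) (κ : ℝ≥0), 1 ≤ L →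
      (∫ ξ in ball 0 L, ‖charFun μ ξ - charFun ν ξ‖) ≤ ε →
      ν ≤ κ • volume →
      ∀ r : ℝ, r > L ^ (-(1 / 4) : ℝ) → ∀ x₀ : V,
        |μ.real (ball x₀ r) - ν.real (ball x₀ r)|
          ≤ C * (ε * r ^ finrank ℝ V + L ^ (-(N : ℝ)) +
            κ * L ^ (-(1 / 2) : ℝ) * r ^ finrank ℝ V) := by
  obtain ⟨A, hA, hmain⟩ := exists_abs_measureReal_ball_sub_le V (4 * N)
  refine ⟨16 ^ N * (A + 1), by positivity, fun μ ν hμ hν L ε κ hL hε hκ r hr x₀ ↦ ?_⟩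
  have hL₀ : 0 < L := one_pos.trans_le hL
  have hr₀ : 0 < r := (Real.rpow_pos_of_pos hL₀ _).trans hr
  have hε₀ : 0 ≤ ε := (integral_nonneg fun ξ ↦ norm_nonneg _).trans hε
  have hL_half : L ^ (-(1 / 2) : ℝ) ≤ 1 := Real.rpow_le_one_of_one_le_of_nonpos hL (by norm_num)
  have hN : (1 : ℝ) ≤ 16 ^ N := one_le_pow₀ (by norm_num)
  set d := finrank ℝ V
  calc |μ.real (ball x₀ r) - ν.real (ball x₀ r)|
      ≤ A * (((L * (L ^ (-(1 / 2) : ℝ) / 2 * r)) ^ (4 * N))⁻¹ +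
          (∫ ξ in ball 0 L, ‖charFun μ ξ - charFun ν ξ‖) * r ^ d +
          κ * (L ^ (-(1 / 2) : ℝ) / 2) * r ^ d) :=
        hmain μ ν hμ hν κ hκ L hL₀ r hr₀ _ (by positivity) (by linarith) x₀
    _ ≤ (A + 1) * (16 ^ N * L ^ (-(N : ℝ)) + 16 ^ N * (ε * r ^ d) +
          16 ^ N * (κ * L ^ (-(1 / 2) : ℝ) * r ^ d)) := by
        gcongr (?_ : ℝ) * (?_ + ?_ + ?_)
        · linarith
        · exact inv_pow_mul_rpow_le hL₀ hr.le N
        · exact (by gcongr : _ ≤ ε * r ^ d).trans (le_mul_of_one_le_left (by positivity) hN)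
        · refine le_trans ?_ (le_mul_of_one_le_left (by positivity) hN)
          gcongr
          exact half_le_self (by positivity)
    _ = 16 ^ N * (A + 1) * (ε * r ^ d + L ^ (-(N : ℝ)) + κ * L ^ (-(1 / 2) : ℝ) * r ^ d) := by
        ring

lemma measFT_eq_charFun_neg (μ : Measure ℂ) (ξ : ℂ) : measFT μ ξ = charFun μ (-ξ) := by
  rw [measFT, charFun_apply]
  congr 1 with x
  rw [inner_neg_right, Complex.inner]
  push_cast
  rfl

lemma norm_measFT_sub (μ ν : Measure ℂ) (ξ : ℂ) :
    ‖measFT μ ξ - measFT ν ξ‖ = ‖charFun μ ξ - charFun ν ξ‖ := by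
  rw [measFT_eq_charFun_neg, measFT_eq_charFun_neg, charFun_neg, charFun_neg, ← map_sub,
    RCLike.norm_conj]

end

/-- Local limit comparison of two probability measures on `ℝ² ≅ ℂ`
from an `L¹` bound on the difference of their Fourier transforms on `{|ξ| < L}`,
assuming `ν` has a density bounded by `κ`. -/
theorem statement18 :
    ∃ C > 0, ∀ μ ν : Measure ℂ, IsProbabilityMeasure μ → IsProbabilityMeasure ν →
      ∀ L ε κ : ℝ, 1 ≤ L → 0 < ε → 0 < κ →
      (∫ ξ in {ξ : ℂ | ‖ξ‖ < L}, ‖measFT μ ξ - measFT ν ξ‖) < ε →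
      ν ≪ volume →
      (∀ᵐ x ∂(volume : Measure ℂ), ν.rnDeriv volume x ≤ ENNReal.ofReal κ) →
      ∀ r : ℝ, r > L ^ (-(1 / 4) : ℝ) → ∀ x₀ : ℂ,
        |(μ (Metric.ball x₀ r)).toReal - (ν (Metric.ball x₀ r)).toReal|
          ≤ C * (ε * r ^ 2 + L ^ (-(3 : ℝ)) + κ * L ^ (-(1 / 2) : ℝ) * r ^ 2) := by
  obtain ⟨C, hC, hmain⟩ := statement18_general ℂ 3
  refine ⟨C, hC, fun μ ν hμ hν L ε κ hL _ hκ hε hac hdens r hr x₀ ↦ ?_⟩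
  lift κ to NNReal using hκ.le
  rw [ENNReal.ofReal_coe_nnreal] at hdens
  simp only [← ball_zero_eq, norm_measFT_sub] at hε
  simpa [measureReal_def] using
    hmain μ ν hμ hν L ε κ hL hε.le (le_smul_of_rnDeriv_le hac hdens) r hr x₀
end
end
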